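/- There exist absolute constants c > 0 and C > 0 such that for every integer N ≥ 2 and every set A ⊆ {1,…,N} containing no non-trivial three-term arithmetic progression, one has |A| ≤ C·N/(log N)^{1+c}. -/

import Mathlib

namespace Roth
open Finset
set_option linter.unusedSectionVars false

/-! ### Bohr sets -/

section Bohr
variable {G : Type*} [AddCommGroup G] [Fintype G] [DecidableEq G]

open Classical in
/-- Bohr set with frequency set `Γ` and radius `ρ`. -/
noncomputable def Bohr (Γ : Finset (AddChar G ℂ)) (ρ : ℝ) : Finset G :=
  univ.filter (fun x => ∀ γ ∈ Γ, ‖γ x - 1‖ ≤ ρ)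

lemma mem_Bohr {Γ : Finset (AddChar G ℂ)} {ρ : ℝ} {x : G} :
    x ∈ Bohr Γ ρ ↔ ∀ γ ∈ Γ, ‖γ x - 1‖ ≤ ρ := by
  classical
  simp [Bohr]

lemma zero_mem_Bohr {Γ : Finset (AddChar G ℂ)} {ρ : ℝ} (h : 0 ≤ ρ) : (0 : G) ∈ Bohr Γ ρ := by
  rw [mem_Bohr]; intro γ _; simp [h]

lemma norm_char (γ : AddChar G ℂ) (x : G) : ‖γ x‖ = 1 := AddChar.norm_apply γ x

lemma norm_char_sub (γ : AddChar G ℂ) (x y : G) : ‖γ (x - y) - 1‖ = ‖γ x - γ y‖ := by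
  have h : γ x - γ y = γ y * (γ (x - y) - 1) := by
    have : γ x = γ y * γ (x - y) := by rw [← AddChar.map_add_eq_mul]; congr 1; abel
    rw [this]; ring
  rw [h, norm_mul, norm_char, one_mul]

lemma neg_mem_Bohr {Γ : Finset (AddChar G ℂ)} {ρ : ℝ} {x : G} (h : x ∈ Bohr Γ ρ) :
    -x ∈ Bohr Γ ρ := by
  rw [mem_Bohr] at *
  intro γ hγ
  have := norm_char_sub γ 0 x
  rw [zero_sub] at this
  rw [this, AddChar.map_zero_eq_one, norm_sub_rev]
  exact h γ hγ

lemma add_mem_Bohr {Γ : Finset (AddChar G ℂ)} {ρ δ : ℝ} {x y : G} (hx : x ∈ Bohr Γ ρ)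
    (hy : y ∈ Bohr Γ δ) : x + y ∈ Bohr Γ (ρ + δ) := by
  rw [mem_Bohr] at *
  intro γ hγ
  have h : γ (x + y) - 1 = γ x * (γ y - 1) + (γ x - 1) := by
    rw [AddChar.map_add_eq_mul]; ring
  rw [h]
  refine (norm_add_le _ _).trans ?_
  rw [norm_mul, norm_char, one_mul]
  linarith [hx γ hγ, hy γ hγ]

lemma sub_mem_Bohr {Γ : Finset (AddChar G ℂ)} {ρ δ : ℝ} {x y : G} (hx : x ∈ Bohr Γ ρ)
    (hy : y ∈ Bohr Γ δ) : x - y ∈ Bohr Γ (ρ + δ) := by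
  rw [sub_eq_add_neg]; exact add_mem_Bohr hx (neg_mem_Bohr hy)

lemma Bohr_mono {Γ : Finset (AddChar G ℂ)} {ρ δ : ℝ} (h : ρ ≤ δ) : Bohr Γ ρ ⊆ Bohr Γ δ := by
  intro x; rw [mem_Bohr, mem_Bohr]; exact fun H γ hγ => (H γ hγ).trans h

lemma Bohr_anti {Γ Γ' : Finset (AddChar G ℂ)} {ρ : ℝ} (h : Γ ⊆ Γ') : Bohr Γ' ρ ⊆ Bohr Γ ρ := by
  intro x; rw [mem_Bohr, mem_Bohr]; exact fun H γ hγ => H γ (h hγ)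

lemma Bohr_pos {Γ : Finset (AddChar G ℂ)} {ρ : ℝ} (h : 0 ≤ ρ) : 0 < (Bohr Γ ρ).card :=
  card_pos.2 ⟨0, zero_mem_Bohr h⟩

lemma Bohr_two {Γ : Finset (AddChar G ℂ)} : Bohr Γ 2 = univ := by
  ext x; simp only [mem_Bohr, mem_univ, iff_true]
  intro γ _
  refine (norm_sub_le _ _).trans ?_
  rw [norm_char]; norm_num

lemma Bohr_doubling (Γ : Finset (AddChar G ℂ)) {ρ : ℝ} (hρ : 0 < ρ) :
    (Bohr Γ (2 * ρ)).card ≤ 128 ^ Γ.card * (Bohr Γ ρ).card := by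
  classical
  let Z : Finset (ℤ × ℤ) := Finset.Icc (-4) 4 ×ˢ Finset.Icc (-4) 4
  let cell : G → (Γ → ℤ × ℤ) := fun x γ =>
    (⌊(γ.1 x - 1).re / (ρ / 2)⌋, ⌊(γ.1 x - 1).im / (ρ / 2)⌋)
  let tgt : Finset (Γ → ℤ × ℤ) := Fintype.piFinset (fun _ => Z)
  have hmap : ∀ x ∈ Bohr Γ (2 * ρ), cell x ∈ tgt := by
    intro x hx
    rw [Fintype.mem_piFinset]
    intro γ
    have h := mem_Bohr.1 hx γ.1 γ.2
    have h1 := (Complex.abs_re_le_norm (γ.1 x - 1)).trans h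
    have h2 := (Complex.abs_im_le_norm (γ.1 x - 1)).trans h
    rw [abs_le] at h1 h2
    have key : ∀ t : ℝ, -(2 * ρ) ≤ t → t ≤ 2 * ρ → -4 ≤ ⌊t / (ρ / 2)⌋ ∧ ⌊t / (ρ / 2)⌋ ≤ 4 := by
      intro t ht1 ht2
      constructor
      · rw [Int.le_floor, le_div_iff₀ (by positivity)]; push_cast; linarith
      · rw [← Int.lt_add_one_iff, Int.floor_lt, div_lt_iff₀ (by positivity)]; push_cast; linarith
    simp only [Z, cell, mem_product, mem_Icc]
    exact ⟨key _ h1.1 h1.2, key _ h2.1 h2.2⟩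
  have hfib : ∀ c ∈ tgt, ((Bohr Γ (2 * ρ)).filter (fun x => cell x = c)).card ≤ (Bohr Γ ρ).card := by
    intro c _
    rcases ((Bohr Γ (2 * ρ)).filter (fun x => cell x = c)).eq_empty_or_nonempty with h | ⟨x0, hx0⟩
    · rw [h]; simp
    · refine card_le_card_of_injOn (fun x => x - x0) ?_ ?_
      · intro x hx
        rw [mem_coe, mem_filter] at hx
        rw [mem_filter] at hx0
        rw [mem_coe, mem_Bohr]
        intro γ hγ
        rw [norm_char_sub]
        have hc := congrFun (hx.2.trans hx0.2.symm) ⟨γ, hγ⟩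
        simp only [cell, Prod.mk.injEq] at hc
        have key : ∀ s t : ℝ, ⌊s / (ρ / 2)⌋ = ⌊t / (ρ / 2)⌋ → |s - t| ≤ ρ / 2 := by
          intro s t hst
          have := Int.abs_sub_lt_one_of_floor_eq_floor hst
          rw [← sub_div, abs_div, abs_of_pos (show 0 < ρ / 2 by positivity),
            div_lt_one (by positivity)] at this
          exact this.le
        have h1 := key _ _ hc.1
        have h2 := key _ _ hc.2
        have := Complex.norm_le_abs_re_add_abs_im (γ x - γ x0)
        simp only [Complex.sub_re, Complex.sub_im, Complex.one_re, Complex.one_im] at h1 h2 this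
        rw [show (γ x).re - 1 - ((γ x0).re - 1) = (γ x).re - (γ x0).re by ring] at h1
        rw [show (γ x).im - 0 - ((γ x0).im - 0) = (γ x).im - (γ x0).im by ring] at h2
        linarith
      · intro x _ y _ h
        simpa using h
  have h := card_le_mul_card_image_of_maps_to hmap _ hfib
  have hZ : Z.card = 81 := by simp [Z]
  have ht : tgt.card = 81 ^ Γ.card := by
    simp only [tgt, Fintype.card_piFinset, hZ, prod_const, card_univ, Fintype.card_coe]
  rw [ht, mul_comm (Bohr Γ ρ).card] at h
  refine h.trans ?_
  gcongr
  norm_num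

lemma Bohr_lower (Γ : Finset (AddChar G ℂ)) (j : ℕ) :
    Fintype.card G ≤ 128 ^ (Γ.card * (j + 1)) * (Bohr Γ ((1 / 2 : ℝ) ^ j)).card := by
  induction j with
  | zero =>
    have := Bohr_doubling Γ (ρ := 1) one_pos
    rw [mul_one, Bohr_two, card_univ] at this
    simpa using this
  | succ j ih =>
    refine ih.trans ?_
    have := Bohr_doubling Γ (ρ := (1 / 2 : ℝ) ^ (j + 1)) (by positivity)
    rw [show 2 * (1 / 2 : ℝ) ^ (j + 1) = (1 / 2 : ℝ) ^ j by rw [pow_succ]; ring] at this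
    calc _ ≤ 128 ^ (Γ.card * (j + 1)) * (128 ^ Γ.card * (Bohr Γ ((1 / 2 : ℝ) ^ (j + 1))).card) := by
            gcongr
      _ = _ := by rw [← mul_assoc, ← pow_add]; congr 2

/-- Regular radii exist. -/
lemma Bohr_regular (Γ : Finset (AddChar G ℂ)) {ρ0 : ℝ} (hρ : 0 < ρ0) (d K : ℕ)
    (hd : Γ.card ≤ d) (hK : 1 ≤ K) :
    ∃ ρ, ρ0 / 2 ≤ ρ ∧ ρ ≤ ρ0 ∧
      ((Bohr Γ (ρ + ρ0 / (14 * (d + 1) * K))).card : ℝ) ≤ (1 + 1 / (K : ℝ)) * (Bohr Γ ρ).card := by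
  by_contra hcon
  push Not at hcon
  set J : ℕ := 7 * (d + 1) * K with hJ
  have hJpos : 0 < J := by positivity
  have hJR : (0 : ℝ) < J := by exact_mod_cast hJpos
  have hδ : ρ0 / (14 * (d + 1) * K) = ρ0 / 2 / J := by
    rw [hJ]; push_cast; rw [div_div]; congr 1; ring
  rw [hδ] at hcon
  have step : ∀ j : ℕ, j ≤ J → (1 + 1 / (K : ℝ)) ^ j * (Bohr Γ (ρ0 / 2)).card ≤
      (Bohr Γ (ρ0 / 2 + j * (ρ0 / 2 / J))).card := by
    intro j
    induction j with
    | zero => intro _; simp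
    | succ j ih =>
      intro hj
      have h1 := ih (by omega)
      have hjJ : (j : ℝ) ≤ J := by exact_mod_cast (by omega : j ≤ J)
      have h3 : (j : ℝ) * (ρ0 / 2 / J) ≤ ρ0 / 2 := by
        rw [mul_div_assoc', div_le_iff₀ hJR]
        nlinarith
      have h2 := hcon (ρ0 / 2 + j * (ρ0 / 2 / J)) (by
        have : 0 ≤ (j : ℝ) * (ρ0 / 2 / J) := by positivity
        linarith) (by linarith)
      rw [show ρ0 / 2 + j * (ρ0 / 2 / J) + ρ0 / 2 / J = ρ0 / 2 + ((j + 1 : ℕ) : ℝ) * (ρ0 / 2 / J) by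
        push_cast; ring] at h2
      refine le_trans ?_ h2.le
      rw [pow_succ, mul_comm (_ ^ j) _, mul_assoc]
      gcongr
  have h := step J le_rfl
  rw [show ρ0 / 2 + (J : ℝ) * (ρ0 / 2 / J) = 2 * (ρ0 / 2) by field_simp; ring] at h
  have hdbl := Bohr_doubling Γ (ρ := ρ0 / 2) (by positivity)
  have hdbl' : ((Bohr Γ (2 * (ρ0 / 2))).card : ℝ) ≤ 128 ^ Γ.card * (Bohr Γ (ρ0 / 2)).card := by
    exact_mod_cast hdbl
  have hpos : (0 : ℝ) < (Bohr Γ (ρ0 / 2)).card := by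
    exact_mod_cast Bohr_pos (by positivity : 0 ≤ ρ0 / 2)
  have h2 : (1 + 1 / (K : ℝ)) ^ J ≤ 128 ^ Γ.card := le_of_mul_le_mul_right (h.trans hdbl') hpos
  have hKR : (1 : ℝ) ≤ K := by exact_mod_cast hK
  have hbern : (2 : ℝ) ≤ (1 + 1 / (K : ℝ)) ^ K := by
    have := one_add_mul_le_pow (a := 1 / (K : ℝ)) (by
      have : 0 ≤ 1 / (K : ℝ) := by positivity
      linarith) K
    rw [mul_one_div, div_self (by positivity)] at this
    linarith
  have h3 : (2 : ℝ) ^ (7 * (d + 1)) ≤ (1 + 1 / (K : ℝ)) ^ J := by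
    have e : (1 + 1 / (K : ℝ)) ^ J = ((1 + 1 / (K : ℝ)) ^ K) ^ (7 * (d + 1)) := by
      rw [← pow_mul]; congr 1; rw [hJ]; ring
    rw [e]
    exact pow_le_pow_left₀ (by norm_num) hbern _
  have h4 : (128 : ℝ) ^ Γ.card ≤ 128 ^ d :=
    pow_le_pow_right₀ (by norm_num) hd
  have h5 : (2 : ℝ) ^ (7 * (d + 1)) = 128 ^ (d + 1) := by rw [pow_mul]; norm_num
  have h6 : (128 : ℝ) ^ d < 128 ^ (d + 1) :=
    pow_lt_pow_right₀ (by norm_num) (by omega)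
  linarith

/-- The shift estimate. -/
lemma card_shift_le {Γ : Finset (AddChar G ℂ)} {ρ δ ε : ℝ}
    (h : ((Bohr Γ (ρ + δ)).card : ℝ) ≤ (1 + ε) * (Bohr Γ ρ).card) (hδ : 0 ≤ δ) {y : G}
    (hy : y ∈ Bohr Γ δ) :
    (((Bohr Γ ρ).filter (fun x => x + y ∉ Bohr Γ ρ)).card : ℝ) ≤ ε * (Bohr Γ ρ).card := by
  classical
  have h1 : (((Bohr Γ ρ).filter (fun x => x + y ∉ Bohr Γ ρ)).card) ≤
      (Bohr Γ (ρ + δ) \ Bohr Γ ρ).card := by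
    refine card_le_card_of_injOn (fun x => x + y) ?_ ?_
    · intro x hx
      rw [mem_coe, mem_filter] at hx
      rw [mem_coe, mem_sdiff]
      exact ⟨add_mem_Bohr hx.1 hy, hx.2⟩
    · intro a _ b _ hab
      simpa using hab
  have h2 := card_sdiff_add_card_eq_card (Bohr_mono (Γ := Γ) (show ρ ≤ ρ + δ by linarith))
  have h3 : ((Bohr Γ (ρ + δ) \ Bohr Γ ρ).card : ℝ) + (Bohr Γ ρ).card = (Bohr Γ (ρ + δ)).card := by
    exact_mod_cast h2
  have h4 : (((Bohr Γ ρ).filter (fun x => x + y ∉ Bohr Γ ρ)).card : ℝ) ≤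
      (Bohr Γ (ρ + δ) \ Bohr Γ ρ).card := by exact_mod_cast h1
  linarith

open Classical in
/-- Precompose every frequency with a homomorphism. -/
noncomputable def dil (half : G →+ G) (Γ : Finset (AddChar G ℂ)) : Finset (AddChar G ℂ) :=
  Γ.image (fun γ => γ.compAddMonoidHom half)

lemma dil_card (half : G →+ G) (Γ : Finset (AddChar G ℂ)) : (dil half Γ).card ≤ Γ.card :=
  card_image_le

lemma mem_Bohr_dil {half : G →+ G} {Γ : Finset (AddChar G ℂ)} {ρ : ℝ} {x : G} :
    x ∈ Bohr (dil half Γ) ρ ↔ half x ∈ Bohr Γ ρ := by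
  simp [mem_Bohr, dil]

lemma Bohr_dil_sub {half : G →+ G} (hh : ∀ x, half x + half x = x) {Γ : Finset (AddChar G ℂ)}
    {ρ : ℝ} : Bohr (dil half Γ) ρ ⊆ Bohr Γ (2 * ρ) := by
  intro x hx
  rw [mem_Bohr_dil] at hx
  rw [← hh x, two_mul]
  exact add_mem_Bohr hx hx

end Bohr
end Roth

namespace Roth
open Finset
set_option linter.unusedSectionVars false

/-! ### Moments, unbalancing and sifting -/

section Moments
variable {G : Type*} [AddCommGroup G] [Fintype G] [DecidableEq G]

/-- Autocorrelation. -/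
def corr (f : G → ℝ) (x : G) : ℝ := ∑ z, f z * f (z + x)
/-- Self-convolution. -/
def conv (f : G → ℝ) (x : G) : ℝ := ∑ z, f z * f (x - z)

lemma corr_sub (f : G → ℝ) (b b' : G) : corr f (b - b') = ∑ z, f (z + b) * f (z + b') := by
  unfold corr
  rw [← Equiv.sum_comp (Equiv.addRight b')]
  refine sum_congr rfl fun z _ => ?_
  simp only [Equiv.coe_addRight]
  rw [mul_comm]; congr 2; abel

lemma conv_sub (f : G → ℝ) (z b b' : G) :
    conv f (z + b - b') = ∑ y, f (y + b) * f (z - b' - y) := by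
  unfold conv
  rw [← Equiv.sum_comp (Equiv.addRight b)]
  refine sum_congr rfl fun y _ => ?_
  simp only [Equiv.coe_addRight]
  congr 2; abel

lemma moment_w (f : G → ℝ) (E : Finset G) (w : G → G → ℝ) (k : ℕ) :
    ∑ b ∈ E, ∑ b' ∈ E, w b b' * corr f (b - b') ^ k =
      ∑ y : Fin k → G, ∑ b ∈ E, ∑ b' ∈ E,
        w b b' * ((∏ i, f (y i + b)) * ∏ i, f (y i + b')) := by
  rw [sum_comm]
  refine Eq.trans ?_ sum_comm.symm
  rw [sum_comm]
  refine sum_congr rfl fun b _ => ?_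
  rw [sum_comm]
  refine sum_congr rfl fun b' _ => ?_
  rw [corr_sub, Fintype.sum_pow, mul_sum]
  refine sum_congr rfl fun y _ => ?_
  rw [prod_mul_distrib]

lemma moment_eq (f : G → ℝ) (E : Finset G) (k : ℕ) :
    ∑ b ∈ E, ∑ b' ∈ E, corr f (b - b') ^ k =
      ∑ y : Fin k → G, (∑ b ∈ E, ∏ i, f (y i + b)) ^ 2 := by
  have := moment_w f E (fun _ _ => 1) k
  simp only [one_mul] at this
  rw [this]
  refine sum_congr rfl fun y _ => ?_
  rw [sq, sum_mul_sum]

lemma moment_nonneg (f : G → ℝ) (E : Finset G) (k : ℕ) :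
    0 ≤ ∑ b ∈ E, ∑ b' ∈ E, corr f (b - b') ^ k := by
  rw [moment_eq]; positivity

lemma conv_moment_le (f : G → ℝ) (E : Finset G) (hE : ∀ x ∈ E, -x ∈ E) (k : ℕ) (z : G) :
    ∑ b ∈ E, ∑ b' ∈ E, conv f (z + b - b') ^ k ≤ ∑ b ∈ E, ∑ b' ∈ E, corr f (b - b') ^ k := by
  set U : (Fin k → G) → ℝ := fun y => ∑ b ∈ E, ∏ i, f (y i + b) with hU
  set V : (Fin k → G) → ℝ := fun y => ∑ b ∈ E, ∏ i, f (z - b - y i) with hV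
  have h1 : ∑ b ∈ E, ∑ b' ∈ E, conv f (z + b - b') ^ k = ∑ y, U y * V y := by
    have : ∀ y, U y * V y = ∑ b ∈ E, ∑ b' ∈ E, ∏ i, (f (y i + b) * f (z - b' - y i)) := by
      intro y
      simp only [hU, hV, sum_mul_sum, prod_mul_distrib]
    simp only [this]
    symm
    rw [sum_comm]
    refine sum_congr rfl fun b _ => ?_
    rw [sum_comm]
    refine sum_congr rfl fun b' _ => ?_
    rw [conv_sub, Fintype.sum_pow]
  have h2 : ∑ y, V y ^ 2 = ∑ y, U y ^ 2 := by
    rw [← Equiv.sum_comp (Equiv.piCongrRight (fun _ : Fin k => Equiv.subLeft z))]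
    refine sum_congr rfl fun y _ => ?_
    congr 1
    simp only [hU, hV]
    refine sum_nbij' (fun b => -b) (fun b => -b) (fun a ha => hE a ha) (fun a ha => hE a ha)
      (by simp) (by simp) ?_
    intro b _
    refine prod_congr rfl fun i _ => ?_
    simp only [Equiv.piCongrRight_apply, Pi.map_apply, Equiv.subLeft_apply]
    congr 1; abel
  rw [h1, moment_eq]
  have h3 : ∑ y, U y * V y ≤ ∑ y, (U y ^ 2 + V y ^ 2) / 2 := by
    refine sum_le_sum fun y _ => ?_
    nlinarith [sq_nonneg (U y - V y)]
  rw [← sum_div, sum_add_distrib, h2] at h3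
  linarith

lemma power_mean {ι : Type*} (I : Finset ι) (g : ι → ℝ) (p k : ℕ) (hp : Even p) (hp1 : 1 ≤ p)
    (hk : Even k) (hpk : p ≤ k) (hbig : (I.card : ℝ) * (1 / 4) ^ p ≤ ∑ i ∈ I, g i ^ p) :
    (I.card : ℝ) * (1 / 4) ^ k ≤ ∑ i ∈ I, g i ^ k := by
  have hpt : ∀ x : ℝ, 1 + (k / p : ℝ) * ((4 * x) ^ p - 1) ≤ (4 * x) ^ k := by
    intro x
    have hpR : (0 : ℝ) < p := by exact_mod_cast hp1
    have h0 : 0 ≤ (4 * x) ^ p := hp.pow_nonneg _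
    have h := one_add_mul_self_le_rpow_one_add (s := (4 * x) ^ p - 1) (by linarith)
      (p := (k / p : ℝ)) (by rw [le_div_iff₀ hpR, one_mul]; exact_mod_cast hpk)
    rw [add_sub_cancel] at h
    refine h.trans (le_of_eq ?_)
    rw [← hp.pow_abs, ← hk.pow_abs (4 * x), ← Real.rpow_natCast, ← Real.rpow_natCast,
      ← Real.rpow_mul (abs_nonneg _)]
    congr 1
    field_simp
  have h1 : ∑ i ∈ I, (1 + (k / p : ℝ) * ((4 * g i) ^ p - 1)) ≤ ∑ i ∈ I, (4 * g i) ^ k :=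
    sum_le_sum fun i _ => hpt _
  rw [sum_add_distrib, ← mul_sum, sum_sub_distrib] at h1
  simp only [mul_pow, ← mul_sum, sum_const, nsmul_eq_mul, mul_one] at h1
  have h2 : (0 : ℝ) ≤ (k / p : ℝ) * (4 ^ p * ∑ i ∈ I, g i ^ p - I.card) := by
    apply mul_nonneg (by positivity)
    have : (4 : ℝ) ^ p * ((I.card : ℝ) * (1 / 4) ^ p) ≤ 4 ^ p * ∑ i ∈ I, g i ^ p := by gcongr
    rw [mul_left_comm, ← mul_pow] at this
    norm_num at this
    linarith
  have h3 : (I.card : ℝ) ≤ 4 ^ k * ∑ i ∈ I, g i ^ k := by linarith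
  rw [one_div, inv_pow, ← div_eq_mul_inv, div_le_iff₀ (by positivity)]
  linarith

lemma unbalance {ι : Type*} (I : Finset ι) (g : ι → ℝ) (p q : ℕ) (hp : Even p) (hp1 : 1 ≤ p)
    (hq : 20 * p ≤ q) (hnn : ∀ k, 0 ≤ ∑ i ∈ I, g i ^ k)
    (hbig : (I.card : ℝ) * (1 / 4) ^ p ≤ ∑ i ∈ I, g i ^ p) :
    (I.card : ℝ) * ((1 / 4) * (5 / 4) ^ q) ≤ ∑ i ∈ I, (1 + g i) ^ q := by
  have hexp : ∑ i ∈ I, (1 + g i) ^ q = ∑ k ∈ range (q + 1), (q.choose k : ℝ) * ∑ i ∈ I, g i ^ k := by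
    simp only [mul_sum]
    rw [sum_comm]
    refine sum_congr rfl fun i _ => ?_
    rw [add_comm, add_pow]
    refine sum_congr rfl fun k _ => ?_
    rw [one_pow]; ring
  have hk : ∀ k, (I.card : ℝ) * (((1 / 4) ^ k + (-1 / 4) ^ k) / 2 - 2 ^ p * (1 / 8) ^ k) ≤
      ∑ i ∈ I, g i ^ k := by
    intro k
    have hc : (0 : ℝ) ≤ I.card := by positivity
    rcases Nat.even_or_odd k with hev | hodd
    · have e : ((1 / 4 : ℝ) ^ k + (-1 / 4) ^ k) / 2 = (1 / 4) ^ k := by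
        rw [neg_div, hev.neg_pow]; ring
      rw [e]
      by_cases hpk : p ≤ k
      · refine le_trans ?_ (power_mean I g p k hp hp1 hev hpk hbig)
        gcongr
        have : (0 : ℝ) ≤ 2 ^ p * (1 / 8) ^ k := by positivity
        linarith
      · refine le_trans ?_ (hnn k)
        apply mul_nonpos_of_nonneg_of_nonpos hc
        have : (1 / 4 : ℝ) ^ k ≤ 2 ^ p * (1 / 8) ^ k := by
          have e2 : (1 / 4 : ℝ) ^ k = 2 ^ k * (1 / 8) ^ k := by rw [← mul_pow]; norm_num
          rw [e2]
          gcongr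
          · norm_num
          · omega
        linarith
    · have e : ((1 / 4 : ℝ) ^ k + (-1 / 4) ^ k) / 2 = 0 := by
        rw [neg_div, hodd.neg_pow]; ring
      rw [e]
      refine le_trans ?_ (hnn k)
      apply mul_nonpos_of_nonneg_of_nonpos hc
      have : (0 : ℝ) ≤ 2 ^ p * (1 / 8) ^ k := by positivity
      linarith
  have hbin : ∀ x : ℝ, ∑ k ∈ range (q + 1), (q.choose k : ℝ) * x ^ k = (1 + x) ^ q := by
    intro x
    rw [add_comm 1 x, add_pow]
    refine sum_congr rfl fun k _ => ?_
    rw [one_pow]; ring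
  rw [hexp]
  have h1 : ∑ k ∈ range (q + 1), (q.choose k : ℝ) *
      ((I.card : ℝ) * (((1 / 4) ^ k + (-1 / 4) ^ k) / 2 - 2 ^ p * (1 / 8) ^ k)) ≤
      ∑ k ∈ range (q + 1), (q.choose k : ℝ) * ∑ i ∈ I, g i ^ k := by
    refine sum_le_sum fun k _ => ?_
    gcongr
    exact hk k
  refine le_trans ?_ h1
  have e : ∑ k ∈ range (q + 1), (q.choose k : ℝ) *
      ((I.card : ℝ) * (((1 / 4) ^ k + (-1 / 4) ^ k) / 2 - 2 ^ p * (1 / 8) ^ k)) =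
      (I.card : ℝ) * (((1 + 1 / 4) ^ q + (1 + -1 / 4) ^ q) / 2 - 2 ^ p * (1 + 1 / 8) ^ q) := by
    rw [← hbin, ← hbin, ← hbin, ← sum_add_distrib, sum_div, mul_sum (a := (2 : ℝ) ^ p),
      ← sum_sub_distrib, mul_sum]
    refine sum_congr rfl fun k _ => ?_
    ring
  rw [e]
  gcongr
  have h3 : (0 : ℝ) ≤ (1 + -1 / 4) ^ q := by norm_num
  have h4 : (2 : ℝ) ^ p * (1 + 1 / 8) ^ q ≤ 1 / 4 * (5 / 4) ^ q := by
    have e2 : (5 / 4 : ℝ) ^ q = (10 / 9) ^ q * (1 + 1 / 8) ^ q := by rw [← mul_pow]; norm_num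
    rw [e2, ← mul_assoc]
    gcongr
    have h5 : (8 : ℝ) ^ p ≤ (10 / 9) ^ q := by
      calc (8 : ℝ) ^ p ≤ ((10 / 9) ^ 20) ^ p := by gcongr; norm_num
        _ = (10 / 9) ^ (20 * p) := by rw [pow_mul]
        _ ≤ _ := pow_le_pow_right₀ (by norm_num) hq
    have h6 : (8 : ℝ) ^ p = 4 ^ p * 2 ^ p := by rw [← mul_pow]; norm_num
    have h7 : (4 : ℝ) ≤ 4 ^ p := by
      calc (4 : ℝ) = 4 ^ 1 := by norm_num
        _ ≤ _ := pow_le_pow_right₀ (by norm_num) hp1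
    have h8 : (0 : ℝ) < 2 ^ p := by positivity
    nlinarith
  have e3 : (1 + 1 / 4 : ℝ) = 5 / 4 := by norm_num
  rw [e3]
  linarith

/-- Pass from `1 + g` to a nonnegative `h` near it. -/
lemma moment_perturb {ι : Type*} (I : Finset ι) (g h : ι → ℝ) (q : ℕ) (hq : 100 ≤ q)
    (hh : ∀ i ∈ I, 0 ≤ h i) (hgh : ∀ i ∈ I, |1 + g i| ≤ h i + 1 / 100)
    (hbig : (I.card : ℝ) * ((1 / 4) * (5 / 4) ^ q) ≤ ∑ i ∈ I, (1 + g i) ^ q) :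
    (I.card : ℝ) * (6 / 5) ^ q ≤ ∑ i ∈ I, h i ^ q := by
  have hpt : ∀ i ∈ I, (1 + g i) ^ q ≤ (101 / 100) ^ q * h i ^ q + (101 / 100) ^ q := by
    intro i hi
    have h1 : (1 + g i) ^ q ≤ (h i + 1 / 100) ^ q := by
      refine (le_abs_self _).trans ?_
      rw [abs_pow]
      exact pow_le_pow_left₀ (abs_nonneg _) (hgh i hi) _
    refine h1.trans ?_
    have h0 := hh i hi
    rcases le_total 1 (h i) with hc | hc
    · have : (h i + 1 / 100) ^ q ≤ (101 / 100 * h i) ^ q :=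
        pow_le_pow_left₀ (by linarith) (by linarith) _
      rw [mul_pow] at this
      have : (0 : ℝ) ≤ (101 / 100) ^ q := by positivity
      linarith
    · have : (h i + 1 / 100) ^ q ≤ (101 / 100) ^ q :=
        pow_le_pow_left₀ (by linarith) (by linarith) _
      have : (0 : ℝ) ≤ (101 / 100) ^ q * h i ^ q := by positivity
      linarith
  have h1 := hbig.trans (sum_le_sum hpt)
  rw [sum_add_distrib, ← mul_sum, sum_const, nsmul_eq_mul] at h1
  have hn : (101 / 100 : ℝ) ^ q * (6 / 5) ^ q + (101 / 100) ^ q ≤ 1 / 4 * (5 / 4) ^ q := by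
    have a1 : (101 / 100 : ℝ) ^ q * (6 / 5) ^ q ≤ 1 / 8 * (5 / 4) ^ q := by
      have : (5 / 4 : ℝ) ^ q = (125 / 121.2) ^ q * ((101 / 100 : ℝ) ^ q * (6 / 5) ^ q) := by
        rw [← mul_pow, ← mul_pow]; norm_num
      rw [this]
      have h8 : (8 : ℝ) ≤ (125 / 121.2) ^ q := by
        calc (8 : ℝ) ≤ (125 / 121.2) ^ 100 := by norm_num
          _ ≤ _ := pow_le_pow_right₀ (by norm_num) hq
      have : (0 : ℝ) ≤ (101 / 100 : ℝ) ^ q * (6 / 5) ^ q := by positivity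
      nlinarith
    have a2 : (101 / 100 : ℝ) ^ q ≤ (101 / 100 : ℝ) ^ q * (6 / 5) ^ q := by
      have : (1 : ℝ) ≤ (6 / 5) ^ q := one_le_pow₀ (by norm_num)
      have : (0 : ℝ) ≤ (101 / 100 : ℝ) ^ q := by positivity
      nlinarith
    linarith
  have hc : (0 : ℝ) ≤ I.card := by positivity
  have h2 := mul_le_mul_of_nonneg_left hn hc
  have hp : (0 : ℝ) < (101 / 100) ^ q := by positivity
  have : (101 / 100 : ℝ) ^ q * (I.card * (6 / 5) ^ q) ≤ (101 / 100) ^ q * ∑ i ∈ I, h i ^ q := by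
    linarith
  exact le_of_mul_le_mul_left this hp

end Moments
end Roth

namespace Roth
open Finset
set_option linter.unusedSectionVars false

section Sift
variable {G : Type*} [AddCommGroup G] [Fintype G] [DecidableEq G]

/-- Indicator function. -/
def ind (A : Finset G) (x : G) : ℝ := if x ∈ A then 1 else 0

lemma sift (A E Y : Finset G) (q : ℕ) (M : ℝ) (hM : 0 < M) (hq : 100 ≤ q) (hE : E.Nonempty)
    (hY : ∀ a ∈ A, ∀ b ∈ E, a - b ∈ Y) (hYc : 0 < (Y.card : ℝ)) (w : G → ℝ) (hw : ∀ x, 0 ≤ w x)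
    (hw0 : ∀ x, w x * corr (ind A) x ^ q ≤ (11 / 10 * M) ^ q)
    (hbig : (E.card : ℝ) ^ 2 * ((6 / 5) ^ q * M ^ q) ≤
      ∑ b ∈ E, ∑ b' ∈ E, corr (ind A) (b - b') ^ q) :
    ∃ A' ⊆ E, (E.card : ℝ) ^ 2 * (M / Y.card) ^ q ≤ 2 * (A'.card : ℝ) ^ 2 ∧
      100 * ∑ b ∈ A', ∑ b' ∈ A', w (b - b') ≤ (A'.card : ℝ) ^ 2 := by
  classical
  set Ay : (Fin q → G) → Finset G := fun y => E.filter (fun b => ∀ i, y i + b ∈ A) with hAy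
  set bad : (Fin q → G) → ℝ := fun y => ∑ b ∈ Ay y, ∑ b' ∈ Ay y, w (b - b') with hbad
  have hprod : ∀ (y : Fin q → G) (b : G), ∏ i, ind A (y i + b) = if ∀ i, y i + b ∈ A then (1 : ℝ) else 0 := by
    intro y b
    unfold ind
    rw [prod_ite_zero]
    simp
  have e1 : ∑ b ∈ E, ∑ b' ∈ E, corr (ind A) (b - b') ^ q = ∑ y, ((Ay y).card : ℝ) ^ 2 := by
    rw [moment_eq]
    refine sum_congr rfl fun y _ => ?_
    simp only [hprod, hAy, card_filter, Nat.cast_sum, Nat.cast_ite, Nat.cast_one, Nat.cast_zero]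
  have e2 : ∑ b ∈ E, ∑ b' ∈ E, w (b - b') * corr (ind A) (b - b') ^ q = ∑ y, bad y := by
    rw [moment_w (ind A) E (fun b b' => w (b - b')) q]
    refine sum_congr rfl fun y _ => ?_
    simp only [hprod, hbad, hAy, sum_filter]
    refine sum_congr rfl fun b _ => ?_
    split_ifs with h
    · refine sum_congr rfl fun b' _ => ?_
      split_ifs <;> simp
    · simp
  have h3 : ∑ y, bad y ≤ (E.card : ℝ) ^ 2 * (11 / 10 * M) ^ q := by
    rw [← e2]
    calc _ ≤ ∑ b ∈ E, ∑ b' ∈ E, (11 / 10 * M) ^ q :=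
          sum_le_sum fun b _ => sum_le_sum fun b' _ => hw0 _
      _ = _ := by simp only [sum_const, nsmul_eq_mul]; ring
  set V : ℝ := (E.card : ℝ) ^ 2 * ((6 / 5) ^ q * M ^ q) with hV
  have hEc : (0 : ℝ) < E.card := by exact_mod_cast hE.card_pos
  have hVpos : 0 < V := by positivity
  have h4 : 100 * ∑ y, bad y < V / 2 := by
    have a1 : (E.card : ℝ) ^ 2 * (11 / 10 * M) ^ q = (11 / 12) ^ q * V := by
      rw [hV, mul_left_comm, ← mul_assoc ((11 / 12 : ℝ) ^ q), ← mul_pow, ← mul_pow]; norm_num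
    have a2 : (11 / 12 : ℝ) ^ q ≤ 1 / 1000 := by
      calc (11 / 12 : ℝ) ^ q ≤ (11 / 12) ^ 100 :=
            pow_le_pow_of_le_one (by norm_num) (by norm_num) hq
        _ ≤ _ := by norm_num
    rw [a1] at h3
    nlinarith
  by_contra hcon
  push Not at hcon
  have h5 : ∀ y ∈ Fintype.piFinset (fun _ : Fin q => Y),
      ((Ay y).card : ℝ) ^ 2 - 100 * bad y ≤ V / 2 / (Y.card : ℝ) ^ q := by
    intro y _
    by_contra h
    push Not at h
    have hsub : Ay y ⊆ E := filter_subset _ _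
    by_cases hb : 100 * bad y ≤ ((Ay y).card : ℝ) ^ 2
    · -- then the size condition must fail
      by_cases hs : (E.card : ℝ) ^ 2 * (M / Y.card) ^ q ≤ 2 * ((Ay y).card : ℝ) ^ 2
      · exact absurd hb (not_le.2 (hcon _ hsub hs))
      · push Not at hs
        have hb0 : V / 2 / (Y.card : ℝ) ^ q < (Ay y).card ^ 2 - 100 * bad y := h
        have hbn : 0 ≤ bad y := sum_nonneg fun b _ => sum_nonneg fun b' _ => hw _
        have h6 : V / 2 / (Y.card : ℝ) ^ q = (E.card : ℝ) ^ 2 * (M / Y.card) ^ q * (6 / 5) ^ q / 2 := by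
          rw [hV, div_pow]; ring
        have h7 : (1 : ℝ) ≤ (6 / 5) ^ q := one_le_pow₀ (by norm_num)
        have h8 : 0 < (E.card : ℝ) ^ 2 * (M / Y.card) ^ q := by positivity
        rw [h6] at hb0
        nlinarith
    · push Not at hb
      have : 0 ≤ V / 2 / (Y.card : ℝ) ^ q := by positivity
      linarith
  have h6 : ∀ y ∉ Fintype.piFinset (fun _ : Fin q => Y), ((Ay y).card : ℝ) ^ 2 - 100 * bad y = 0 := by
    intro y hy
    rw [Fintype.mem_piFinset] at hy
    push Not at hy
    obtain ⟨i, hi⟩ := hy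
    have he : Ay y = ∅ := by
      rw [hAy, filter_eq_empty_iff]
      intro b hb hall
      apply hi
      have := hY _ (hall i) b hb
      rwa [add_sub_cancel_right] at this
    simp only [hbad, he]
    simp
  have h7 : ∑ y, (((Ay y).card : ℝ) ^ 2 - 100 * bad y) ≤ V / 2 := by
    rw [← sum_subset (subset_univ (Fintype.piFinset (fun _ : Fin q => Y))) (fun y _ hy => h6 y hy)]
    refine (sum_le_sum h5).trans ?_
    rw [sum_const, Fintype.card_piFinset_const, nsmul_eq_mul]
    push_cast
    rw [mul_div_cancel₀]
    positivity
  rw [sum_sub_distrib, ← mul_sum, ← e1] at h7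
  linarith

lemma localise (A' E2 B4 : Finset G) (w : G → ℝ) (hw : ∀ x, 0 ≤ w x) (s : ℝ)
    (hs : 0 < s) (hE2 : ∀ a ∈ A', ∀ b ∈ B4, a - b ∈ E2) (hne : A'.Nonempty) (hB : B4.Nonempty)
    (hsize : s * E2.card ≤ A'.card)
    (hbad : 100 * ∑ b ∈ A', ∑ b' ∈ A', w (b - b') ≤ (A'.card : ℝ) ^ 2) :
    ∃ y, ∃ A2 ⊆ A', (∀ a ∈ A2, a - y ∈ B4) ∧ s / 2 * B4.card ≤ A2.card ∧ A2.Nonempty ∧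
      50 * ∑ b ∈ A', ∑ b' ∈ A2, w (b - b') ≤ (A'.card : ℝ) * A2.card := by
  classical
  set φ : G → ℝ := fun b' => A'.card - 50 * ∑ b ∈ A', w (b - b') with hφ
  have hA : (0 : ℝ) < A'.card := by exact_mod_cast hne.card_pos
  have hBc : (0 : ℝ) < B4.card := by exact_mod_cast hB.card_pos
  have h1 : ∑ y ∈ E2, ∑ b' ∈ A'.filter (fun b' => b' - y ∈ B4), φ b' = B4.card * ∑ b' ∈ A', φ b' := by
    simp only [sum_filter]
    rw [sum_comm, mul_sum]
    refine sum_congr rfl fun b' hb' => ?_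
    rw [← sum_filter, sum_const, nsmul_eq_mul]
    congr 2
    refine card_nbij' (fun y => b' - y) (fun x => b' - x) ?_ ?_ ?_ ?_
    · intro y hy; simp only [coe_filter, Set.mem_setOf_eq] at hy; exact hy.2
    · intro x hx
      simp only [coe_filter, Set.mem_setOf_eq, sub_sub_cancel]
      exact ⟨hE2 b' hb' x hx, hx⟩
    · intro y _; simp
    · intro y _; simp
  have h2 : (A'.card : ℝ) ^ 2 / 2 ≤ ∑ b' ∈ A', φ b' := by
    simp only [hφ]
    rw [sum_sub_distrib, ← mul_sum, sum_const, nsmul_eq_mul, sum_comm]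
    nlinarith
  have hE2ne : E2.Nonempty := by
    obtain ⟨a, ha⟩ := hne; obtain ⟨b, hb⟩ := hB
    exact ⟨_, hE2 a ha b hb⟩
  have hE2c : (0 : ℝ) < E2.card := by exact_mod_cast hE2ne.card_pos
  obtain ⟨y, hy, hyb⟩ := exists_le_of_sum_le hE2ne (f := fun _ => s / 2 * B4.card * A'.card)
    (g := fun y => ∑ b' ∈ A'.filter (fun b' => b' - y ∈ B4), φ b') (by
      rw [h1, sum_const, nsmul_eq_mul]
      have : (E2.card : ℝ) * (s / 2 * B4.card * A'.card) = B4.card * ((s * E2.card) * A'.card / 2) := by ring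
      rw [this]
      gcongr
      refine le_trans ?_ h2
      rw [sq]
      gcongr)
  set A2 := A'.filter (fun b' => b' - y ∈ B4) with hA2
  have h3 : ∑ b' ∈ A2, φ b' = A'.card * A2.card - 50 * ∑ b ∈ A', ∑ b' ∈ A2, w (b - b') := by
    simp only [hφ]
    rw [sum_sub_distrib, ← mul_sum, sum_const, nsmul_eq_mul, sum_comm]
    ring
  rw [h3] at hyb
  have h4 : 0 ≤ ∑ b ∈ A', ∑ b' ∈ A2, w (b - b') :=
    sum_nonneg fun b _ => sum_nonneg fun b' _ => hw _
  have h5 : s / 2 * B4.card ≤ A2.card := by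
    have : (s / 2 * B4.card) * A'.card ≤ A2.card * A'.card := by linarith
    exact le_of_mul_le_mul_right this hA
  refine ⟨y, A2, filter_subset _ _, fun a ha => (mem_filter.1 ha).2, h5, ?_, ?_⟩
  · rw [← card_pos]
    have : (0 : ℝ) < A2.card := lt_of_lt_of_le (by positivity) h5
    exact_mod_cast this
  · have : 0 ≤ s / 2 * B4.card * A'.card := by positivity
    linarith

end Sift
end Roth

namespace Roth
open Finset
set_option linter.unusedSectionVars false

/-! ### Almost periodicity -/

section CS
variable {G : Type*} [AddCommGroup G] [Fintype G] [DecidableEq G]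

lemma exp_mul_le_cosh (s u : ℝ) (hu : |u| ≤ 1) :
    Real.exp (s * u) ≤ Real.cosh s + u * Real.sinh s := by
  rw [abs_le] at hu
  have h := convexOn_exp.2 (Set.mem_univ s) (Set.mem_univ (-s))
    (show 0 ≤ (1 + u) / 2 by linarith) (show 0 ≤ (1 - u) / 2 by linarith) (by ring)
  simp only [smul_eq_mul] at h
  rw [show (1 + u) / 2 * s + (1 - u) / 2 * -s = s * u by ring] at h
  rw [Real.cosh_eq, Real.sinh_eq]
  linarith

lemma hoeffding_one (A : Finset G) (u : G → ℝ) (hu : ∀ a ∈ A, |u a| ≤ 1)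
    (hsum : ∑ a ∈ A, u a = 0) (m : ℕ) (ε : ℝ) (hε : 0 ≤ ε) :
    (((Fintype.piFinset (fun _ : Fin m => A)).filter (fun a => ε * m < ∑ i, u (a i))).card : ℝ) ≤
      Real.exp (-(m * ε ^ 2 / 2)) * (A.card : ℝ) ^ m := by
  have h1 : ∑ a ∈ Fintype.piFinset (fun _ : Fin m => A), Real.exp (ε * ∑ i, u (a i)) ≤
      (A.card : ℝ) ^ m * Real.exp (m * ε ^ 2 / 2) := by
    have e : ∀ a : Fin m → G, Real.exp (ε * ∑ i, u (a i)) = ∏ i, Real.exp (ε * u (a i)) := by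
      intro a; rw [mul_sum, Real.exp_sum]
    simp only [e]
    rw [sum_prod_piFinset A (fun _ a => Real.exp (ε * u a))]
    rw [prod_const, card_univ, Fintype.card_fin]
    have h2 : ∑ a ∈ A, Real.exp (ε * u a) ≤ A.card * Real.exp (ε ^ 2 / 2) := by
      calc _ ≤ ∑ a ∈ A, (Real.cosh ε + u a * Real.sinh ε) :=
            sum_le_sum fun a ha => exp_mul_le_cosh ε _ (hu a ha)
        _ = A.card * Real.cosh ε := by
            rw [sum_add_distrib, ← sum_mul, hsum, sum_const, nsmul_eq_mul]; ring
        _ ≤ _ := by gcongr; exact Real.cosh_le_exp_half_sq ε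
    calc _ ≤ (A.card * Real.exp (ε ^ 2 / 2)) ^ m :=
          pow_le_pow_left₀ (sum_nonneg fun a _ => (Real.exp_pos _).le) h2 m
      _ = _ := by rw [mul_pow, ← Real.exp_nat_mul]; congr 2; ring
  have h3 : (((Fintype.piFinset (fun _ : Fin m => A)).filter
      (fun a => ε * m < ∑ i, u (a i))).card : ℝ) * Real.exp (m * ε ^ 2) ≤
      ∑ a ∈ Fintype.piFinset (fun _ : Fin m => A), Real.exp (ε * ∑ i, u (a i)) := by
    rw [← nsmul_eq_mul, ← sum_const]
    refine le_trans (sum_le_sum (g := fun a => Real.exp (ε * ∑ i, u (a i))) ?_)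
      (sum_le_sum_of_subset_of_nonneg (filter_subset _ _) fun _ _ _ => (Real.exp_pos _).le)
    intro a ha
    rw [mem_filter] at ha
    apply Real.exp_le_exp.2
    nlinarith [ha.2]
  have h4 := h3.trans h1
  rw [← le_div_iff₀ (Real.exp_pos _), mul_div_assoc, ← Real.exp_sub] at h4
  refine h4.trans (le_of_eq ?_)
  rw [mul_comm]; congr 2; ring

lemma hoeffding (A : Finset G) (u : G → ℝ) (hu : ∀ a ∈ A, |u a| ≤ 1)
    (hsum : ∑ a ∈ A, u a = 0) (m : ℕ) (ε : ℝ) (hε : 0 ≤ ε) :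
    (((Fintype.piFinset (fun _ : Fin m => A)).filter (fun a => ε * m < |∑ i, u (a i)|)).card : ℝ) ≤
      2 * Real.exp (-(m * ε ^ 2 / 2)) * (A.card : ℝ) ^ m := by
  have h1 := hoeffding_one A u hu hsum m ε hε
  have h2 := hoeffding_one A (fun a => -u a) (by simpa using hu) (by simp [hsum]) m ε hε
  have h3 : ((Fintype.piFinset (fun _ : Fin m => A)).filter (fun a => ε * m < |∑ i, u (a i)|)) ⊆
      ((Fintype.piFinset (fun _ : Fin m => A)).filter (fun a => ε * m < ∑ i, u (a i))) ∪
      ((Fintype.piFinset (fun _ : Fin m => A)).filter (fun a => ε * m < ∑ i, -u (a i))) := by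
    intro a ha
    rw [mem_filter] at ha
    rw [mem_union, mem_filter, mem_filter]
    rcases lt_abs.1 ha.2 with h | h
    · exact Or.inl ⟨ha.1, h⟩
    · exact Or.inr ⟨ha.1, by rwa [sum_neg_distrib]⟩
  have h4 : (((Fintype.piFinset (fun _ : Fin m => A)).filter
      (fun a => ε * m < |∑ i, u (a i)|)).card : ℝ) ≤ _ :=
    Nat.cast_le.2 ((card_le_card h3).trans (card_union_le _ _))
  push_cast at h4
  linarith

/-- Average of `φ (x - a)` over `a ∈ A`. -/
noncomputable def avg (A : Finset G) (φ : G → ℝ) (x : G) : ℝ := (∑ a ∈ A, φ (x - a)) / A.card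

lemma avg_mem {A : Finset G} (hA : A.Nonempty) {φ : G → ℝ} (h0 : ∀ x, 0 ≤ φ x) (h1 : ∀ x, φ x ≤ 1)
    (x : G) : 0 ≤ avg A φ x ∧ avg A φ x ≤ 1 := by
  have hAc : (0 : ℝ) < A.card := by exact_mod_cast hA.card_pos
  unfold avg
  refine ⟨div_nonneg (sum_nonneg fun a _ => h0 _) hAc.le, ?_⟩
  rw [div_le_one hAc]
  calc _ ≤ ∑ a ∈ A, (1 : ℝ) := sum_le_sum fun a _ => h1 _
    _ = _ := by simp

lemma croot_sisask (φ : G → ℝ) (h0 : ∀ x, 0 ≤ φ x) (h1 : ∀ x, φ x ≤ 1) (A2 D B5 W : Finset G)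
    (hA2 : A2.Nonempty) (hD : D.Nonempty) (hW : ∀ a ∈ A2, ∀ t ∈ B5, a + t ∈ W) (m : ℕ) (hm : 1 ≤ m)
    (hWne : W.Nonempty)
    (ε κ : ℝ) (hε : 0 ≤ ε) (hκ0 : 0 < κ) (hκ : 4 * Real.exp (-(m * ε ^ 2 / 2)) ≤ κ) :
    ∃ T ⊆ B5, (A2.card : ℝ) ^ m * B5.card ≤ 2 * (W.card : ℝ) ^ m * T.card ∧
      ∃ (bad : G → Finset G) (H : G → ℝ), ∀ t ∈ T, ((bad t).card : ℝ) ≤ κ * D.card ∧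
        ∀ x ∈ D, x ∉ bad t → |avg A2 φ x - H (x + t)| ≤ ε := by
  classical
  have hA2c : (0 : ℝ) < A2.card := by exact_mod_cast hA2.card_pos
  have hDc : (0 : ℝ) < D.card := by exact_mod_cast hD.card_pos
  have hmR : (0 : ℝ) < m := by exact_mod_cast hm
  set P := Fintype.piFinset (fun _ : Fin m => A2) with hP
  have hPc : (P.card : ℝ) = (A2.card : ℝ) ^ m := by
    rw [hP, Fintype.card_piFinset_const]; push_cast; rfl
  let isbad : (Fin m → G) → G → Prop := fun a x => ε < |avg A2 φ x - (∑ i, φ (x - a i)) / m|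
  have hx : ∀ x, ((P.filter (fun a => isbad a x)).card : ℝ) ≤ κ / 2 * P.card := by
    intro x
    have hav := avg_mem hA2 h0 h1 x
    have h := hoeffding A2 (fun a => φ (x - a) - avg A2 φ x) (by
      intro a _
      rw [abs_le]; constructor <;> linarith [h0 (x - a), h1 (x - a)]) (by
      rw [sum_sub_distrib, sum_const, nsmul_eq_mul]
      unfold avg
      field_simp
      ring) m ε hε
    have hsub : P.filter (fun a => isbad a x) ⊆
        P.filter (fun a => ε * m < |∑ i, (φ (x - a i) - avg A2 φ x)|) := by
      intro a ha
      rw [mem_filter] at ha ⊢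
      refine ⟨ha.1, ?_⟩
      have h2 := ha.2
      simp only [isbad] at h2
      have e : ∑ i, (φ (x - a i) - avg A2 φ x) = -(avg A2 φ x - (∑ i, φ (x - a i)) / m) * m := by
        rw [sum_sub_distrib, sum_const, nsmul_eq_mul, card_univ, Fintype.card_fin]
        field_simp
        ring
      rw [e, abs_mul, abs_neg, abs_of_pos hmR]
      exact mul_lt_mul_of_pos_right h2 hmR
    have h3 : ((P.filter (fun a => isbad a x)).card : ℝ) ≤ _ := Nat.cast_le.2 (card_le_card hsub)
    refine h3.trans (h.trans ?_)
    rw [hPc]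
    have : (0 : ℝ) ≤ (A2.card : ℝ) ^ m := by positivity
    nlinarith
  set L := P.filter (fun a => ((D.filter (fun x => isbad a x)).card : ℝ) ≤ κ * D.card) with hL
  have hsum : ∑ a ∈ P, ((D.filter (fun x => isbad a x)).card : ℝ) ≤ κ / 2 * P.card * D.card := by
    have e : ∑ a ∈ P, ((D.filter (fun x => isbad a x)).card : ℝ) =
        ∑ x ∈ D, ((P.filter (fun a => isbad a x)).card : ℝ) := by
      simp only [card_filter, Nat.cast_sum]
      exact sum_comm
    rw [e]
    calc _ ≤ ∑ x ∈ D, κ / 2 * (P.card : ℝ) := sum_le_sum fun x _ => hx x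
      _ = _ := by rw [sum_const, nsmul_eq_mul]; ring
  have hLbig : (P.card : ℝ) / 2 ≤ L.card := by
    have h2 : ((P.filter (fun a => ¬ ((D.filter (fun x => isbad a x)).card : ℝ) ≤ κ * D.card)).card : ℝ)
        * (κ * D.card) ≤ κ / 2 * P.card * D.card := by
      refine le_trans ?_ hsum
      rw [← nsmul_eq_mul, ← sum_const]
      refine le_trans (sum_le_sum (g := fun a => ((D.filter (fun x => isbad a x)).card : ℝ)) ?_)
        (sum_le_sum_of_subset_of_nonneg (filter_subset _ _) fun _ _ _ => by positivity)
      intro a ha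
      rw [mem_filter] at ha
      exact (not_le.1 ha.2).le
    have h3 := card_filter_add_card_filter_not (s := P)
      (fun a => ((D.filter (fun x => isbad a x)).card : ℝ) ≤ κ * D.card)
    rw [← hL] at h3
    have h4 : (L.card : ℝ) + ((P.filter (fun a => ¬ ((D.filter (fun x => isbad a x)).card : ℝ)
        ≤ κ * D.card)).card : ℝ) = P.card := by exact_mod_cast h3
    have h5 : 0 < κ * D.card := by positivity
    have h6 : ((P.filter (fun a => ¬ ((D.filter (fun x => isbad a x)).card : ℝ) ≤ κ * D.card)).card : ℝ)
        ≤ P.card / 2 := by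
      refine le_of_mul_le_mul_right (h2.trans (le_of_eq ?_)) h5
      ring
    linarith
  set Q := Fintype.piFinset (fun _ : Fin m => W) with hQ
  have hQc : (Q.card : ℝ) = (W.card : ℝ) ^ m := by
    rw [hQ, Fintype.card_piFinset_const]; push_cast; rfl
  let Tu : (Fin m → G) → Finset G := fun u => B5.filter (fun t => (fun i => u i - t) ∈ L)
  have hdc : ∑ u ∈ Q, ((Tu u).card : ℝ) = L.card * B5.card := by
    simp only [Tu, card_filter, Nat.cast_sum]
    rw [sum_comm]
    have : ∀ t ∈ B5, ∑ u ∈ Q, (((if (fun i => u i - t) ∈ L then 1 else 0 : ℕ)) : ℝ) = L.card := by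
      intro t ht
      rw [← Nat.cast_sum, ← card_filter]
      congr 1
      refine card_nbij' (fun u i => u i - t) (fun a i => a i + t) ?_ ?_ ?_ ?_
      · intro u hu
        rw [mem_coe, mem_filter] at hu
        exact hu.2
      · intro a ha
        rw [mem_coe] at ha
        rw [mem_coe, mem_filter]
        have ha' := (mem_filter.1 ha).1
        rw [hP, Fintype.mem_piFinset] at ha'
        refine ⟨?_, ?_⟩
        · rw [hQ, Fintype.mem_piFinset]
          exact fun i => hW _ (ha' i) t ht
        · simpa using ha
      · intro u _; simp
      · intro u _; simp
    rw [sum_congr rfl this, sum_const, nsmul_eq_mul]; ring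
  have hQne : Q.Nonempty := by
    rw [hQ, Fintype.piFinset_nonempty]; exact fun _ => hWne
  have hQpos : (0 : ℝ) < Q.card := by exact_mod_cast hQne.card_pos
  obtain ⟨u, hu, hub⟩ := exists_le_of_sum_le hQne (f := fun _ => (L.card : ℝ) * B5.card / Q.card)
    (g := fun u => ((Tu u).card : ℝ)) (by
      rw [hdc, sum_const, nsmul_eq_mul, mul_div_cancel₀]
      exact hQpos.ne')
  refine ⟨Tu u, filter_subset _ _, ?_, fun t => D.filter (fun x => isbad (fun i => u i - t) x),
    fun z => (∑ i, φ (z - u i)) / m, ?_⟩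
  · rw [div_le_iff₀ hQpos] at hub
    rw [← hPc, ← hQc]
    have : (0 : ℝ) ≤ B5.card := by positivity
    nlinarith
  · intro t ht
    have htL := (mem_filter.1 ht).2
    refine ⟨(mem_filter.1 htL).2, ?_⟩
    intro x hxD hxb
    rw [mem_filter, not_and] at hxb
    have := hxb hxD
    simp only [isbad, not_lt] at this
    have e : ∀ i, x + t - u i = x - (u i - t) := fun i => by abel
    simp only [e]
    exact this

/-- The shifted average. -/
noncomputable def shiftAvg (A1 A2 : Finset G) (φ : G → ℝ) (t : G) : ℝ :=
  (∑ x ∈ A1, avg A2 φ (x + t)) / A1.card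

lemma shiftAvg_step (φ : G → ℝ) (h0 : ∀ x, 0 ≤ φ x) (h1 : ∀ x, φ x ≤ 1) (A1 A2 D : Finset G)
    (hA1 : A1.Nonempty) (hA2 : A2.Nonempty) (ε κ : ℝ) (hε : 0 ≤ ε)
    (b b' : Finset G) (H : G → ℝ) (t t' v : G) (hb : (b.card : ℝ) ≤ κ * D.card)
    (hb' : (b'.card : ℝ) ≤ κ * D.card)
    (hH : ∀ x ∈ D, x ∉ b → |avg A2 φ x - H (x + t)| ≤ ε)
    (hH' : ∀ x ∈ D, x ∉ b' → |avg A2 φ x - H (x + t')| ≤ ε)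
    (hv : ∀ x ∈ A1, x + v ∈ D) (hv' : ∀ x ∈ A1, x + (v + (t - t')) ∈ D) :
    shiftAvg A1 A2 φ v - (2 * ε + 2 * κ * D.card / A1.card) ≤ shiftAvg A1 A2 φ (v + (t - t')) := by
  classical
  have hA1c : (0 : ℝ) < A1.card := by exact_mod_cast hA1.card_pos
  have hpt : ∀ x ∈ A1, avg A2 φ (x + v) ≤ avg A2 φ (x + (v + (t - t'))) + 2 * ε +
      ((if x + v ∈ b then 1 else 0) + (if x + (v + (t - t')) ∈ b' then 1 else 0)) := by
    intro x hx
    have a1 := avg_mem hA2 h0 h1 (x + v)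
    have a2 := avg_mem hA2 h0 h1 (x + (v + (t - t')))
    by_cases c1 : x + v ∈ b
    · rw [if_pos c1]
      split_ifs <;> linarith
    by_cases c2 : x + (v + (t - t')) ∈ b'
    · rw [if_pos c2, if_neg c1]; linarith
    have e1 := hH _ (hv x hx) c1
    have e2 := hH' _ (hv' x hx) c2
    rw [show x + (v + (t - t')) + t' = x + v + t by abel] at e2
    rw [if_neg c1, if_neg c2]
    rw [abs_le] at e1 e2
    linarith
  have hcount : ∀ (s : G) (c : Finset G), ∑ x ∈ A1, (if x + s ∈ c then (1 : ℝ) else 0) ≤ c.card := by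
    intro s c
    rw [← sum_filter, sum_const, nsmul_eq_mul, mul_one]
    norm_cast
    refine card_le_card_of_injOn (fun x => x + s) ?_ ?_
    · intro x hx; exact (mem_filter.1 hx).2
    · intro x _ y _ h; simpa using h
  have hs := sum_le_sum hpt
  rw [sum_add_distrib, sum_add_distrib, sum_add_distrib, sum_const, nsmul_eq_mul] at hs
  have c1 := hcount v b
  have c2 := hcount (v + (t - t')) b'
  unfold shiftAvg
  rw [sub_le_iff_le_add, ← sub_le_iff_le_add', ← sub_div, div_le_iff₀ hA1c, add_mul,
    div_mul_cancel₀ _ hA1c.ne']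
  linarith

lemma shiftAvg_iter (φ : G → ℝ) (h0 : ∀ x, 0 ≤ φ x) (h1 : ∀ x, φ x ≤ 1) (A1 A2 D T : Finset G)
    (hA1 : A1.Nonempty) (hA2 : A2.Nonempty) (ε κ : ℝ) (hε : 0 ≤ ε)
    (bad : G → Finset G) (H : G → ℝ)
    (hT : ∀ t ∈ T, ((bad t).card : ℝ) ≤ κ * D.card ∧
        ∀ x ∈ D, x ∉ bad t → |avg A2 φ x - H (x + t)| ≤ ε)
    (k : ℕ) (hD : ∀ j ≤ k, ∀ t t' : Fin j → G, (∀ i, t i ∈ T) → (∀ i, t' i ∈ T) →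
      ∀ x ∈ A1, x + ∑ i, (t i - t' i) ∈ D) :
    ∀ j ≤ k, ∀ t t' : Fin j → G, (∀ i, t i ∈ T) → (∀ i, t' i ∈ T) →
      shiftAvg A1 A2 φ 0 - j * (2 * ε + 2 * κ * D.card / A1.card) ≤
        shiftAvg A1 A2 φ (∑ i, (t i - t' i)) := by
  intro j
  induction j with
  | zero => intro _ t t' _ _; simp
  | succ j ih =>
    intro hj t t' ht ht'
    have h2 := ih (by omega) (fun i => t i.castSucc) (fun i => t' i.castSucc)
      (fun i => ht _) (fun i => ht' _)
    have h3 := shiftAvg_step φ h0 h1 A1 A2 D hA1 hA2 ε κ hε (bad (t (Fin.last j)))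
      (bad (t' (Fin.last j))) H (t (Fin.last j)) (t' (Fin.last j))
      (∑ i : Fin j, (t i.castSucc - t' i.castSucc)) (hT _ (ht _)).1 (hT _ (ht' _)).1
      (hT _ (ht _)).2 (hT _ (ht' _)).2
      (hD j (by omega) (fun i => t i.castSucc) (fun i => t' i.castSucc)
      (fun i => ht _) (fun i => ht' _)) (by
        have := hD (j + 1) hj t t' ht ht'
        rwa [Fin.sum_univ_castSucc] at this)
    rw [Fin.sum_univ_castSucc]
    push_cast
    linarith

end CS
end Roth

namespace Roth
open Finset
set_option linter.unusedSectionVars false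

/-! ### Fourier smoothing -/

section Four
variable {G : Type*} [AddCommGroup G] [Fintype G] [DecidableEq G]

/-- Fourier transform of the indicator of a finite set. -/
noncomputable def ft (X : Finset G) (ψ : AddChar G ℂ) : ℂ := ∑ x ∈ X, ψ x

lemma ft_norm_le (X : Finset G) (ψ : AddChar G ℂ) : ‖ft X ψ‖ ≤ X.card := by
  unfold ft
  refine (norm_sum_le _ _).trans ?_
  simp

lemma conj_ft (X : Finset G) (ψ : AddChar G ℂ) :
    (starRingEnd ℂ) (ft X ψ) = ∑ x ∈ X, ψ (-x) := by
  unfold ft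
  rw [map_sum]
  exact sum_congr rfl fun x _ => (AddChar.map_neg_eq_conj ψ x).symm

lemma ind_inversion (S : Finset G) (v : G) :
    ((ind S v : ℝ) : ℂ) = (∑ ψ : AddChar G ℂ, ψ v * (starRingEnd ℂ) (ft S ψ)) / Fintype.card G := by
  have hN : (Fintype.card G : ℂ) ≠ 0 := by exact_mod_cast Fintype.card_ne_zero
  rw [eq_div_iff hN]
  simp only [conj_ft, mul_sum, ← AddChar.map_add_eq_mul]
  rw [sum_comm]
  simp only [AddChar.sum_apply_eq_ite]
  have : ∀ x, (v + -x = 0) ↔ v = x := fun x => by rw [← sub_eq_add_neg, sub_eq_zero]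
  simp only [this]
  rw [sum_ite_eq]
  unfold ind
  split_ifs <;> simp

lemma parseval (S : Finset G) :
    ∑ ψ : AddChar G ℂ, ‖ft S ψ‖ ^ 2 = Fintype.card G * S.card := by
  have h : ((∑ ψ : AddChar G ℂ, ‖ft S ψ‖ ^ 2 : ℝ) : ℂ) = Fintype.card G * S.card := by
    push_cast
    have e : ∀ ψ : AddChar G ℂ, ((‖ft S ψ‖ : ℂ)) ^ 2 = ∑ v ∈ S, ψ v * (starRingEnd ℂ) (ft S ψ) := by
      intro ψ
      rw [← Complex.mul_conj', ← sum_mul]; rfl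
    simp only [e]
    rw [sum_comm]
    have hN : (Fintype.card G : ℂ) ≠ 0 := by exact_mod_cast Fintype.card_ne_zero
    have : ∀ v ∈ S, ∑ ψ : AddChar G ℂ, ψ v * (starRingEnd ℂ) (ft S ψ) = Fintype.card G := by
      intro v hv
      have := ind_inversion S v
      rw [eq_div_iff hN] at this
      rw [← this]
      simp [ind, hv]
    rw [sum_congr rfl this]
    simp [mul_comm]
  exact_mod_cast h

lemma map_sum_char {ι : Type*} (ψ : AddChar G ℂ) (I : Finset ι) (f : ι → G) :
    ψ (∑ i ∈ I, f i) = ∏ i ∈ I, ψ (f i) := by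
  classical
  induction I using Finset.induction_on with
  | empty => simp
  | insert a s ha ih => rw [sum_insert ha, prod_insert ha, AddChar.map_add_eq_mul, ih]

lemma ft_pow (T : Finset G) (k : ℕ) (ψ : AddChar G ℂ) :
    ∑ t ∈ Fintype.piFinset (fun _ : Fin k => T), ψ (∑ i, t i) = ft T ψ ^ k := by
  have : ∀ t : Fin k → G, ψ (∑ i, t i) = ∏ i, ψ (t i) := fun t => map_sum_char ψ _ _
  simp only [this]
  rw [sum_prod_piFinset T (fun _ x => ψ x)]
  simp [ft]

lemma ft_pow_neg (T : Finset G) (k : ℕ) (ψ : AddChar G ℂ) :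
    ∑ t ∈ Fintype.piFinset (fun _ : Fin k => T), ψ (-∑ i, t i) = (starRingEnd ℂ) (ft T ψ) ^ k := by
  rw [← map_pow, ← ft_pow, map_sum]
  exact sum_congr rfl fun x _ => (AddChar.map_neg_eq_conj ψ _)

/-- The averaged shifted function. -/
noncomputable def smooth (A1 A2 S T : Finset G) (k : ℕ) (s : G) : ℝ :=
  ∑ t ∈ Fintype.piFinset (fun _ : Fin k => T), ∑ t' ∈ Fintype.piFinset (fun _ : Fin k => T),
    shiftAvg A1 A2 (ind S) (∑ i, (t i - t' i) + s)

lemma shiftAvg_formula (A1 A2 S : Finset G) (u : G) :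
    ((shiftAvg A1 A2 (ind S) u : ℝ) : ℂ) =
      (∑ ψ : AddChar G ℂ, ψ u * (ft A1 ψ * (starRingEnd ℂ) (ft A2 ψ) * (starRingEnd ℂ) (ft S ψ)))
        / (Fintype.card G * A1.card * A2.card) := by
  unfold shiftAvg avg
  push_cast
  simp only [ind_inversion]
  simp only [← sum_div, div_div]
  congr 1
  · have : ∀ x ∈ A1, ∑ a ∈ A2, ∑ ψ : AddChar G ℂ, ψ (x + u - a) * (starRingEnd ℂ) (ft S ψ) =
        ∑ ψ : AddChar G ℂ, ψ x * (ψ u * (starRingEnd ℂ) (ft A2 ψ) * (starRingEnd ℂ) (ft S ψ)) := by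
      intro x _
      rw [sum_comm]
      refine sum_congr rfl fun ψ _ => ?_
      rw [conj_ft A2]
      simp only [sum_mul, mul_sum]
      refine sum_congr rfl fun a _ => ?_
      rw [sub_eq_add_neg, AddChar.map_add_eq_mul, AddChar.map_add_eq_mul]; ring
    rw [sum_congr rfl this, sum_comm]
    refine sum_congr rfl fun ψ _ => ?_
    rw [← sum_mul]
    unfold ft
    ring
  · ring

lemma smooth_formula (A1 A2 S T : Finset G) (k : ℕ) (s : G) :
    ((smooth A1 A2 S T k s : ℝ) : ℂ) =
      (∑ ψ : AddChar G ℂ, ψ s * (ft A1 ψ * (starRingEnd ℂ) (ft A2 ψ) * (starRingEnd ℂ) (ft S ψ) *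
        (ft T ψ ^ k * (starRingEnd ℂ) (ft T ψ) ^ k)))
        / (Fintype.card G * A1.card * A2.card) := by
  unfold smooth
  push_cast
  simp only [shiftAvg_formula, ← sum_div]
  congr 1
  simp only [sum_comm (t := (univ : Finset (AddChar G ℂ)))]
  refine sum_congr rfl fun ψ _ => ?_
  rw [← ft_pow, ← ft_pow_neg]
  simp only [sum_mul, mul_sum]
  rw [sum_comm]
  refine sum_congr rfl fun a _ => sum_congr rfl fun b _ => ?_
  rw [sum_sub_distrib, AddChar.map_add_eq_mul, sub_eq_add_neg, AddChar.map_add_eq_mul]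
  ring

lemma smooth_le (A1 A2 S T : Finset G) (hA1 : A1.Nonempty) (hA2 : A2.Nonempty) (k : ℕ) (s : G)
    (β : ℝ) (hβ : ∀ ψ : AddChar G ℂ, ‖ψ s - 1‖ * ‖ft T ψ‖ ^ (2 * k) ≤ β * (T.card : ℝ) ^ (2 * k)) :
    |smooth A1 A2 S T k s - smooth A1 A2 S T k 0| ≤
      β * (T.card : ℝ) ^ (2 * k) * ((S.card + A1.card) / (2 * A1.card)) := by
  have hA1c : (0 : ℝ) < A1.card := by exact_mod_cast hA1.card_pos
  have hA2c : (0 : ℝ) < A2.card := by exact_mod_cast hA2.card_pos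
  have hN : (0 : ℝ) < Fintype.card G := by exact_mod_cast Fintype.card_pos
  rw [← Real.norm_eq_abs, ← Complex.norm_real]
  push_cast
  rw [smooth_formula, smooth_formula, ← sub_div, ← sum_sub_distrib, norm_div]
  have e : ‖(Fintype.card G * A1.card * A2.card : ℂ)‖ = Fintype.card G * A1.card * A2.card := by
    simp
  rw [e, div_le_iff₀ (by positivity)]
  refine (norm_sum_le _ _).trans ?_
  have hb : ∀ ψ : AddChar G ℂ, ‖ψ s * (ft A1 ψ * (starRingEnd ℂ) (ft A2 ψ) * (starRingEnd ℂ) (ft S ψ) *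
        (ft T ψ ^ k * (starRingEnd ℂ) (ft T ψ) ^ k)) - ψ 0 * (ft A1 ψ * (starRingEnd ℂ) (ft A2 ψ) *
        (starRingEnd ℂ) (ft S ψ) * (ft T ψ ^ k * (starRingEnd ℂ) (ft T ψ) ^ k))‖ ≤
        β * (T.card : ℝ) ^ (2 * k) * A2.card * ((‖ft S ψ‖ ^ 2 + ‖ft A1 ψ‖ ^ 2) / 2) := by
    intro ψ
    rw [AddChar.map_zero_eq_one, ← sub_mul]
    simp only [norm_mul, norm_pow, RCLike.norm_conj]
    have h1 := hβ ψ
    have h2 := ft_norm_le A2 ψ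
    have h3 := norm_nonneg (ft A2 ψ)
    have h4 : ‖ft A1 ψ‖ * ‖ft S ψ‖ ≤ (‖ft S ψ‖ ^ 2 + ‖ft A1 ψ‖ ^ 2) / 2 := by
      nlinarith [sq_nonneg (‖ft S ψ‖ - ‖ft A1 ψ‖)]
    have h5 : 0 ≤ ‖ψ s - 1‖ * ‖ft T ψ‖ ^ (2 * k) := by positivity
    calc _ = (‖ψ s - 1‖ * ‖ft T ψ‖ ^ (2 * k)) * ‖ft A2 ψ‖ * (‖ft A1 ψ‖ * ‖ft S ψ‖) := by ring
      _ ≤ _ := by 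
          have h6 := h5.trans h1
          gcongr
  refine (sum_le_sum fun ψ _ => hb ψ).trans (le_of_eq ?_)
  rw [← mul_sum, ← sum_div, sum_add_distrib, parseval, parseval]
  field_simp

end Four
end Roth

namespace Roth
open Finset
set_option linter.unusedSectionVars false

/-! ### Chang's lemma -/

section Chang
variable {G : Type*} [AddCommGroup G] [Fintype G] [DecidableEq G]
variable {ι : Type*} [Fintype ι] [DecidableEq ι]

/-- Sign vectors. -/
def signs (ι : Type*) [Fintype ι] [DecidableEq ι] : Finset (ι → ℤ) :=
  Fintype.piFinset (fun _ : ι => ({-1, 0, 1} : Finset ℤ))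

/-- Dissociated families of characters, relative to `B`. -/
def Dissoc (B : Finset G) (lam : ι → AddChar G ℂ) : Prop :=
  ∀ e ∈ signs ι, e ≠ 0 → ‖ft B (∏ i, lam i ^ e i)‖ ≤ B.card / 2

lemma exists_unit_phase (z : ℂ) : ∃ c : ℂ, ‖c‖ = 1 ∧ (c * z).re = ‖z‖ := by
  by_cases hz : z = 0
  · exact ⟨1, by simp, by simp [hz]⟩
  · have hn : (‖z‖ : ℂ) ≠ 0 := by exact_mod_cast (norm_pos_iff.2 hz).ne'
    refine ⟨(starRingEnd ℂ) z / ‖z‖, ?_, ?_⟩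
    · rw [norm_div, RCLike.norm_conj, Complex.norm_real, norm_norm, div_self]
      exact (norm_pos_iff.2 hz).ne'
    · rw [div_mul_eq_mul_div, mul_comm, Complex.mul_conj', pow_two, mul_div_cancel_right₀ _ hn]
      simp

/-- Riesz coefficients. -/
noncomputable def rc (c : ι → ℂ) (i : ι) (e : ℤ) : ℂ :=
  if e = 0 then (Real.cosh (1/2) : ℝ) else
    if e = 1 then (Real.sinh (1/2) : ℝ) * c i / 2 else (Real.sinh (1/2) : ℝ) * (starRingEnd ℂ) (c i) / 2

lemma riesz_factor (lam : ι → AddChar G ℂ) (c : ι → ℂ) (i : ι) (x : G) :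
    ((Real.cosh (1/2) + (c i * lam i x).re * Real.sinh (1/2) : ℝ) : ℂ) =
      ∑ e ∈ ({-1, 0, 1} : Finset ℤ), rc c i e * (lam i ^ e) x := by
  rw [sum_insert (by decide), sum_insert (by decide), sum_singleton]
  have h : ((c i * lam i x).re : ℂ) = (c i * lam i x + (starRingEnd ℂ) (c i * lam i x)) / 2 := by
    rw [Complex.add_conj]; push_cast; ring
  have e0 : rc c i 0 = (Real.cosh (1/2) : ℝ) := by rw [rc, if_pos rfl]
  have e1 : rc c i 1 = (Real.sinh (1/2) : ℝ) * c i / 2 := by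
    rw [rc, if_neg (by decide), if_pos rfl]
  have e2 : rc c i (-1) = (Real.sinh (1/2) : ℝ) * (starRingEnd ℂ) (c i) / 2 := by
    rw [rc, if_neg (by decide), if_neg (by decide)]
  have : (lam i ^ (-1 : ℤ)) x = (starRingEnd ℂ) (lam i x) := by
    rw [zpow_neg_one, AddChar.inv_apply, AddChar.map_neg_eq_conj]
  rw [e0, e1, e2, this, zpow_zero, zpow_one, AddChar.one_apply, Complex.ofReal_add,
    Complex.ofReal_mul, h, map_mul]
  ring

lemma riesz_expand (lam : ι → AddChar G ℂ) (c : ι → ℂ) (x : G) :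
    ((∏ i, (Real.cosh (1/2) + (c i * lam i x).re * Real.sinh (1/2)) : ℝ) : ℂ) =
      ∑ e ∈ signs ι, (∏ i, rc c i (e i)) * (∏ i, lam i ^ e i) x := by
  rw [Complex.ofReal_prod]
  simp only [riesz_factor]
  rw [prod_univ_sum]
  refine sum_congr rfl fun e _ => ?_
  rw [prod_mul_distrib, AddChar.prod_apply]

lemma rc_sum (c : ι → ℂ) (hc : ∀ i, ‖c i‖ = 1) (i : ι) :
    ∑ e ∈ ({-1, 0, 1} : Finset ℤ), ‖rc c i e‖ = Real.exp (1/2) := by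
  rw [sum_insert (by decide), sum_insert (by decide), sum_singleton]
  have h1 : |Real.cosh (1/2)| = Real.cosh (1/2) := abs_of_pos (Real.cosh_pos _)
  have h2 : |Real.sinh (1/2)| = Real.sinh (1/2) := abs_of_nonneg (Real.sinh_nonneg_iff.2 (by norm_num))
  have e0 : ‖rc c i 0‖ = Real.cosh (1/2) := by
    simp only [rc, if_true, Complex.norm_real, Real.norm_eq_abs, h1]
  have e1 : ‖rc c i 1‖ = Real.sinh (1/2) / 2 := by
    rw [rc, if_neg (by decide), if_pos rfl, norm_div, norm_mul, hc, Complex.norm_real, Real.norm_eq_abs, h2]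
    norm_num
  have e2 : ‖rc c i (-1)‖ = Real.sinh (1/2) / 2 := by
    rw [rc, if_neg (by decide), if_neg (by decide), norm_div, norm_mul, RCLike.norm_conj, hc,
      Complex.norm_real, Real.norm_eq_abs, h2]
    norm_num
  rw [e0, e1, e2, ← Real.cosh_add_sinh]
  ring

lemma chang_bound (lam : ι → AddChar G ℂ) (T B5 B5p B7 : Finset G) (ℓ : ℕ)
    (hℓ : 2 * Fintype.card ι ≤ ℓ) (hT : T ⊆ B5) (hB7 : B7.Nonempty)
    (hspec : ∀ i, (T.card : ℝ) / 2 ≤ ‖ft T (lam i)‖)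
    (hB : ∀ x ∈ B5, ∀ s : Fin ℓ → G, (∀ j, s j ∈ B7) → x + ∑ j, s j ∈ B5p)
    (hB5p : (B5p.card : ℝ) ≤ 2 * B5.card) (hdis : Dissoc B7 lam) :
    (T.card : ℝ) * Real.exp ((Fintype.card ι : ℝ) / 8) ≤ 4 * B5.card := by
  choose c hc1 hc2 using fun i => exists_unit_phase (ft T (lam i))
  set M : ℝ := (Fintype.card ι : ℝ) with hM
  have hB7c : (0 : ℝ) < B7.card := by exact_mod_cast hB7.card_pos
  set u : ι → G → ℝ := fun i x => (c i * lam i x).re with hu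
  have hu1 : ∀ i x, |u i x| ≤ 1 := by
    intro i x
    refine (Complex.abs_re_le_norm _).trans ?_
    rw [norm_mul, hc1, norm_char]; norm_num
  set F : G → ℝ := fun x => ∏ i, (Real.cosh (1/2) + u i x * Real.sinh (1/2)) with hF
  have hcs : Real.sinh (1/2) ≤ Real.cosh (1/2) := (Real.sinh_lt_cosh _).le
  have hs0 : 0 ≤ Real.sinh (1/2) := Real.sinh_nonneg_iff.2 (by norm_num)
  have hF0 : ∀ x, 0 ≤ F x := by
    intro x
    refine prod_nonneg fun i _ => ?_
    have := abs_le.1 (hu1 i x)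
    nlinarith
  have hFexp : ∀ x, Real.exp (1/2 * ∑ i, u i x) ≤ F x := by
    intro x
    rw [mul_sum, Real.exp_sum]
    refine prod_le_prod (fun _ _ => (Real.exp_pos _).le) fun i _ => exp_mul_le_cosh _ _ (hu1 i x)
  have hsumU : M * (T.card / 2) ≤ ∑ x ∈ T, ∑ i, u i x := by
    rw [sum_comm]
    have e : ∀ i, ∑ x ∈ T, u i x = ‖ft T (lam i)‖ := by
      intro i
      rw [← hc2 i, ft, mul_sum, Complex.re_sum]
    simp only [e]
    calc _ = ∑ i : ι, (T.card : ℝ) / 2 := by rw [sum_const, nsmul_eq_mul, card_univ]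
      _ ≤ _ := sum_le_sum fun i _ => hspec i
  have h1 : (T.card : ℝ) * Real.exp (M / 4) ≤ ∑ x ∈ T, F x := by
    have hx : ∀ x, Real.exp (M / 4) * (1 + (1/2 * ∑ i, u i x - M / 4)) ≤ F x := by
      intro x
      refine le_trans ?_ (hFexp x)
      have := Real.add_one_le_exp (1/2 * ∑ i, u i x - M / 4)
      have h2 : Real.exp (1/2 * ∑ i, u i x) = Real.exp (M / 4) * Real.exp (1/2 * ∑ i, u i x - M / 4) := by
        rw [← Real.exp_add]; congr 1; ring
      rw [h2]
      refine mul_le_mul_of_nonneg_left ?_ (Real.exp_pos _).le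
      linarith
    refine le_trans ?_ (sum_le_sum fun x _ => hx x)
    rw [← mul_sum, sum_add_distrib, sum_sub_distrib, ← mul_sum, sum_const, sum_const, nsmul_eq_mul,
      nsmul_eq_mul, mul_comm]
    refine mul_le_mul_of_nonneg_left ?_ (Real.exp_pos _).le
    linarith
  set P := Fintype.piFinset (fun _ : Fin ℓ => B7) with hP
  have hPc : (P.card : ℝ) = (B7.card : ℝ) ^ ℓ := by
    rw [hP, Fintype.card_piFinset_const]; push_cast; rfl
  have h3 : (B7.card : ℝ) ^ ℓ * ∑ x ∈ T, F x ≤ ∑ y ∈ B5p, ∑ s ∈ P, F (y - ∑ j, s j) := by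
    rw [sum_comm, ← hPc, ← nsmul_eq_mul, ← sum_const]
    refine sum_le_sum fun s hs => ?_
    have hs' : ∀ j, s j ∈ B7 := by rw [hP, Fintype.mem_piFinset] at hs; exact hs
    have e : ∑ x ∈ T, F x = ∑ y ∈ T.image (fun x => x + ∑ j, s j), F (y - ∑ j, s j) := by
      rw [sum_image (fun a _ b _ h => add_right_cancel h)]
      simp
    rw [e]
    refine sum_le_sum_of_subset_of_nonneg ?_ fun _ _ _ => hF0 _
    intro y hy
    obtain ⟨x, hx, rfl⟩ := mem_image.1 hy
    exact hB x (hT hx) s hs'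
  have h4 : ∀ y, ∑ s ∈ P, F (y - ∑ j, s j) ≤ (B7.card : ℝ) ^ ℓ * (Real.exp (M / 8) + 1) := by
    intro y
    have hc : ((∑ s ∈ P, F (y - ∑ j, s j) : ℝ) : ℂ) = ∑ e ∈ signs ι, (∏ i, rc c i (e i)) *
        ((∏ i, lam i ^ e i) y * (starRingEnd ℂ) (ft B7 (∏ i, lam i ^ e i)) ^ ℓ) := by
      rw [Complex.ofReal_sum]
      simp only [hF, hu, riesz_expand]
      rw [sum_comm]
      refine sum_congr rfl fun e _ => ?_
      rw [← mul_sum, ← ft_pow_neg, ← hP]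
      congr 1
      rw [mul_sum]
      refine sum_congr rfl fun s _ => ?_
      rw [sub_eq_add_neg, AddChar.map_add_eq_mul]
    have h5 : ∑ s ∈ P, F (y - ∑ j, s j) ≤ ‖((∑ s ∈ P, F (y - ∑ j, s j) : ℝ) : ℂ)‖ := by
      rw [Complex.norm_real]; exact le_abs_self _
    refine h5.trans ?_
    rw [hc]
    refine (norm_sum_le _ _).trans ?_
    have h0 : (0 : ι → ℤ) ∈ signs ι := by
      rw [signs, Fintype.mem_piFinset]; intro i; simp
    rw [← add_sum_erase _ _ h0]
    have hz : ‖(∏ i, rc c i ((0 : ι → ℤ) i)) * ((∏ i, lam i ^ (0 : ι → ℤ) i) y *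
        (starRingEnd ℂ) (ft B7 (∏ i, lam i ^ (0 : ι → ℤ) i)) ^ ℓ)‖ ≤ Real.exp (M / 8) * (B7.card : ℝ) ^ ℓ := by
      rw [norm_mul, norm_mul, norm_char, one_mul, norm_pow, RCLike.norm_conj]
      refine mul_le_mul ?_ (pow_le_pow_left₀ (norm_nonneg _) (ft_norm_le _ _) _) (by positivity)
        (Real.exp_pos _).le
      simp only [rc, Pi.zero_apply, if_true]
      rw [prod_const, norm_pow, Complex.norm_real, Real.norm_eq_abs, abs_of_pos (Real.cosh_pos _), card_univ]
      have := Real.cosh_le_exp_half_sq (1/2)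
      calc _ ≤ (Real.exp ((1/2) ^ 2 / 2)) ^ (Fintype.card ι) :=
            pow_le_pow_left₀ (Real.cosh_pos _).le this _
        _ = Real.exp (M / 8) := by
            rw [← Real.exp_nat_mul]; congr 1; rw [hM]; ring
    have hnz : ∀ e ∈ (signs ι).erase 0, ‖(∏ i, rc c i (e i)) * ((∏ i, lam i ^ e i) y *
        (starRingEnd ℂ) (ft B7 (∏ i, lam i ^ e i)) ^ ℓ)‖ ≤ (∏ i, ‖rc c i (e i)‖) * ((B7.card : ℝ) / 2) ^ ℓ := by
      intro e he
      rw [mem_erase] at he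
      rw [norm_mul, norm_mul, norm_char, one_mul, norm_pow, RCLike.norm_conj, norm_prod]
      have := hdis e he.2 he.1
      gcongr
    have hsum : ∑ e ∈ (signs ι).erase 0, ‖(∏ i, rc c i (e i)) * ((∏ i, lam i ^ e i) y *
        (starRingEnd ℂ) (ft B7 (∏ i, lam i ^ e i)) ^ ℓ)‖ ≤ (B7.card : ℝ) ^ ℓ := by
      refine (sum_le_sum hnz).trans ?_
      rw [← sum_mul]
      have h6 : ∑ e ∈ (signs ι).erase 0, (∏ i, ‖rc c i (e i)‖) ≤ Real.exp (1/2) ^ (Fintype.card ι) := by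
        calc _ ≤ ∑ e ∈ signs ι, (∏ i, ‖rc c i (e i)‖) :=
              sum_le_sum_of_subset_of_nonneg (erase_subset _ _) fun _ _ _ =>
                prod_nonneg fun _ _ => norm_nonneg _
          _ = ∏ i : ι, Real.exp (1/2) := by
              rw [signs, ← prod_univ_sum (fun _ : ι => ({-1, 0, 1} : Finset ℤ)) (fun i e => ‖rc c i e‖)]
              exact prod_congr rfl fun i _ => rc_sum c hc1 i
          _ = _ := by rw [prod_const, card_univ]
      have h7 : Real.exp (1/2) ≤ 2 := by
        have h9 : Real.exp (1/2) ^ 2 = Real.exp 1 := by rw [← Real.exp_nat_mul]; norm_num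
        have := Real.exp_one_lt_d9
        nlinarith [Real.exp_pos (1/2)]
      have h8 : Real.exp (1/2) ^ (Fintype.card ι) ≤ 2 ^ ℓ :=
        (pow_le_pow_left₀ (Real.exp_pos _).le h7 _).trans (pow_le_pow_right₀ (by norm_num) (by omega))
      have h10 : (0 : ℝ) < 2 ^ ℓ := by positivity
      rw [div_pow, ← mul_div_assoc, div_le_iff₀ h10, mul_comm]
      refine mul_le_mul_of_nonneg_left (h6.trans h8) (by positivity)
    linarith
  have h5 : (B7.card : ℝ) ^ ℓ * ∑ x ∈ T, F x ≤ (B7.card : ℝ) ^ ℓ * (B5p.card * (Real.exp (M / 8) + 1)) := by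
    refine h3.trans ((sum_le_sum fun y _ => h4 y).trans (le_of_eq ?_))
    rw [sum_const, nsmul_eq_mul]; ring
  have h6 := h1.trans (le_of_mul_le_mul_left h5 (by positivity))
  have h7 : Real.exp (M / 4) = Real.exp (M / 8) * Real.exp (M / 8) := by
    rw [← Real.exp_add]; congr 1; ring
  rw [h7] at h6
  have h8 : 1 ≤ Real.exp (M / 8) := by
    rw [Real.one_le_exp_iff]; rw [hM]; positivity
  have h9 : (B5p.card : ℝ) * (Real.exp (M / 8) + 1) ≤ 4 * B5.card * Real.exp (M / 8) := by
    have : (0 : ℝ) ≤ B5p.card := by positivity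
    nlinarith
  refine le_of_mul_le_mul_right ?_ (show 0 < Real.exp (M / 8) by positivity)
  nlinarith

end Chang
end Roth

namespace Roth
open Finset
set_option linter.unusedSectionVars false

section Spec
variable {G : Type*} [AddCommGroup G] [Fintype G] [DecidableEq G]

/-- Dissociated finite sets of characters. -/
def DissocF (B : Finset G) (Λ : Finset (AddChar G ℂ)) : Prop :=
  ∀ e : AddChar G ℂ → ℤ, (∀ l ∈ Λ, e l ∈ ({-1, 0, 1} : Finset ℤ)) → (∃ l ∈ Λ, e l ≠ 0) →
    ‖ft B (∏ l ∈ Λ, l ^ e l)‖ ≤ B.card / 2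

lemma DissocF.dissoc [DecidableEq (AddChar G ℂ)] {B : Finset G} {Λ : Finset (AddChar G ℂ)}
    (h : DissocF B Λ) :
    Dissoc B (fun i : Λ => (i : AddChar G ℂ)) := by
  intro e he hne
  rw [signs, Fintype.mem_piFinset] at he
  have := h (fun l => if h : l ∈ Λ then e ⟨l, h⟩ else 0) (by
    intro l hl
    simp only [hl, dif_pos]
    exact he _) (by
    by_contra hcon
    push Not at hcon
    apply hne
    funext ⟨l, hl⟩
    have := hcon l hl
    simpa [hl] using this)
  convert this using 3
  rw [← Finset.prod_coe_sort Λ (fun l => l ^ (if h : l ∈ Λ then e ⟨l, h⟩ else 0))]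
  refine prod_congr rfl fun i _ => ?_
  simp

lemma nrm_mul (χ χ' : AddChar G ℂ) (s : G) : ‖(χ * χ') s - 1‖ ≤ ‖χ s - 1‖ + ‖χ' s - 1‖ := by
  rw [AddChar.mul_apply]
  have e : χ s * χ' s - 1 = χ s * (χ' s - 1) + (χ s - 1) := by ring
  rw [e]
  refine (norm_add_le _ _).trans ?_
  rw [norm_mul, norm_char, one_mul, add_comm]

lemma nrm_inv (χ : AddChar G ℂ) (s : G) : ‖χ⁻¹ s - 1‖ = ‖χ s - 1‖ := by
  rw [AddChar.inv_apply, AddChar.map_neg_eq_conj, ← RCLike.norm_conj (χ s - 1)]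
  simp

lemma nrm_sign (χ : AddChar G ℂ) (s : G) (e : ℤ) (he : e ∈ ({-1, 0, 1} : Finset ℤ)) :
    ‖(χ ^ e) s - 1‖ ≤ ‖χ s - 1‖ := by
  simp only [mem_insert, mem_singleton] at he
  rcases he with rfl | rfl | rfl
  · rw [zpow_neg_one, nrm_inv]
  · simp
  · rw [zpow_one]

lemma nrm_sign' (χ : AddChar G ℂ) (s : G) (e : ℤ) (he : e ∈ ({-1, 0, 1} : Finset ℤ)) (h0 : e ≠ 0) :
    ‖(χ ^ e) s - 1‖ = ‖χ s - 1‖ := by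
  simp only [mem_insert, mem_singleton] at he
  rcases he with rfl | rfl | rfl
  · rw [zpow_neg_one, nrm_inv]
  · exact absurd rfl h0
  · rw [zpow_one]

lemma nrm_prod (Λ : Finset (AddChar G ℂ)) (e : AddChar G ℂ → ℤ)
    (he : ∀ l ∈ Λ, e l ∈ ({-1, 0, 1} : Finset ℤ)) (s : G) (r : ℝ) (hr : ∀ l ∈ Λ, ‖l s - 1‖ ≤ r) :
    ‖(∏ l ∈ Λ, l ^ e l) s - 1‖ ≤ Λ.card * r := by
  classical
  induction Λ using Finset.induction_on with
  | empty => simp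
  | insert a t ha ih =>
    rw [prod_insert ha, card_insert_of_notMem ha]
    refine (nrm_mul _ _ _).trans ?_
    have h1 := (nrm_sign a s (e a) (he a (mem_insert_self _ _))).trans (hr a (mem_insert_self _ _))
    have h2 := ih (fun l hl => he l (mem_insert_of_mem hl)) (fun l hl => hr l (mem_insert_of_mem hl))
    rw [Nat.cast_add, Nat.cast_one, add_mul]
    linarith

lemma ft_shift (Γ : Finset (AddChar G ℂ)) (ρ δ ε : ℝ)
    (h : ((Bohr Γ (ρ + δ)).card : ℝ) ≤ (1 + ε) * (Bohr Γ ρ).card) (hδ : 0 ≤ δ)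
    (χ : AddChar G ℂ) (s : G) (hs : s ∈ Bohr Γ δ) :
    ‖χ s - 1‖ * ‖ft (Bohr Γ ρ) χ‖ ≤ 2 * ε * (Bohr Γ ρ).card := by
  set B := Bohr Γ ρ with hB
  have e1 : (χ s - 1) * ft B χ = ∑ x ∈ B, χ (x + s) - ∑ x ∈ B, χ x := by
    rw [sub_mul, one_mul]
    unfold ft
    rw [mul_sum]
    congr 1
    exact sum_congr rfl fun x _ => by rw [AddChar.map_add_eq_mul, mul_comm]
  have e2 : ∑ x ∈ B with x + s ∈ B, χ (x + s) = ∑ x ∈ B with x + -s ∈ B, χ x := by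
    refine sum_nbij' (fun x => x + s) (fun x => x + -s) ?_ ?_ ?_ ?_ ?_
    · intro x hx
      rw [mem_filter] at hx ⊢
      refine ⟨hx.2, ?_⟩
      simpa using hx.1
    · intro x hx
      rw [mem_filter] at hx ⊢
      refine ⟨hx.2, ?_⟩
      simpa using hx.1
    · intro x _; simp
    · intro x _; simp
    · intro x _; rfl
  have e3 := sum_filter_add_sum_filter_not B (fun x => x + s ∈ B) (fun x => χ (x + s))
  have e4 := sum_filter_add_sum_filter_not B (fun x => x + -s ∈ B) (fun x => χ x)
  have h1 := card_shift_le h hδ hs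
  have h2 := card_shift_le h hδ (neg_mem_Bohr hs)
  rw [← norm_mul, e1, ← e3, ← e4, e2, add_sub_add_left_eq_sub]
  refine (norm_sub_le _ _).trans ?_
  have n1 : ‖∑ x ∈ B with x + s ∉ B, χ (x + s)‖ ≤ ε * B.card := by
    refine (norm_sum_le _ _).trans ?_
    simp only [norm_char, sum_const, nsmul_eq_mul, mul_one]
    exact h1
  have n2 : ‖∑ x ∈ B with x + -s ∉ B, χ x‖ ≤ ε * B.card := by
    refine (norm_sum_le _ _).trans ?_
    simp only [norm_char, sum_const, nsmul_eq_mul, mul_one]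
    exact h2
  linarith

/-- Structure of the large spectrum. -/
lemma chang_spec (T B5 B5p B7 : Finset G) (M0 : ℕ) (τ : ℝ) (hTne : T.Nonempty)
    (hT : T ⊆ B5) (hB7 : B7.Nonempty) (hτ : τ * B5.card ≤ T.card)
    (hM0 : 4 < τ * Real.exp (((M0 + 1 : ℕ) : ℝ) / 8))
    (hB : ∀ x ∈ B5, ∀ s : Fin (2 * (M0 + 1)) → G, (∀ j, s j ∈ B7) → x + ∑ j, s j ∈ B5p)
    (hB5p : (B5p.card : ℝ) ≤ 2 * B5.card) :
    ∃ Λ : Finset (AddChar G ℂ), Λ.card ≤ M0 ∧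
      ∀ s : G, ∀ r ε : ℝ, 0 ≤ ε → (∀ l ∈ Λ, ‖l s - 1‖ ≤ r) → 0 ≤ r →
        (∀ χ : AddChar G ℂ, ‖χ s - 1‖ * ‖ft B7 χ‖ ≤ 2 * ε * B7.card) →
        ∀ ψ : AddChar G ℂ, (T.card : ℝ) / 2 ≤ ‖ft T ψ‖ → ‖ψ s - 1‖ ≤ (M0 + 1) * r + 4 * ε := by
  classical
  have hB7c : (0 : ℝ) < B7.card := by exact_mod_cast hB7.card_pos
  have hTc : (0 : ℝ) < T.card := by exact_mod_cast hTne.card_pos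
  have hB5c : (0 : ℝ) < B5.card := by exact_mod_cast (hTne.mono hT).card_pos
  set F : Finset (Finset (AddChar G ℂ)) := univ.filter (fun Λ =>
    (∀ l ∈ Λ, (T.card : ℝ) / 2 ≤ ‖ft T l‖) ∧ Λ.card ≤ M0 + 1 ∧ DissocF B7 Λ) with hF
  have hFne : F.Nonempty := by
    refine ⟨∅, ?_⟩
    rw [hF, mem_filter]
    refine ⟨mem_univ _, by simp, by simp, ?_⟩
    rintro e _ ⟨l, hl, _⟩
    simp at hl
  obtain ⟨Λ, hΛ, hmax⟩ := exists_max_image F card hFne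
  rw [hF, mem_filter] at hΛ
  obtain ⟨-, hsp, hcard, hdis⟩ := hΛ
  have hcard' : Λ.card ≤ M0 := by
    by_contra hcon
    have heq : Λ.card = M0 + 1 := by omega
    have := chang_bound (fun i : Λ => (i : AddChar G ℂ)) T B5 B5p B7 (2 * (M0 + 1))
      (by rw [Fintype.card_coe, heq]) hT hB7 (fun i => hsp i i.2) hB hB5p hdis.dissoc
    rw [Fintype.card_coe, heq] at this
    have h2 := mul_le_mul_of_nonneg_right hτ (Real.exp_pos (((M0 + 1 : ℕ) : ℝ) / 8)).le
    nlinarith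
  refine ⟨Λ, hcard', ?_⟩
  intro s r ε hε hr hr0 hχ ψ hψ
  have hM0' : (Λ.card : ℝ) ≤ M0 := by exact_mod_cast hcard'
  by_cases hψΛ : ψ ∈ Λ
  · have := hr ψ hψΛ
    have : 0 ≤ (M0 : ℝ) * r := by positivity
    nlinarith
  have hnot : insert ψ Λ ∉ F := by
    intro hin
    have := hmax _ hin
    rw [card_insert_of_notMem hψΛ] at this
    omega
  have hnd : ¬ DissocF B7 (insert ψ Λ) := by
    intro hd
    apply hnot
    rw [hF, mem_filter]
    refine ⟨mem_univ _, ?_, ?_, hd⟩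
    · intro l hl
      rcases mem_insert.1 hl with rfl | hl
      · exact hψ
      · exact hsp l hl
    · rw [card_insert_of_notMem hψΛ]; omega
  unfold DissocF at hnd
  push Not at hnd
  obtain ⟨e, he, ⟨l, hl, hne⟩, hbig⟩ := hnd
  rw [prod_insert hψΛ] at hbig
  have he' : ∀ l ∈ Λ, e l ∈ ({-1, 0, 1} : Finset ℤ) := fun l hl => he l (mem_insert_of_mem hl)
  have heψ : e ψ ≠ 0 := by
    intro h0
    rw [h0, zpow_zero, one_mul] at hbig
    have hlΛ : l ∈ Λ := by
      rcases mem_insert.1 hl with rfl | hl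
      · exact absurd h0 hne
      · exact hl
    exact absurd (hdis e he' ⟨l, hlΛ, hne⟩) (not_le.2 hbig)
  set Q := ∏ l ∈ Λ, l ^ e l with hQ
  have h1 : ‖(ψ ^ e ψ * Q) s - 1‖ ≤ 4 * ε := by
    have := hχ (ψ ^ e ψ * Q)
    have h0 := norm_nonneg ((ψ ^ e ψ * Q) s - 1)
    nlinarith
  have h2 : ‖Q s - 1‖ ≤ Λ.card * r := nrm_prod Λ e he' s r hr
  have h3 : ‖(ψ ^ e ψ) s - 1‖ ≤ ‖(ψ ^ e ψ * Q) s - 1‖ + ‖Q⁻¹ s - 1‖ := by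
    have := nrm_mul (ψ ^ e ψ * Q) Q⁻¹ s
    rwa [mul_inv_cancel_right] at this
  rw [nrm_inv, nrm_sign' ψ s _ (he ψ (mem_insert_self _ _)) heψ] at h3
  nlinarith

end Spec
end Roth

namespace Roth
open Finset
set_option linter.unusedSectionVars false

section Bal
variable {G : Type*} [AddCommGroup G] [Fintype G] [DecidableEq G]

lemma ind_nonneg (A : Finset G) (x : G) : 0 ≤ ind A x := by unfold ind; split_ifs <;> norm_num
lemma ind_le_one (A : Finset G) (x : G) : ind A x ≤ 1 := by unfold ind; split_ifs <;> norm_num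

lemma sum_ind_mul (A : Finset G) (g : G → ℝ) : ∑ z, ind A z * g z = ∑ z ∈ A, g z := by
  simp only [ind, ite_mul, one_mul, zero_mul]
  rw [sum_ite_mem, univ_inter]

lemma sum_ind_card (X B : Finset G) (t : G → G) :
    ∑ z ∈ X, ind B (t z) = ((X.filter (fun z => t z ∈ B)).card : ℝ) := by
  rw [card_filter]
  push_cast
  rfl

lemma overlap (Γ : Finset (AddChar G ℂ)) (ρ δ ε : ℝ)
    (h : ((Bohr Γ (ρ + δ)).card : ℝ) ≤ (1 + ε) * (Bohr Γ ρ).card) (hδ : 0 ≤ δ)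
    (X : Finset G) (hX : X ⊆ Bohr Γ ρ) (x : G) (hx : x ∈ Bohr Γ δ) :
    (X.card : ℝ) - ε * (Bohr Γ ρ).card ≤ ∑ z, ind X z * ind (Bohr Γ ρ) (z + x) ∧
      ∑ z, ind X z * ind (Bohr Γ ρ) (z + x) ≤ X.card := by
  rw [sum_ind_mul, sum_ind_card]
  have h1 := card_shift_le h hδ hx
  have h2 := card_filter_add_card_filter_not (s := X) (fun z => z + x ∈ Bohr Γ ρ)
  have h3 : (X.filter (fun z => ¬ z + x ∈ Bohr Γ ρ)).card ≤
    ((Bohr Γ ρ).filter (fun z => z + x ∉ Bohr Γ ρ)).card := card_le_card (filter_subset_filter _ hX)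
  have h3' : ((X.filter (fun z => ¬ z + x ∈ Bohr Γ ρ)).card : ℝ) ≤
    ((Bohr Γ ρ).filter (fun z => z + x ∉ Bohr Γ ρ)).card := by exact_mod_cast h3
  have h2' : ((X.filter (fun z => z + x ∈ Bohr Γ ρ)).card : ℝ) +
    ((X.filter (fun z => ¬ z + x ∈ Bohr Γ ρ)).card : ℝ) = X.card := by exact_mod_cast h2
  constructor
  · linarith
  · have : (0 : ℝ) ≤ ((X.filter (fun z => ¬ z + x ∈ Bohr Γ ρ)).card : ℝ) := by positivity
    linarith

/-- The balanced function. -/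
def bal (A1 B : Finset G) (a : ℝ) (z : G) : ℝ := ind A1 z - a * ind B z

lemma ind_Bohr_neg (Γ : Finset (AddChar G ℂ)) (ρ : ℝ) (z : G) :
    ind (Bohr Γ ρ) (-z) = ind (Bohr Γ ρ) z := by
  unfold ind
  have : -z ∈ Bohr Γ ρ ↔ z ∈ Bohr Γ ρ :=
    ⟨fun h => by simpa using neg_mem_Bohr h, fun h => neg_mem_Bohr h⟩
  simp only [this]

lemma bal_corr (Γ : Finset (AddChar G ℂ)) (ρ δ ε a : ℝ)
    (h : ((Bohr Γ (ρ + δ)).card : ℝ) ≤ (1 + ε) * (Bohr Γ ρ).card) (hδ : 0 ≤ δ)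
    (X : Finset G) (hX : X ⊆ Bohr Γ ρ) (ha : (X.card : ℝ) = a * (Bohr Γ ρ).card) (ha0 : 0 ≤ a)
    (ha1 : a ≤ 1) (hε : 0 ≤ ε) (x : G) (hx : x ∈ Bohr Γ δ) :
    |corr (bal X (Bohr Γ ρ) a) x - (corr (ind X) x - a ^ 2 * (Bohr Γ ρ).card)| ≤
      3 * a * ε * (Bohr Γ ρ).card := by
  set B := Bohr Γ ρ with hB
  have hU := overlap Γ ρ δ ε h hδ X hX x hx
  have hV := overlap Γ ρ δ ε h hδ X hX (-x) (neg_mem_Bohr hx)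
  have hW := overlap Γ ρ δ ε h hδ B (le_refl _) x hx
  have eV : ∑ z, ind X z * ind B (z + -x) = ∑ z, ind B z * ind X (z + x) := by
    refine (Fintype.sum_equiv (Equiv.addRight x) _ _ fun z => ?_).symm
    simp only [Equiv.coe_addRight, add_neg_cancel_right]
    ring
  rw [← hB] at hU hV hW
  rw [eV] at hV
  have e : corr (bal X B a) x = corr (ind X) x - a * (∑ z, ind B z * ind X (z + x)) -
      a * (∑ z, ind X z * ind B (z + x)) + a ^ 2 * ∑ z, ind B z * ind B (z + x) := by
    unfold corr bal
    simp only [mul_sum]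
    rw [← sum_sub_distrib, ← sum_sub_distrib, ← sum_add_distrib]
    refine sum_congr rfl fun z _ => ?_
    ring
  rw [e, abs_le]
  have hBc : (0 : ℝ) ≤ B.card := by positivity
  have hε' : 0 ≤ ε * B.card := by positivity
  have p1 := mul_le_mul_of_nonneg_left hU.1 ha0
  have p2 := mul_le_mul_of_nonneg_left hU.2 ha0
  have p3 := mul_le_mul_of_nonneg_left hV.1 ha0
  have p4 := mul_le_mul_of_nonneg_left hV.2 ha0
  have p5 := mul_le_mul_of_nonneg_left hW.1 (sq_nonneg a)
  have p6 := mul_le_mul_of_nonneg_left hW.2 (sq_nonneg a)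
  have p7 : 0 ≤ a * (ε * B.card) := by positivity
  have p8 : a ^ 2 * (ε * B.card) ≤ a * (ε * B.card) := by
    refine mul_le_mul_of_nonneg_right ?_ hε'
    nlinarith
  rw [ha] at p1 p2 p3 p4
  constructor <;> nlinarith

lemma bal_conv (Γ : Finset (AddChar G ℂ)) (ρ δ ε a : ℝ)
    (h : ((Bohr Γ (ρ + δ)).card : ℝ) ≤ (1 + ε) * (Bohr Γ ρ).card) (hδ : 0 ≤ δ)
    (X : Finset G) (hX : X ⊆ Bohr Γ ρ) (ha : (X.card : ℝ) = a * (Bohr Γ ρ).card) (ha0 : 0 ≤ a)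
    (ha1 : a ≤ 1) (hε : 0 ≤ ε) (x : G) (hx : x ∈ Bohr Γ δ) :
    |conv (bal X (Bohr Γ ρ) a) x - (conv (ind X) x - a ^ 2 * (Bohr Γ ρ).card)| ≤
      3 * a * ε * (Bohr Γ ρ).card := by
  set B := Bohr Γ ρ with hB
  have hV := overlap Γ ρ δ ε h hδ X hX (-x) (neg_mem_Bohr hx)
  have hW := overlap Γ ρ δ ε h hδ B (le_refl _) (-x) (neg_mem_Bohr hx)
  have eB : ∀ z, ind B (z + -x) = ind B (x - z) := by
    intro z
    rw [hB, ← ind_Bohr_neg]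
    congr 1
    abel
  rw [← hB] at hV hW
  simp only [eB] at hV hW
  have eV : ∑ z, ind X z * ind B (x - z) = ∑ z, ind B z * ind X (x - z) := by
    refine (Fintype.sum_equiv (Equiv.subLeft x) _ _ fun z => ?_).symm
    simp only [Equiv.subLeft_apply, sub_sub_cancel]
    ring
  have e : conv (bal X B a) x = conv (ind X) x - a * (∑ z, ind B z * ind X (x - z)) -
      a * (∑ z, ind X z * ind B (x - z)) + a ^ 2 * ∑ z, ind B z * ind B (x - z) := by
    unfold conv bal
    simp only [mul_sum]
    rw [← sum_sub_distrib, ← sum_sub_distrib, ← sum_add_distrib]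
    refine sum_congr rfl fun z _ => ?_
    ring
  rw [e, ← eV, abs_le]
  have hBc : (0 : ℝ) ≤ B.card := by positivity
  have hε' : 0 ≤ ε * B.card := by positivity
  have p3 := mul_le_mul_of_nonneg_left hV.1 ha0
  have p4 := mul_le_mul_of_nonneg_left hV.2 ha0
  have p5 := mul_le_mul_of_nonneg_left hW.1 (sq_nonneg a)
  have p6 := mul_le_mul_of_nonneg_left hW.2 (sq_nonneg a)
  have p7 : 0 ≤ a * (ε * B.card) := by positivity
  have p8 : a ^ 2 * (ε * B.card) ≤ a * (ε * B.card) := by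
    refine mul_le_mul_of_nonneg_right ?_ hε'
    nlinarith
  rw [ha] at p3 p4
  constructor <;> nlinarith

/-- No nontrivial three-term progressions. -/
def Free3 (A : Finset G) : Prop := ∀ x ∈ A, ∀ y ∈ A, ∀ z ∈ A, x + y = z + z → x = y

lemma conv_free (A X : Finset G) (hA : Free3 A) (hX : X ⊆ A) (half : G →+ G)
    (hh : ∀ x, half x + half x = x) (c : G) (hc : c ∈ A) : conv (ind X) (c + c) ≤ 1 := by
  unfold conv
  rw [sum_ind_mul, sum_ind_card]
  have hinj : ∀ u v : G, u + u = v + v → u = v := by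
    intro u v huv
    have h2 : ∀ w : G, half (w + w) = w := fun w => by rw [map_add]; exact hh w
    rw [← h2 u, huv, h2]
  have : (X.filter (fun z => c + c - z ∈ X)).card ≤ 1 := by
    rw [card_le_one]
    have key : ∀ z ∈ X.filter (fun z => c + c - z ∈ X), z = c := by
      intro z hz
      rw [mem_filter] at hz
      have h1 := hA z (hX hz.1) _ (hX hz.2) c hc (by abel)
      apply hinj
      nth_rewrite 2 [h1]
      abel
    intro a ha b hb
    rw [key a ha, key b hb]
  exact_mod_cast this

lemma card_dil (half : G →+ G) (hh : ∀ x, half x + half x = x) (Γ : Finset (AddChar G ℂ)) (ρ : ℝ) :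
    (Bohr (dil half Γ) ρ).card = (Bohr Γ ρ).card := by
  refine card_nbij' (fun x => half x) (fun x => x + x) ?_ ?_ ?_ ?_
  · intro x hx
    exact mem_Bohr_dil.1 hx
  · intro x hx
    rw [mem_coe] at hx ⊢
    rw [mem_Bohr_dil, map_add, hh]; exact hx
  · intro x _; exact hh x
  · intro x _; simp only [map_add]; exact hh x

end Bal
end Roth

namespace Roth
open Finset
set_option linter.unusedSectionVars false

section StepSift
variable {G : Type*} [AddCommGroup G] [Fintype G] [DecidableEq G]

/-- Weight detecting small correlation. -/
noncomputable def lowW (A1 : Finset G) (M : ℝ) (x : G) : ℝ :=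
  if corr (ind A1) x ≤ 11 / 10 * M then 1 else 0

lemma corr_ind_nonneg (A1 : Finset G) (x : G) : 0 ≤ corr (ind A1) x :=
  sum_nonneg fun _ _ => mul_nonneg (ind_nonneg _ _) (ind_nonneg _ _)

set_option maxHeartbeats 1000000 in
lemma step_sift (A : Finset G) (hA : Free3 A) (half : G →+ G) (hh : ∀ x, half x + half x = x)
    (Γ : Finset (AddChar G ℂ)) (ρ1 δ1 ρ2 ρ3 ε a : ℝ) (hδ1 : 0 ≤ δ1) (hε0 : 0 ≤ ε) (hε1 : ε ≤ 1)
    (hreg1 : ((Bohr Γ (ρ1 + δ1)).card : ℝ) ≤ (1 + ε) * (Bohr Γ ρ1).card)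
    (A1 : Finset G) (hA1A : A1 ⊆ A) (hA1 : A1 ⊆ Bohr Γ ρ1)
    (ha : (A1.card : ℝ) = a * (Bohr Γ ρ1).card) (ha0 : 0 < a) (ha1 : a ≤ 1) (hεa : 300 * ε ≤ a)
    (hM : 4 ≤ a ^ 2 * (Bohr Γ ρ1).card)
    (C : Finset G) (hCA : C ⊆ A) (hC2 : C ⊆ Bohr Γ ρ2) (p : ℕ) (hp : Even p) (hp1 : 5 ≤ p)
    (hC : (1 / 2) ^ p * (2 * (Bohr Γ ρ2).card) ≤ (C.card : ℝ)) (hCne : C.Nonempty)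
    (hρ2 : 2 * ρ2 ≤ δ1) (hρ3 : 4 * ρ3 ≤ δ1) (hρ30 : 0 ≤ ρ3)
    (hreg2 : ((Bohr (dil half Γ) (ρ2 + 2 * ρ3)).card : ℝ) ≤ 2 * (Bohr Γ ρ2).card) :
    ∃ A' ⊆ Bohr (dil half Γ) ρ3,
      ((Bohr (dil half Γ) ρ3).card : ℝ) ^ 2 * (a ^ 2 / 2) ^ (20 * p) ≤ 2 * (A'.card : ℝ) ^ 2 ∧
      100 * ∑ b ∈ A', ∑ b' ∈ A', lowW A1 (a ^ 2 * (Bohr Γ ρ1).card) (b - b') ≤ (A'.card : ℝ) ^ 2 := by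
  set B1 := Bohr Γ ρ1 with hB1
  set E := Bohr (dil half Γ) ρ3 with hE
  set M : ℝ := a ^ 2 * B1.card with hMdef
  set f := bal A1 B1 a with hf
  have hM0 : 0 < M := by linarith
  have hB1c : (0 : ℝ) < B1.card := by
    by_contra hcon
    have : (B1.card : ℝ) = 0 := le_antisymm (not_lt.1 hcon) (by positivity)
    rw [hMdef, this] at hM0; simp at hM0
  have herr : 3 * a * ε * B1.card ≤ M / 100 := by
    rw [hMdef]
    have : a * (300 * ε) * B1.card ≤ a * a * B1.card := by gcongr
    nlinarith
  have hE0 : (0 : G) ∈ E := zero_mem_Bohr hρ30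
  have hEc : (0 : ℝ) < E.card := by exact_mod_cast (card_pos.2 ⟨0, hE0⟩)
  -- large values of the convolution on twice `C`
  have hconv : ∀ c ∈ C, M / 2 ≤ |conv f (c + c)| := by
    intro c hc
    have h1 := bal_conv Γ ρ1 δ1 ε a hreg1 hδ1 A1 hA1 ha ha0.le ha1 hε0 (c + c) (by
      refine Bohr_mono hρ2 ?_
      rw [two_mul]
      exact add_mem_Bohr (hC2 hc) (hC2 hc))
    have h2 := conv_free A A1 hA hA1A half hh c (hCA hc)
    rw [← hB1, ← hf, ← hMdef] at h1
    rw [abs_le] at h1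
    rw [le_abs]
    right
    linarith [h1.2]
  have hCsum : (C.card : ℝ) * (M / 2) ^ p ≤ ∑ c ∈ C, conv f (c + c) ^ p := by
    rw [← nsmul_eq_mul, ← sum_const]
    refine sum_le_sum fun c hc => ?_
    rw [← hp.pow_abs (conv f (c + c))]
    exact pow_le_pow_left₀ (by positivity) (hconv c hc) _
  set Z := Bohr (dil half Γ) (ρ2 + 2 * ρ3) with hZ
  have hdb : ∀ b ∈ E, ∀ b' ∈ E, ∑ c ∈ C, conv f (c + c) ^ p ≤ ∑ z ∈ Z, conv f (z + b - b') ^ p := by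
    intro b hb b' hb'
    have e : ∑ c ∈ C, conv f (c + c) ^ p =
        ∑ z ∈ C.image (fun c => c + c - b + b'), conv f (z + b - b') ^ p := by
      rw [sum_image]
      · refine sum_congr rfl fun c _ => ?_
        congr 2; abel
      · intro c _ c' _ h
        have h2 : ∀ w : G, half (w + w) = w := fun w => by rw [map_add]; exact hh w
        have h3 : c + c = c' + c' := by simpa using h
        rw [← h2 c, h3, h2]
    rw [e]
    refine sum_le_sum_of_subset_of_nonneg ?_ fun _ _ _ => hp.pow_nonneg _
    intro z hz
    obtain ⟨c, hc, rfl⟩ := mem_image.1 hz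
    have hcc : c + c ∈ Bohr (dil half Γ) ρ2 := by
      rw [mem_Bohr_dil, map_add, hh]; exact hC2 hc
    have := add_mem_Bohr (sub_mem_Bohr hcc hb) hb'
    rw [hZ, show ρ2 + 2 * ρ3 = ρ2 + ρ3 + ρ3 by ring]
    exact this
  have hZne : Z.Nonempty := by
    obtain ⟨c, hc⟩ := hCne
    have hcc : c + c ∈ Bohr (dil half Γ) ρ2 := by
      rw [mem_Bohr_dil, map_add, hh]; exact hC2 hc
    exact ⟨c + c, Bohr_mono (by linarith) hcc⟩
  have hZc : (0 : ℝ) < Z.card := by exact_mod_cast hZne.card_pos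
  obtain ⟨z, hzZ, hz⟩ := exists_le_of_sum_le hZne (f := fun _ => (E.card : ℝ) ^ 2 * (M / 4) ^ p)
    (g := fun z => ∑ b ∈ E, ∑ b' ∈ E, conv f (z + b - b') ^ p) (by
      rw [sum_const, nsmul_eq_mul]
      have h1 : ∑ z ∈ Z, ∑ b ∈ E, ∑ b' ∈ E, conv f (z + b - b') ^ p =
          ∑ b ∈ E, ∑ b' ∈ E, ∑ z ∈ Z, conv f (z + b - b') ^ p := by
        rw [sum_comm]
        exact sum_congr rfl fun b _ => sum_comm
      rw [h1]
      refine le_trans ?_ (sum_le_sum fun b hb => sum_le_sum fun b' hb' => hdb b hb b' hb')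
      simp only [sum_const, nsmul_eq_mul]
      have h2 : (M / 4) ^ p = (1 / 2) ^ p * (M / 2) ^ p := by
        rw [← mul_pow]; congr 1; ring
      have h3 : (Z.card : ℝ) * (M / 4) ^ p ≤ C.card * (M / 2) ^ p := by
        rw [h2, ← mul_assoc]
        refine mul_le_mul_of_nonneg_right ?_ (by positivity)
        refine le_trans ?_ hC
        rw [mul_comm]
        refine mul_le_mul_of_nonneg_left hreg2 (by positivity)
      have h4 := h3.trans hCsum
      have h5 : (0 : ℝ) ≤ E.card * E.card := by positivity
      nlinarith)
  have hcm := conv_moment_le f E (fun x hx => neg_mem_Bohr hx) p z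
  have hmom : (E.card : ℝ) ^ 2 * (M / 4) ^ p ≤ ∑ b ∈ E, ∑ b' ∈ E, corr f (b - b') ^ p := hz.trans hcm
  -- unbalancing
  have hcard : (((E ×ˢ E).card : ℕ) : ℝ) = (E.card : ℝ) ^ 2 := by
    rw [card_product]; push_cast; ring
  have hprod : ∀ (F : G → ℝ), ∑ i ∈ E ×ˢ E, F (i.1 - i.2) = ∑ b ∈ E, ∑ b' ∈ E, F (b - b') :=
    fun F => sum_product (s := E) (t := E) (f := fun i => F (i.1 - i.2))
  have hq : 100 ≤ 20 * p := by omega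
  have hunb := unbalance (E ×ˢ E) (fun i => corr f (i.1 - i.2) / M) p (20 * p) hp (by omega) le_rfl
    (by
      intro k
      rw [hprod (fun x => (corr f x / M) ^ k)]
      simp only [div_pow, ← sum_div]
      exact div_nonneg (moment_nonneg f E k) (by positivity))
    (by
      rw [hprod (fun x => (corr f x / M) ^ p), hcard]
      simp only [div_pow, ← sum_div]
      rw [le_div_iff₀ (by positivity)]
      refine le_trans (le_of_eq ?_) hmom
      simp only [div_pow, one_pow]; ring)
  have hbc : ∀ b ∈ E, ∀ b' ∈ E, b - b' ∈ Bohr Γ δ1 := by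
    intro b hb b' hb'
    have := sub_mem_Bohr (Bohr_dil_sub hh hb) (Bohr_dil_sub hh hb')
    exact Bohr_mono (by linarith) this
  have hpert := moment_perturb (E ×ˢ E) (fun i => corr f (i.1 - i.2) / M)
    (fun i => corr (ind A1) (i.1 - i.2) / M) (20 * p) hq
    (fun i _ => div_nonneg (corr_ind_nonneg _ _) hM0.le)
    (by
      intro i hi
      rw [mem_product] at hi
      have h1 := bal_corr Γ ρ1 δ1 ε a hreg1 hδ1 A1 hA1 ha ha0.le ha1 hε0 _ (hbc _ hi.1 _ hi.2)
      rw [← hB1, ← hf, ← hMdef] at h1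
      have h2 := corr_ind_nonneg A1 (i.1 - i.2)
      have e : 1 + corr f (i.1 - i.2) / M = (M + corr f (i.1 - i.2)) / M := by field_simp
      rw [e, abs_div, abs_of_pos hM0, div_add' _ _ _ hM0.ne', div_le_div_iff_of_pos_right hM0]
      rw [abs_le] at h1 ⊢
      constructor <;> linarith [h1.1, h1.2])
    hunb
  rw [hprod (fun x => (corr (ind A1) x / M) ^ (20 * p)), hcard] at hpert
  simp only [div_pow _ M, ← sum_div] at hpert
  rw [le_div_iff₀ (by positivity)] at hpert
  -- sifting
  set Y := Bohr Γ (ρ1 + δ1) with hY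
  have hYB : (B1.card : ℝ) ≤ Y.card := by
    exact_mod_cast card_le_card (Bohr_mono (Γ := Γ) (show ρ1 ≤ ρ1 + δ1 by linarith))
  have hYc : (0 : ℝ) < Y.card := by linarith
  obtain ⟨A', hA', hs1, hs2⟩ := sift A1 E Y (20 * p) M hM0 hq ⟨0, hE0⟩ (by
      intro x hx b hb
      have := sub_mem_Bohr (hA1 hx) (Bohr_dil_sub hh hb)
      exact Bohr_mono (by linarith) this) hYc (lowW A1 M)
    (fun x => by unfold lowW; split_ifs <;> norm_num)
    (by
      intro x
      unfold lowW
      split_ifs with h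
      · rw [one_mul]; exact pow_le_pow_left₀ (corr_ind_nonneg _ _) h _
      · rw [zero_mul]; positivity)
    (by rw [← mul_assoc]; exact hpert)
  refine ⟨A', hA', le_trans ?_ hs1, hs2⟩
  refine mul_le_mul_of_nonneg_left (pow_le_pow_left₀ (by positivity) ?_ _) (by positivity)
  rw [div_le_div_iff₀ (by norm_num) hYc, hMdef]
  have : (Y.card : ℝ) ≤ 2 * B1.card := by
    refine hreg1.trans (mul_le_mul_of_nonneg_right (by linarith) hB1c.le)
  have h2 := mul_le_mul_of_nonneg_left this (sq_nonneg a)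
  linarith

end StepSift
end Roth

namespace Roth
open Finset
set_option linter.unusedSectionVars false

section StepStruct
variable {G : Type*} [AddCommGroup G] [Fintype G] [DecidableEq G]

/-- Number of points of `A` in the translate `x + B`. -/
def cnt (A : Finset G) (x : G) (B : Finset G) : ℝ := ∑ b ∈ B, ind A (x + b)

lemma cnt_nonneg (A : Finset G) (x : G) (B : Finset G) : 0 ≤ cnt A x B :=
  sum_nonneg fun _ _ => ind_nonneg _ _

lemma cnt_le (A : Finset G) (x : G) (B : Finset G) : cnt A x B ≤ B.card := by
  unfold cnt
  calc _ ≤ ∑ b ∈ B, (1 : ℝ) := sum_le_sum fun _ _ => ind_le_one _ _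
    _ = _ := by simp

lemma Bohr_sum (Γ : Finset (AddChar G ℂ)) (r : ℝ) (j : ℕ) (s : Fin j → G)
    (hs : ∀ i, s i ∈ Bohr Γ r) : ∑ i, s i ∈ Bohr Γ (j * r) := by
  induction j with
  | zero => simp [zero_mem_Bohr]
  | succ j ih =>
    rw [Fin.sum_univ_castSucc]
    have := add_mem_Bohr (ih _ fun i => hs i.castSucc) (hs (Fin.last j))
    rwa [show ((j + 1 : ℕ) : ℝ) * r = j * r + r by push_cast; ring]

lemma smooth_avg (A1 A2 S T B6 : Finset G) (hA1 : A1.Nonempty) (hA2 : A2.Nonempty) (k : ℕ) (c : ℝ)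
    (hc : ∀ v, cnt S v B6 ≤ c) :
    ∑ s ∈ B6, smooth A1 A2 S T k s ≤ (T.card : ℝ) ^ (2 * k) * c := by
  have hA1c : (0 : ℝ) < A1.card := by exact_mod_cast hA1.card_pos
  have hA2c : (0 : ℝ) < A2.card := by exact_mod_cast hA2.card_pos
  have h1 : ∀ u, ∑ s ∈ B6, shiftAvg A1 A2 (ind S) (u + s) ≤ c := by
    intro u
    unfold shiftAvg avg
    rw [← sum_div, div_le_iff₀ hA1c, sum_comm]
    have h2 : ∀ x ∈ A1, ∑ s ∈ B6, (∑ a ∈ A2, ind S (x + (u + s) - a)) / (A2.card : ℝ) ≤ c := by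
      intro x _
      rw [← sum_div, div_le_iff₀ hA2c, sum_comm]
      have h3 : ∀ a ∈ A2, ∑ s ∈ B6, ind S (x + (u + s) - a) ≤ c := by
        intro a _
        refine le_trans (le_of_eq ?_) (hc (x + u - a))
        unfold cnt
        refine sum_congr rfl fun s _ => ?_
        congr 1; abel
      refine (sum_le_sum h3).trans (le_of_eq ?_)
      rw [sum_const, nsmul_eq_mul, mul_comm]
    refine (sum_le_sum h2).trans (le_of_eq ?_)
    rw [sum_const, nsmul_eq_mul, mul_comm]
  unfold smooth
  rw [sum_comm]
  have h4 : ∀ t ∈ Fintype.piFinset (fun _ : Fin k => T), ∑ s ∈ B6, ∑ t' ∈ Fintype.piFinset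
      (fun _ : Fin k => T), shiftAvg A1 A2 (ind S) (∑ i, (t i - t' i) + s) ≤ (T.card : ℝ) ^ k * c := by
    intro t _
    rw [sum_comm]
    refine (sum_le_sum fun t' _ => h1 _).trans (le_of_eq ?_)
    rw [sum_const, nsmul_eq_mul, Fintype.card_piFinset_const]; push_cast; rfl
  refine (sum_le_sum h4).trans (le_of_eq ?_)
  rw [sum_const, nsmul_eq_mul, Fintype.card_piFinset_const, two_mul, pow_add]; push_cast; ring

lemma corr_max (A1 B6 : Finset G) (v : G) :
    ∃ z, ∑ s ∈ B6, corr (ind A1) (v + s) ≤ A1.card * cnt A1 z B6 := by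
  obtain ⟨z, -, hz⟩ := exists_max_image (univ : Finset G) (fun z => cnt A1 z B6) ⟨0, mem_univ _⟩
  refine ⟨z, ?_⟩
  unfold corr
  simp only [sum_ind_mul]
  rw [sum_comm]
  have h3 : ∀ a ∈ A1, ∑ s ∈ B6, ind A1 (a + (v + s)) ≤ cnt A1 z B6 := by
    intro a _
    refine le_trans (le_of_eq ?_) (hz (a + v) (mem_univ _))
    unfold cnt
    refine sum_congr rfl fun s _ => ?_
    congr 1; abel
  refine (sum_le_sum h3).trans (le_of_eq ?_)
  rw [sum_const, nsmul_eq_mul]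

lemma smooth_ge (A1 A2 S T : Finset G) (k : ℕ) (c : ℝ)
    (h : ∀ t t' : Fin k → G, (∀ i, t i ∈ T) → (∀ i, t' i ∈ T) →
      c ≤ shiftAvg A1 A2 (ind S) (∑ i, (t i - t' i))) :
    (T.card : ℝ) ^ (2 * k) * c ≤ smooth A1 A2 S T k 0 := by
  unfold smooth
  have e : (T.card : ℝ) ^ (2 * k) * c = ∑ t ∈ Fintype.piFinset (fun _ : Fin k => T),
      ∑ t' ∈ Fintype.piFinset (fun _ : Fin k => T), c := by
    simp only [sum_const, nsmul_eq_mul, Fintype.card_piFinset_const, two_mul, pow_add]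
    push_cast; ring
  rw [e]
  refine sum_le_sum fun t ht => sum_le_sum fun t' ht' => ?_
  rw [add_zero]
  rw [Fintype.mem_piFinset] at ht ht'
  exact h t t' ht ht'

end StepStruct
end Roth

namespace Roth
open Finset
set_option linter.unusedSectionVars false

section StepStruct
variable {G : Type*} [AddCommGroup G] [Fintype G] [DecidableEq G]

lemma step_local (Δ : Finset (AddChar G ℂ)) (ρ3 ρ4 σ M : ℝ) (A1 A' : Finset G)
    (hρ4 : 0 ≤ ρ4) (hσ : 0 < σ) (hne : A'.Nonempty)
    (hA' : A' ⊆ Bohr Δ ρ3) (hσA : σ * (Bohr Δ ρ3).card ≤ A'.card)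
    (hbad : 100 * ∑ b ∈ A', ∑ b' ∈ A', lowW A1 M (b - b') ≤ (A'.card : ℝ) ^ 2)
    (hr : ((Bohr Δ (ρ3 + ρ4)).card : ℝ) ≤ 2 * (Bohr Δ ρ3).card) :
    ∃ (y : G) (A2 S : Finset G), A2.Nonempty ∧ (∀ a ∈ A2, a - y ∈ Bohr Δ ρ4) ∧
      σ / 4 * (Bohr Δ ρ4).card ≤ A2.card ∧ (S.card : ℝ) ≤ 2 * (Bohr Δ ρ3).card ∧
      (∀ x ∈ S, 11 / 10 * M ≤ corr (ind A1) x) ∧ 49 / 50 ≤ shiftAvg A' A2 (ind S) 0 := by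
  obtain ⟨y, A2, hA2, hy, hA2c, hA2ne, hbad2⟩ := localise A' (Bohr Δ (ρ3 + ρ4)) (Bohr Δ ρ4)
    (lowW A1 M) (fun x => by unfold lowW; split_ifs <;> norm_num) (σ / 2) (by linarith)
    (fun a ha b hb => sub_mem_Bohr (hA' ha) hb) hne ⟨0, zero_mem_Bohr hρ4⟩ (by nlinarith) hbad
  set S := ((Bohr Δ (ρ3 + ρ4)).image (fun u => u - y)).filter
    (fun x => 11 / 10 * M < corr (ind A1) x) with hS
  refine ⟨y, A2, S, hA2ne, hy, by linarith, ?_, ?_, ?_⟩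
  · refine le_trans ?_ hr
    exact_mod_cast (card_filter_le _ _).trans card_image_le
  · intro x hx
    exact (mem_filter.1 hx).2.le
  · have hA'c : (0 : ℝ) < A'.card := by exact_mod_cast hne.card_pos
    have hA2c' : (0 : ℝ) < A2.card := by exact_mod_cast hA2ne.card_pos
    have e : ∀ x ∈ A', ∀ a ∈ A2, ind S (x + 0 - a) = 1 - lowW A1 M (x - a) := by
      intro x hx a ha
      rw [add_zero]
      have hm : x - a ∈ (Bohr Δ (ρ3 + ρ4)).image (fun u => u - y) := by
        rw [mem_image]
        exact ⟨x - (a - y), sub_mem_Bohr (hA' hx) (hy a ha), by abel⟩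
      unfold ind lowW
      by_cases h : corr (ind A1) (x - a) ≤ 11 / 10 * M
      · rw [if_neg, if_pos h]
        · ring
        · rw [hS, mem_filter, not_and, not_lt]; exact fun _ => h
      · rw [if_pos, if_neg h]
        · ring
        · rw [hS, mem_filter]; exact ⟨hm, not_le.1 h⟩
    unfold shiftAvg avg
    rw [← sum_div, div_div, le_div_iff₀ (by positivity)]
    rw [sum_congr rfl fun x hx => sum_congr rfl fun a ha => e x hx a ha]
    simp only [sum_sub_distrib, sum_const, nsmul_eq_mul, mul_one]
    nlinarith

lemma step_cs (Δ : Finset (AddChar G ℂ)) (ρ3 ρ4 ρ5 σ : ℝ) (A' A2 S : Finset G) (y : G)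
    (k m : ℕ) (hk : 1 ≤ k) (hm : 1 ≤ m)
    (hρ3 : 0 ≤ ρ3) (hρ4 : 0 ≤ ρ4) (hρ5 : 0 ≤ ρ5) (hσ : 0 < σ) (hne : A'.Nonempty)
    (hA' : A' ⊆ Bohr Δ ρ3) (hσA : σ * (Bohr Δ ρ3).card ≤ A'.card) (hA2ne : A2.Nonempty)
    (hA2 : ∀ a ∈ A2, a - y ∈ Bohr Δ ρ4) (hA2c : σ / 4 * (Bohr Δ ρ4).card ≤ A2.card)
    (hsh : 49 / 50 ≤ shiftAvg A' A2 (ind S) 0)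
    (hr4 : ((Bohr Δ (ρ4 + ρ5)).card : ℝ) ≤ 2 * (Bohr Δ ρ4).card)
    (hr3 : ((Bohr Δ (ρ3 + k * (2 * ρ5))).card : ℝ) ≤ 2 * (Bohr Δ ρ3).card)
    (hmexp : 4 * Real.exp (-(m * (1 / (400 * k : ℝ)) ^ 2 / 2)) ≤ σ / (400 * k)) :
    ∃ T ⊆ Bohr Δ ρ5, T.Nonempty ∧ 1 / 2 * (σ / 8) ^ m * (Bohr Δ ρ5).card ≤ T.card ∧
      (T.card : ℝ) ^ (2 * k) * (96 / 100) ≤ smooth A' A2 S T k 0 := by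
  have hkR : (0 : ℝ) < k := by exact_mod_cast hk
  set D := Bohr Δ (ρ3 + k * (2 * ρ5)) with hDdef
  set W := (Bohr Δ (ρ4 + ρ5)).image (fun u => u + y) with hW
  have hWne : W.Nonempty := ⟨0 + y, mem_image_of_mem _ (zero_mem_Bohr (by linarith))⟩
  have hWc : (W.card : ℝ) ≤ 2 * (Bohr Δ ρ4).card :=
    le_trans (by exact_mod_cast card_image_le) hr4
  have hWpos : (0 : ℝ) < W.card := by exact_mod_cast hWne.card_pos
  have hB5 : (0 : ℝ) < (Bohr Δ ρ5).card := by exact_mod_cast card_pos.2 ⟨0, zero_mem_Bohr hρ5⟩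
  have hB3 : (0 : ℝ) < (Bohr Δ ρ3).card := by exact_mod_cast card_pos.2 ⟨0, zero_mem_Bohr hρ3⟩
  obtain ⟨T, hTB, hTc, bad, H, hT⟩ := croot_sisask (ind S) (ind_nonneg S) (ind_le_one S) A2 D
    (Bohr Δ ρ5) W hA2ne ⟨0, zero_mem_Bohr (by positivity)⟩ (by
      intro a ha t ht
      rw [hW, mem_image]
      exact ⟨a - y + t, add_mem_Bohr (hA2 a ha) ht, by abel⟩) m hm hWne (1 / (400 * k))
    (σ / (400 * k)) (by positivity) (by positivity) hmexp
  have hTc' : 1 / 2 * (σ / 8) ^ m * (Bohr Δ ρ5).card ≤ T.card := by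
    have h1 : σ / 8 * W.card ≤ A2.card := by nlinarith
    have h2 : (σ / 8) ^ m * (W.card : ℝ) ^ m ≤ (A2.card : ℝ) ^ m := by
      rw [← mul_pow]
      exact pow_le_pow_left₀ (by positivity) h1 m
    have h3 : (W.card : ℝ) ^ m * (1 / 2 * (σ / 8) ^ m * (Bohr Δ ρ5).card) ≤ (W.card : ℝ) ^ m * T.card := by
      have h4 := mul_le_mul_of_nonneg_right h2 hB5.le
      linarith
    exact le_of_mul_le_mul_left h3 (by positivity)
  have hTne : T.Nonempty := by
    rw [← card_pos]
    have : (0 : ℝ) < T.card := lt_of_lt_of_le (by positivity) hTc'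
    exact_mod_cast this
  refine ⟨T, hTB, hTne, hTc', ?_⟩
  refine smooth_ge A' A2 S T k _ ?_
  intro t t' ht ht'
  have h := shiftAvg_iter (ind S) (ind_nonneg S) (ind_le_one S) A' A2 D T hne hA2ne (1 / (400 * k))
    (σ / (400 * k)) (by positivity) bad H hT k (by
      intro j hj t t' ht ht' x hx
      have h1 := Bohr_sum Δ (2 * ρ5) j (fun i => t i - t' i) (fun i => by
        rw [two_mul]; exact sub_mem_Bohr (hTB (ht i)) (hTB (ht' i)))
      refine Bohr_mono ?_ (add_mem_Bohr (hA' hx) h1)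
      have : (j : ℝ) ≤ k := by exact_mod_cast hj
      gcongr) k le_rfl t t' ht ht'
  have hA'c : (0 : ℝ) < A'.card := by exact_mod_cast hne.card_pos
  have hb : (k : ℝ) * (2 * (1 / (400 * k)) + 2 * (σ / (400 * k)) * D.card / A'.card) ≤ 2 / 100 := by
    have h2 : σ * D.card / A'.card ≤ 2 := by
      rw [div_le_iff₀ hA'c]; nlinarith
    have e : (k : ℝ) * (2 * (1 / (400 * k)) + 2 * (σ / (400 * k)) * D.card / A'.card) =
        1 / 200 + (σ * D.card / A'.card) / 200 := by
      field_simp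
      norm_num
    rw [e]; linarith
  linarith

set_option maxHeartbeats 1000000 in
lemma step_struct (Δ : Finset (AddChar G ℂ)) (ρ3 ρ4 ρ5 ρ7 ρ8 σ M ε7 : ℝ) (A1 A' : Finset G)
    (k m M0 : ℕ) (hk : 1 ≤ k) (hm : 1 ≤ m) (hM : 0 ≤ M)
    (hρ3 : 0 ≤ ρ3) (hρ4 : 0 ≤ ρ4) (hρ5 : 0 ≤ ρ5) (hρ7 : 0 ≤ ρ7) (hρ8 : 0 ≤ ρ8) (hσ : 0 < σ)
    (hσ1 : σ ≤ 1)
    (hA' : A' ⊆ Bohr Δ ρ3) (hσA : σ * (Bohr Δ ρ3).card ≤ A'.card)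
    (hbad : 100 * ∑ b ∈ A', ∑ b' ∈ A', lowW A1 M (b - b') ≤ (A'.card : ℝ) ^ 2)
    (hr : ((Bohr Δ (ρ3 + ρ4)).card : ℝ) ≤ 2 * (Bohr Δ ρ3).card)
    (hr4 : ((Bohr Δ (ρ4 + ρ5)).card : ℝ) ≤ 2 * (Bohr Δ ρ4).card)
    (hr3 : ((Bohr Δ (ρ3 + k * (2 * ρ5))).card : ℝ) ≤ 2 * (Bohr Δ ρ3).card)
    (hr5 : ((Bohr Δ (ρ5 + (2 * (M0 + 1) : ℕ) * ρ7)).card : ℝ) ≤ 2 * (Bohr Δ ρ5).card)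
    (hr7 : ((Bohr Δ (ρ7 + ρ8)).card : ℝ) ≤ (1 + ε7) * (Bohr Δ ρ7).card)
    (hε7 : 0 ≤ ε7) (hε7σ : 4 * ε7 ≤ σ / 400)
    (hmexp : 4 * Real.exp (-(m * (1 / (400 * k : ℝ)) ^ 2 / 2)) ≤ σ / (400 * k))
    (hkσ : 2 * (1 / 4) ^ k ≤ σ / 200)
    (hM0 : 4 < 1 / 2 * (σ / 8) ^ m * Real.exp (((M0 + 1 : ℕ) : ℝ) / 8)) :
    ∃ Λ : Finset (AddChar G ℂ), Λ.card ≤ M0 ∧ ∀ ρ6 : ℝ, 0 ≤ ρ6 → ρ6 ≤ ρ8 →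
      (M0 + 1) * ρ6 ≤ σ / 400 → ∃ z, 209 / 200 * M * (Bohr (Δ ∪ Λ) ρ6).card ≤
        A1.card * cnt A1 z (Bohr (Δ ∪ Λ) ρ6) := by
  have hB3 : (0 : ℝ) < (Bohr Δ ρ3).card := by exact_mod_cast card_pos.2 ⟨0, zero_mem_Bohr hρ3⟩
  have hA'c : (0 : ℝ) < A'.card := lt_of_lt_of_le (by positivity) hσA
  have hne : A'.Nonempty := by rw [← card_pos]; exact_mod_cast hA'c
  obtain ⟨y, A2, S, hA2ne, hy, hA2c, hSc, hSM, hsh⟩ := step_local Δ ρ3 ρ4 σ M A1 A' hρ4 hσ hne hA' hσA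
    hbad hr
  obtain ⟨T, hTB, hTne, hTc, hsm⟩ := step_cs Δ ρ3 ρ4 ρ5 σ A' A2 S y k m hk hm hρ3 hρ4 hρ5 hσ hne hA' hσA
    hA2ne hy hA2c hsh hr4 hr3 hmexp
  have hTpos : (0 : ℝ) < T.card := by exact_mod_cast hTne.card_pos
  obtain ⟨Λ, hΛ, hspec⟩ := chang_spec T (Bohr Δ ρ5) (Bohr Δ (ρ5 + (2 * (M0 + 1) : ℕ) * ρ7)) (Bohr Δ ρ7) M0
    (1 / 2 * (σ / 8) ^ m) hTne hTB ⟨0, zero_mem_Bohr hρ7⟩ hTc hM0 (by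
      intro x hx s hs
      exact add_mem_Bohr hx (Bohr_sum Δ ρ7 _ s hs)) hr5
  refine ⟨Λ, hΛ, ?_⟩
  intro ρ6 hρ6 hρ68 hρ6σ
  set B6 := Bohr (Δ ∪ Λ) ρ6 with hB6
  have hs : ∀ s ∈ B6, (T.card : ℝ) ^ (2 * k) * (95 / 100) ≤ smooth A' A2 S T k s := by
    intro s hs
    have hsΔ : s ∈ Bohr Δ ρ8 := by
      rw [hB6, mem_Bohr] at hs
      rw [mem_Bohr]
      intro γ hγ
      exact (hs γ (mem_union_left _ hγ)).trans hρ68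
    have hsΛ : ∀ l ∈ Λ, ‖l s - 1‖ ≤ ρ6 := by
      rw [hB6, mem_Bohr] at hs
      exact fun l hl => hs l (mem_union_right _ hl)
    have hsp := hspec s ρ6 ε7 hε7 hsΛ hρ6 (fun χ => ft_shift Δ ρ7 ρ8 ε7 hr7 hρ8 χ s hsΔ)
    have h1 := smooth_le A' A2 S T hne hA2ne k s (σ / 200) (by
      intro ψ
      by_cases hψ : (T.card : ℝ) / 2 ≤ ‖ft T ψ‖
      · have h2 := hsp ψ hψ
        have h3 := ft_norm_le T ψ
        have h4 : ‖ψ s - 1‖ ≤ σ / 200 := by linarith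
        gcongr
      · have h2 : ‖ψ s - 1‖ ≤ 2 := by
          refine (norm_sub_le _ _).trans ?_
          rw [norm_char]; norm_num
        have h3 : ‖ft T ψ‖ ^ (2 * k) ≤ ((T.card : ℝ) / 2) ^ (2 * k) :=
          pow_le_pow_left₀ (norm_nonneg _) (not_le.1 hψ).le _
        calc _ ≤ 2 * ((T.card : ℝ) / 2) ^ (2 * k) := by gcongr
          _ = 2 * (1 / 4) ^ k * (T.card : ℝ) ^ (2 * k) := by
              rw [div_pow, pow_mul (2 : ℝ) 2 k, one_div, inv_pow]; norm_num; ring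
          _ ≤ _ := by gcongr)
    have h5 : σ / 200 * (T.card : ℝ) ^ (2 * k) * ((S.card + A'.card) / (2 * A'.card)) ≤
        (T.card : ℝ) ^ (2 * k) * (1 / 100) := by
      have h6 : σ * ((S.card + A'.card) / (2 * A'.card)) ≤ 2 := by
        rw [← mul_div_assoc, div_le_iff₀ (by positivity)]
        nlinarith
      have h7 : (0 : ℝ) ≤ (T.card : ℝ) ^ (2 * k) := by positivity
      calc _ = (T.card : ℝ) ^ (2 * k) * (σ * ((S.card + A'.card) / (2 * A'.card)) / 200) := by ring
        _ ≤ _ := by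
          refine mul_le_mul_of_nonneg_left ?_ h7
          linarith
    have h8 := (abs_le.1 h1).1
    linarith
  obtain ⟨v, -, hv⟩ := exists_max_image (univ : Finset G) (fun v => cnt S v B6) ⟨0, mem_univ _⟩
  have h1 := smooth_avg A' A2 S T B6 hne hA2ne k (cnt S v B6) (fun w => hv w (mem_univ _))
  have h2 := sum_le_sum hs
  rw [sum_const, nsmul_eq_mul] at h2
  have h3 : (B6.card : ℝ) * (95 / 100) ≤ cnt S v B6 := by
    have h4 : (T.card : ℝ) ^ (2 * k) * (B6.card * (95 / 100)) ≤ (T.card : ℝ) ^ (2 * k) * cnt S v B6 := by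
      linarith
    exact le_of_mul_le_mul_left h4 (by positivity)
  obtain ⟨z, hz⟩ := corr_max A1 B6 v
  refine ⟨z, le_trans ?_ hz⟩
  have h5 : 11 / 10 * M * cnt S v B6 ≤ ∑ s ∈ B6, corr (ind A1) (v + s) := by
    unfold cnt
    rw [mul_sum]
    refine sum_le_sum fun s _ => ?_
    by_cases h : v + s ∈ S
    · have := hSM _ h
      rw [ind, if_pos h, mul_one]; exact this
    · rw [ind, if_neg h, mul_zero]; exact corr_ind_nonneg _ _
  nlinarith

end StepStruct
end Roth

namespace Roth
open Finset
set_option linter.unusedSectionVars false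

section FullStep
variable {G : Type*} [AddCommGroup G] [Fintype G] [DecidableEq G]

/-- Regularity of the Bohr set `Bohr Γ ρ`, with parameters `η`, `ε`. -/
def Reg (η ε : ℝ) (Γ : Finset (AddChar G ℂ)) (ρ : ℝ) : Prop :=
  ((Bohr Γ (ρ + η * ρ)).card : ℝ) ≤ (1 + ε) * (Bohr Γ ρ).card

lemma Reg.two {η ε ρ δ : ℝ} {Γ : Finset (AddChar G ℂ)} (h : Reg η ε Γ ρ) (hδ : δ ≤ η * ρ)
    (hε : ε ≤ 1) : ((Bohr Γ (ρ + δ)).card : ℝ) ≤ 2 * (Bohr Γ ρ).card := by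
  have h1 : ((Bohr Γ (ρ + δ)).card : ℝ) ≤ (Bohr Γ (ρ + η * ρ)).card := by
    exact_mod_cast card_le_card (Bohr_mono (by linarith))
  have h2 : (0 : ℝ) ≤ (Bohr Γ ρ).card := by positivity
  unfold Reg at h
  nlinarith

lemma Reg_exists (d K : ℕ) (hK : 1 ≤ K) (Γ : Finset (AddChar G ℂ)) (hΓ : Γ.card ≤ d) (ρ0 : ℝ)
    (hρ0 : 0 < ρ0) :
    ∃ ρ, ρ0 / 2 ≤ ρ ∧ ρ ≤ ρ0 ∧ Reg (1 / (14 * (d + 1) * K)) (1 / (K : ℝ)) Γ ρ := by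
  obtain ⟨ρ, h1, h2, h3⟩ := Bohr_regular Γ hρ0 d K hΓ hK
  refine ⟨ρ, h1, h2, le_trans ?_ h3⟩
  have hKR : (1 : ℝ) ≤ K := by exact_mod_cast hK
  have : 1 / (14 * ((d : ℝ) + 1) * K) * ρ ≤ ρ0 / (14 * (d + 1) * K) := by
    rw [one_div_mul_eq_div]
    gcongr
  exact Nat.cast_le.2 (card_le_card (Bohr_mono (by linarith)))

lemma avg_step (A : Finset G) (Γ : Finset (AddChar G ℂ)) (ρ δ ε : ℝ) (hδ : 0 ≤ δ)
    (h : ((Bohr Γ (ρ + δ)).card : ℝ) ≤ (1 + ε) * (Bohr Γ ρ).card) (B' : Finset G)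
    (hB' : B' ⊆ Bohr Γ δ) (x0 : G) :
    B'.card * (cnt A x0 (Bohr Γ ρ) - ε * (Bohr Γ ρ).card) ≤
      ∑ x ∈ Bohr Γ ρ, cnt A (x0 + x) B' := by
  set B := Bohr Γ ρ with hB
  have key : ∀ y ∈ B', cnt A x0 B - ε * B.card ≤ ∑ x ∈ B, ind A (x0 + x + y) := by
    intro y hy
    have h1 := card_shift_le h hδ (neg_mem_Bohr (hB' hy))
    rw [← hB] at h1
    have h2 : ∑ u ∈ B.filter (fun u => u + -y ∈ B), ind A (x0 + u) ≤ ∑ x ∈ B, ind A (x0 + x + y) := by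
      have e : ∑ u ∈ B.filter (fun u => u + -y ∈ B), ind A (x0 + u) =
          ∑ x ∈ (B.filter (fun u => u + -y ∈ B)).image (fun u => u + -y), ind A (x0 + x + y) := by
        rw [sum_image (fun a _ b _ hab => by simpa using hab)]
        refine sum_congr rfl fun u _ => ?_
        congr 1; abel
      rw [e]
      refine sum_le_sum_of_subset_of_nonneg ?_ fun _ _ _ => ind_nonneg _ _
      intro x hx
      obtain ⟨u, hu, rfl⟩ := mem_image.1 hx
      exact (mem_filter.1 hu).2
    have h3 : cnt A x0 B = ∑ u ∈ B.filter (fun u => u + -y ∈ B), ind A (x0 + u) +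
        ∑ u ∈ B.filter (fun u => ¬ (u + -y ∈ B)), ind A (x0 + u) :=
      (sum_filter_add_sum_filter_not _ _ _).symm
    have h4 : ∑ u ∈ B.filter (fun u => ¬ (u + -y ∈ B)), ind A (x0 + u) ≤
        (B.filter (fun u => ¬ (u + -y ∈ B))).card := cnt_le A x0 _
    linarith
  unfold cnt
  rw [sum_comm]
  have := sum_le_sum key
  rw [sum_const, nsmul_eq_mul] at this
  exact this

lemma step_zero (A : Finset G) (Γ : Finset (AddChar G ℂ)) (ρ δ ε α : ℝ) (hδ : 0 ≤ δ) (hρ : 0 ≤ ρ)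
    (h : ((Bohr Γ (ρ + δ)).card : ℝ) ≤ (1 + ε) * (Bohr Γ ρ).card) (B1 B2 : Finset G)
    (hB1 : B1 ⊆ Bohr Γ δ) (hB2 : B2 ⊆ Bohr Γ δ) (hn1 : B1.Nonempty) (hn2 : B2.Nonempty)
    (x0 : G) (hα : α * (Bohr Γ ρ).card ≤ cnt A x0 (Bohr Γ ρ)) (hε : ε ≤ α / 100) :
    ∃ x, 101 / 100 * α * B1.card ≤ cnt A x B1 ∨ 101 / 100 * α * B2.card ≤ cnt A x B2 ∨
      (97 / 100 * α * B1.card ≤ cnt A x B1 ∧ 97 / 100 * α * B2.card ≤ cnt A x B2) := by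
  have h1 := avg_step A Γ ρ δ ε hδ h B1 hB1 x0
  have h2 := avg_step A Γ ρ δ ε hδ h B2 hB2 x0
  set B := Bohr Γ ρ with hB
  have hBc : (0 : ℝ) < B.card := by exact_mod_cast Bohr_pos hρ
  have c1 : (0 : ℝ) < B1.card := by exact_mod_cast hn1.card_pos
  have c2 : (0 : ℝ) < B2.card := by exact_mod_cast hn2.card_pos
  have h3 : B.card • (198 / 100 * α) ≤ ∑ x ∈ B, (cnt A (x0 + x) B1 / B1.card + cnt A (x0 + x) B2 / B2.card) := by
    rw [sum_add_distrib, ← sum_div, ← sum_div, nsmul_eq_mul]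
    have e1 : B.card * (99 / 100 * α) ≤ (∑ x ∈ B, cnt A (x0 + x) B1) / B1.card := by
      rw [le_div_iff₀ c1]
      refine le_trans ?_ h1
      rw [mul_comm]
      refine mul_le_mul_of_nonneg_left ?_ (Nat.cast_nonneg _)
      nlinarith
    have e2 : B.card * (99 / 100 * α) ≤ (∑ x ∈ B, cnt A (x0 + x) B2) / B2.card := by
      rw [le_div_iff₀ c2]
      refine le_trans ?_ h2
      rw [mul_comm]
      refine mul_le_mul_of_nonneg_left ?_ (Nat.cast_nonneg _)
      nlinarith
    linarith
  obtain ⟨x, hx, hle⟩ := exists_le_of_sum_le (s := B) ⟨0, zero_mem_Bohr hρ⟩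
    (f := fun _ => 198 / 100 * α)
    (g := fun x => cnt A (x0 + x) B1 / B1.card + cnt A (x0 + x) B2 / B2.card)
    (by rw [sum_const]; exact h3)
  refine ⟨x0 + x, ?_⟩
  by_contra hcon
  push Not at hcon
  obtain ⟨g1, g2, g3⟩ := hcon
  rw [← div_lt_iff₀ c1] at g1
  rw [← div_lt_iff₀ c2] at g2
  have g4 := g3 (by rw [← le_div_iff₀ c1]; linarith)
  rw [← div_lt_iff₀ c2] at g4
  linarith

lemma sc {c ν η ρ ρ' : ℝ} (h : ρ' ≤ ν * ρ) (hν : c * ν ≤ η) (hρ : 0 ≤ ρ) (hc : 0 ≤ c) :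
    c * ρ' ≤ η * ρ :=
  calc c * ρ' ≤ c * (ν * ρ) := mul_le_mul_of_nonneg_left h hc
    _ = c * ν * ρ := by ring
    _ ≤ _ := mul_le_mul_of_nonneg_right hν hρ

lemma sc1 {ν η ρ ρ' : ℝ} (h : ρ' ≤ ν * ρ) (hν : ν ≤ η) (hρ : 0 ≤ ρ) : ρ' ≤ η * ρ :=
  h.trans (mul_le_mul_of_nonneg_right hν hρ)

lemma sc2 {ν ρ ρ' : ℝ} (h : ρ' ≤ ν * ρ) (hν : ν ≤ 1) (hρ : 0 ≤ ρ) : ρ' ≤ ρ :=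
  h.trans (mul_le_of_le_one_left hρ hν)

/-- All numerical constraints on the parameters of one density increment step. -/
structure Par (n k m M0 : ℕ) (η ν ε σ : ℝ) : Prop where
  hn : 2 ≤ n
  hk : 1 ≤ k
  hm : 1 ≤ m
  hη : 0 < η
  hη1 : η ≤ 1
  hν : 0 < ν
  h4 : 4 * ν ≤ η
  h2k : 2 * k * ν ≤ η
  h2M : 2 * (M0 + 1) * ν ≤ η
  hMσ : (M0 + 1) * ν ≤ σ / 400
  hε : 0 ≤ ε
  hεσ : 4 * ε ≤ σ / 400
  hεn : ε ≤ (1 / 2) ^ n / 1000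
  hσ : 0 < σ
  hσ1 : σ ≤ 1
  hσa : 2 * σ ^ 2 ≤ ((1 / 2) ^ (2 * n + 3)) ^ (80 * n)
  hmexp : 4 * Real.exp (-(m * (1 / (400 * k : ℝ)) ^ 2 / 2)) ≤ σ / (400 * k)
  hkσ : 2 * (1 / 4) ^ k ≤ σ / 200
  hM0 : 4 < 1 / 2 * (σ / 8) ^ m * Real.exp (((M0 + 1 : ℕ) : ℝ) / 8)

set_option maxHeartbeats 1000000 in
lemma step_main (n k m M0 d : ℕ) (η ν ε σ : ℝ) (P : Par n k m M0 η ν ε σ)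
    (hex : ∀ Γ : Finset (AddChar G ℂ), Γ.card ≤ d → ∀ ρ0 : ℝ, 0 < ρ0 →
      ∃ ρ, ρ0 / 2 ≤ ρ ∧ ρ ≤ ρ0 ∧ Reg η ε Γ ρ)
    (A : Finset G) (hA : Free3 A) (half : G →+ G) (hh : ∀ x, half x + half x = x)
    (Γ : Finset (AddChar G ℂ)) (hΓ : Γ.card + M0 ≤ d) (ρ1 ρ2 α : ℝ) (hρ1 : 0 < ρ1) (hρ11 : ρ1 ≤ 1)
    (hρ2 : ρ2 ≤ ν * ρ1) (hρ2' : ν / 2 * ρ1 ≤ ρ2) (R1 : Reg η ε Γ ρ1) (R2 : Reg η ε Γ ρ2)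
    (hα : (1 / 2) ^ n ≤ α) (d1 : 97 / 100 * α * (Bohr Γ ρ1).card ≤ cnt A 0 (Bohr Γ ρ1))
    (d2 : 97 / 100 * α * (Bohr Γ ρ2).card ≤ cnt A 0 (Bohr Γ ρ2)) :
    (Bohr Γ ρ1).card ≤ 2 ^ (2 * n + 4) ∨ ∃ (Γ' : Finset (AddChar G ℂ)) (ρ' : ℝ) (x' : G),
      Γ'.card ≤ Γ.card + M0 ∧ (ν / 2) ^ 6 * ρ1 ≤ ρ' ∧ ρ' ≤ 1 ∧ Reg η ε Γ' ρ' ∧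
      101 / 100 * α * (Bohr Γ' ρ').card ≤ cnt A x' (Bohr Γ' ρ') := by
  have hn := P.hn
  have hν := P.hν
  have hη := P.hη
  have hη1 := P.hη1
  have h4 := P.h4
  have hε := P.hε
  have hεn := P.hεn
  have hσ := P.hσ
  have hν1 : ν ≤ 1 := by linarith
  have hνη : ν ≤ η := by linarith
  have hpn : (0 : ℝ) < (1 / 2) ^ n := by positivity
  have hpn1 : ((1 : ℝ) / 2) ^ n ≤ 1 := pow_le_one₀ (by norm_num) (by norm_num)
  have hε1 : ε ≤ 1 := by linarith
  have hα0 : 0 < α := by linarith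
  have hρ20 : 0 < ρ2 := lt_of_lt_of_le (by positivity) hρ2'
  have hB1c : (0 : ℝ) < (Bohr Γ ρ1).card := by exact_mod_cast Bohr_pos hρ1.le
  have hB2c : (0 : ℝ) < (Bohr Γ ρ2).card := by exact_mod_cast Bohr_pos hρ20.le
  have cardA : ∀ ρ, ∃ X ⊆ A, X ⊆ Bohr Γ ρ ∧ cnt A 0 (Bohr Γ ρ) = (X.card : ℝ) := by
    intro ρ
    refine ⟨(Bohr Γ ρ).filter (fun u => u ∈ A), fun u hu => (mem_filter.1 hu).2, filter_subset _ _, ?_⟩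
    unfold cnt
    rw [sum_ind_card]
    simp only [zero_add]
  obtain ⟨A1, hA1A, hA1B, hA1c⟩ := cardA ρ1
  obtain ⟨C, hCA, hCB, hCc⟩ := cardA ρ2
  rw [hA1c] at d1
  rw [hCc] at d2
  clear cardA hA1c hCc
  obtain ⟨a, ha⟩ : ∃ a : ℝ, a = A1.card / (Bohr Γ ρ1).card := ⟨_, rfl⟩
  have ha' : (A1.card : ℝ) = a * (Bohr Γ ρ1).card := by rw [ha]; field_simp
  have haα : 97 / 100 * α ≤ a := by rw [ha, le_div_iff₀ hB1c]; exact d1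
  have ha0 : 0 < a := by linarith
  have ha1 : a ≤ 1 := by
    rw [ha, div_le_one hB1c]; exact Nat.cast_le.2 (card_le_card hA1B)
  have han : (1 / 2) ^ (n + 1) ≤ a := by rw [pow_succ]; linarith
  have ha2 : (1 / 2) ^ (2 * n + 3) ≤ a ^ 2 / 2 := by
    have := pow_le_pow_left₀ (by positivity) han 2
    rw [← pow_mul] at this
    rw [show 2 * n + 3 = (n + 1) * 2 + 1 by ring, pow_succ]
    linarith
  by_cases hterm : a ^ 2 * (Bohr Γ ρ1).card < 4
  · left
    have h1 : (1 / 2 : ℝ) ^ (2 * n + 2) * (Bohr Γ ρ1).card < 4 := by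
      refine lt_of_le_of_lt (mul_le_mul_of_nonneg_right ?_ hB1c.le) hterm
      rw [show 2 * n + 3 = (2 * n + 2) + 1 by ring, pow_succ] at ha2
      linarith
    have h2 : ((Bohr Γ ρ1).card : ℝ) < 2 ^ (2 * n + 4) := by
      rw [one_div, inv_pow, inv_mul_lt_iff₀ (by positivity)] at h1
      calc _ < (2 : ℝ) ^ (2 * n + 2) * 4 := h1
        _ = _ := by rw [show 2 * n + 4 = (2 * n + 2) + 2 by ring, pow_add _ (2 * n + 2) 2]; norm_num
    exact_mod_cast h2.le
  right
  push Not at hterm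
  have hΔ : (dil half Γ).card ≤ d := (dil_card half Γ).trans (by omega)
  obtain ⟨ρ3, l3, u3, R3⟩ := hex (dil half Γ) hΔ (ν * ρ2) (by positivity)
  have p3 : 0 < ρ3 := lt_of_lt_of_le (by positivity) l3
  obtain ⟨ρ4, l4, u4, R4⟩ := hex (dil half Γ) hΔ (ν * ρ3) (by positivity)
  have p4 : 0 < ρ4 := lt_of_lt_of_le (by positivity) l4
  obtain ⟨ρ5, l5, u5, R5⟩ := hex (dil half Γ) hΔ (ν * ρ4) (by positivity)
  have p5 : 0 < ρ5 := lt_of_lt_of_le (by positivity) l5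
  obtain ⟨ρ7, l7, u7, R7⟩ := hex (dil half Γ) hΔ (ν * ρ5) (by positivity)
  have p7 : 0 < ρ7 := lt_of_lt_of_le (by positivity) l7
  have m2 : ρ2 ≤ ρ1 := sc2 hρ2 hν1 hρ1.le
  have m3 : ρ3 ≤ ρ2 := sc2 u3 hν1 hρ20.le
  have m4 : ρ4 ≤ ρ3 := sc2 u4 hν1 p3.le
  have m5 : ρ5 ≤ ρ4 := sc2 u5 hν1 p4.le
  have m7 : ρ7 ≤ ρ5 := sc2 u7 hν1 p5.le
  have hCpos : (0 : ℝ) < C.card := lt_of_lt_of_le (mul_pos (by linarith) hB2c) d2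
  obtain ⟨A', hA', hA'c, hbad⟩ := step_sift A hA half hh Γ ρ1 (η * ρ1) ρ2 ρ3 ε a (by positivity) hε hε1
    R1 A1 hA1A hA1B ha' ha0 ha1 (by linarith) hterm C
    hCA hCB (4 * n) ⟨2 * n, by ring⟩ (by omega) (by
      refine le_trans ?_ d2
      rw [← mul_assoc]
      refine mul_le_mul_of_nonneg_right ?_ hB2c.le
      have e : ((1 : ℝ) / 2) ^ (4 * n) ≤ (1 / 2) ^ n * (1 / 2) ^ 2 := by
        rw [← pow_add]
        exact pow_le_pow_of_le_one (by norm_num) (by norm_num) (by omega)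
      linarith) (by rw [← card_pos]; exact_mod_cast hCpos)
    (sc hρ2 (by linarith) hρ1.le (by norm_num))
    (sc (m3.trans hρ2) h4 hρ1.le (by norm_num)) p3.le (by
      rw [card_dil half hh]
      exact R2.two (sc u3 (by linarith) hρ20.le (by norm_num)) hε1)
  have hσA : σ * (Bohr (dil half Γ) ρ3).card ≤ A'.card := by
    have h1 : 2 * (σ * (Bohr (dil half Γ) ρ3).card) ^ 2 ≤ 2 * (A'.card : ℝ) ^ 2 := by
      refine le_trans ?_ hA'c
      have h2 : 2 * σ ^ 2 ≤ (a ^ 2 / 2) ^ (20 * (4 * n)) := by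
        refine P.hσa.trans ?_
        rw [show 20 * (4 * n) = 80 * n by ring]
        gcongr
      calc _ = ((Bohr (dil half Γ) ρ3).card : ℝ) ^ 2 * (2 * σ ^ 2) := by ring
        _ ≤ _ := mul_le_mul_of_nonneg_left h2 (sq_nonneg _)
    exact le_of_sq_le_sq (by linarith) (Nat.cast_nonneg _)
  have hkc : (0 : ℝ) ≤ k := by positivity
  have hMc : (0 : ℝ) ≤ M0 := by positivity
  obtain ⟨Λ, hΛ, hfin⟩ := step_struct (dil half Γ) ρ3 ρ4 ρ5 ρ7 (η * ρ7) σ (a ^ 2 * (Bohr Γ ρ1).card) ε A1 A'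
    k m M0 P.hk P.hm (mul_nonneg (sq_nonneg a) hB1c.le) p3.le p4.le p5.le p7.le (by positivity) hσ P.hσ1 hA' hσA hbad
    (R3.two (sc1 u4 hνη p3.le) hε1) (R4.two (sc1 u5 hνη p4.le) hε1)
    (R3.two (by
      rw [show (k : ℝ) * (2 * ρ5) = 2 * k * ρ5 by ring]
      exact sc (m5.trans u4) P.h2k p3.le (by linarith)) hε1)
    (R5.two (by
      push_cast
      exact sc u7 P.h2M p5.le (by linarith)) hε1) R7 hε P.hεσ P.hmexp P.hkσ P.hM0
  have hcard : (dil half Γ ∪ Λ).card ≤ Γ.card + M0 :=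
    (card_union_le _ _).trans (by have := dil_card half Γ; omega)
  obtain ⟨ρ6, l6, u6, R6⟩ := hex (dil half Γ ∪ Λ) (hcard.trans hΓ) (ν * ρ7) (by positivity)
  have p6 : 0 < ρ6 := lt_of_lt_of_le (by positivity) l6
  obtain ⟨z, hz⟩ := hfin ρ6 p6.le (sc1 u6 hνη p7.le) (by
    calc ((M0 : ℝ) + 1) * ρ6 ≤ (M0 + 1) * (ν * 1) := by
          gcongr
          refine u6.trans ?_
          gcongr
          linarith
      _ ≤ _ := by rw [mul_one]; exact P.hMσ)
  refine ⟨dil half Γ ∪ Λ, ρ6, z, hcard, ?_, by have := sc2 u6 hν1 p7.le; linarith, R6, ?_⟩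
  · have hν2 : 0 < ν / 2 := by linarith
    calc (ν / 2) ^ 6 * ρ1 = ν / 2 * (ν / 2 * (ν / 2 * (ν / 2 * (ν / 2 * (ν / 2 * ρ1))))) := by ring
      _ ≤ ν / 2 * (ν / 2 * (ν / 2 * (ν / 2 * (ν / 2 * ρ2)))) := by gcongr
      _ ≤ ν / 2 * (ν / 2 * (ν / 2 * (ν / 2 * ρ3))) := by gcongr; linarith
      _ ≤ ν / 2 * (ν / 2 * (ν / 2 * ρ4)) := by gcongr; linarith
      _ ≤ ν / 2 * (ν / 2 * ρ5) := by gcongr; linarith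
      _ ≤ ν / 2 * ρ7 := by gcongr; linarith
      _ ≤ ρ6 := by linarith
  · set B6 := Bohr (dil half Γ ∪ Λ) ρ6
    have h1 : cnt A1 z B6 ≤ cnt A z B6 := by
      refine sum_le_sum fun b _ => ?_
      unfold ind
      by_cases h : z + b ∈ A1
      · rw [if_pos h, if_pos (hA1A h)]
      · rw [if_neg h]; split_ifs <;> norm_num
    rw [ha'] at hz
    have h2 : a * (Bohr Γ ρ1).card * (209 / 200 * a * B6.card) ≤ a * (Bohr Γ ρ1).card * cnt A1 z B6 := by
      linarith
    have h3 := le_of_mul_le_mul_left h2 (mul_pos ha0 hB1c)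
    refine le_trans (mul_le_mul_of_nonneg_right ?_ (Nat.cast_nonneg _)) (h3.trans h1)
    linarith

lemma full_step (n k m M0 d : ℕ) (η ν ε σ : ℝ) (P : Par n k m M0 η ν ε σ)
    (hex : ∀ Γ : Finset (AddChar G ℂ), Γ.card ≤ d → ∀ ρ0 : ℝ, 0 < ρ0 →
      ∃ ρ, ρ0 / 2 ≤ ρ ∧ ρ ≤ ρ0 ∧ Reg η ε Γ ρ)
    (A : Finset G) (hA : Free3 A) (half : G →+ G) (hh : ∀ x, half x + half x = x)
    (Γ : Finset (AddChar G ℂ)) (hΓ : Γ.card + M0 ≤ d) (ρ α : ℝ) (hρ : 0 < ρ) (hρ1 : ρ ≤ 1)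
    (R : Reg η ε Γ ρ) (hα : (1 / 2) ^ n ≤ α) (x0 : G) (hd : α * (Bohr Γ ρ).card ≤ cnt A x0 (Bohr Γ ρ)) :
    (∃ r, ν / 2 * ρ ≤ r ∧ (Bohr Γ r).card ≤ 2 ^ (2 * n + 4)) ∨
    ∃ (Γ' : Finset (AddChar G ℂ)) (ρ' : ℝ) (x' : G),
      Γ'.card ≤ Γ.card + M0 ∧ (ν / 2) ^ 7 * ρ ≤ ρ' ∧ ρ' ≤ 1 ∧ Reg η ε Γ' ρ' ∧
      101 / 100 * α * (Bohr Γ' ρ').card ≤ cnt A x' (Bohr Γ' ρ') := by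
  have hν := P.hν
  have hη := P.hη
  have hη1 := P.hη1
  have h4 := P.h4
  have hεn := P.hεn
  have hν1 : ν ≤ 1 := by linarith
  have hpn : (0 : ℝ) < (1 / 2) ^ n := by positivity
  obtain ⟨ρ1, l1, u1, R1⟩ := hex Γ (by omega) (ν * ρ) (by positivity)
  have p1 : 0 < ρ1 := lt_of_lt_of_le (by positivity) l1
  obtain ⟨ρ2, l2, u2, R2⟩ := hex Γ (by omega) (ν * ρ1) (by positivity)
  have p2 : 0 < ρ2 := lt_of_lt_of_le (by positivity) l2
  have m1 : ρ1 ≤ ρ := by nlinarith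
  have m2 : ρ2 ≤ ρ1 := by nlinarith
  have hb1 : (ν / 2) ^ 7 * ρ ≤ ρ1 := by
    have : (ν / 2) ^ 7 ≤ ν / 2 := pow_le_of_le_one (by linarith) (by linarith) (by norm_num)
    nlinarith
  have hb2 : (ν / 2) ^ 7 * ρ ≤ ρ2 := by
    have : (ν / 2) ^ 7 ≤ (ν / 2) ^ 2 := pow_le_pow_of_le_one (by linarith) (by linarith) (by norm_num)
    nlinarith
  obtain ⟨x, hx | hx | ⟨hx1, hx2⟩⟩ := step_zero A Γ ρ (η * ρ) ε α (by positivity) hρ.le R (Bohr Γ ρ1) (Bohr Γ ρ2)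
    (Bohr_mono (by nlinarith)) (Bohr_mono (by nlinarith)) ⟨0, zero_mem_Bohr p1.le⟩ ⟨0, zero_mem_Bohr p2.le⟩
    x0 hd (by linarith)
  · exact Or.inr ⟨Γ, ρ1, x, by omega, hb1, by linarith, R1, hx⟩
  · exact Or.inr ⟨Γ, ρ2, x, by omega, hb2, by linarith, R2, hx⟩
  · set Ax : Finset G := A.image (fun u => u - x) with hAx
    have hmem : ∀ u, u ∈ Ax ↔ x + u ∈ A := by
      intro u
      rw [hAx, mem_image]
      constructor
      · rintro ⟨v, hv, rfl⟩; simpa using hv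
      · intro h; exact ⟨x + u, h, by abel⟩
    have hcnt : ∀ z B, cnt Ax z B = cnt A (x + z) B := by
      intro z B
      unfold cnt ind
      refine sum_congr rfl fun b _ => ?_
      simp only [hmem, add_assoc]
    have hfree : Free3 Ax := by
      intro u hu v hv w hw e
      have := hA (x + u) ((hmem u).1 hu) (x + v) ((hmem v).1 hv) (x + w) ((hmem w).1 hw) (by
        calc x + u + (x + v) = x + x + (u + v) := by abel
          _ = x + w + (x + w) := by rw [e]; abel)
      simpa using this
    rcases step_main n k m M0 d η ν ε σ P hex Ax hfree half hh Γ hΓ ρ1 ρ2 α p1 (by linarith) u2 (by linarith)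
      R1 R2 hα (by rw [hcnt, add_zero]; exact hx1) (by rw [hcnt, add_zero]; exact hx2) with h | h
    · exact Or.inl ⟨ρ1, by linarith, h⟩
    · obtain ⟨Γ', ρ', x', g1, g2, g3, g4, g5⟩ := h
      refine Or.inr ⟨Γ', ρ', x + x', g1, ?_, g3, g4, by rw [← hcnt]; exact g5⟩
      refine le_trans ?_ g2
      calc (ν / 2) ^ 7 * ρ = (ν / 2) ^ 6 * (ν / 2 * ρ) := by ring
        _ ≤ _ := by gcongr; linarith

end FullStep
end Roth

namespace Roth
open Finset
set_option linter.unusedSectionVars false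

section Iterate
variable {G : Type*} [AddCommGroup G] [Fintype G] [DecidableEq G]

lemma iterate (n k m M0 J : ℕ) (η ν ε σ : ℝ) (P : Par n k m M0 η ν ε σ)
    (hex : ∀ Γ : Finset (AddChar G ℂ), Γ.card ≤ J * M0 → ∀ ρ0 : ℝ, 0 < ρ0 →
      ∃ ρ, ρ0 / 2 ≤ ρ ∧ ρ ≤ ρ0 ∧ Reg η ε Γ ρ)
    (A : Finset G) (hA : Free3 A) (half : G →+ G) (hh : ∀ x, half x + half x = x)
    (hd : (1 / 2 : ℝ) ^ n * Fintype.card G ≤ A.card) (j : ℕ) (hj : j ≤ J) :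
    (∃ (Γ : Finset (AddChar G ℂ)) (r : ℝ), Γ.card ≤ J * M0 ∧ (ν / 2) ^ (7 * J + 1) ≤ r ∧
      (Bohr Γ r).card ≤ 2 ^ (2 * n + 4)) ∨
    ∃ (Γ : Finset (AddChar G ℂ)) (ρ : ℝ) (x : G), Γ.card ≤ j * M0 ∧ (ν / 2) ^ (7 * j) ≤ ρ ∧ ρ ≤ 1 ∧
      Reg η ε Γ ρ ∧ (101 / 100) ^ j * (1 / 2) ^ n * (Bohr Γ ρ).card ≤ cnt A x (Bohr Γ ρ) := by
  have hν := P.hν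
  have hν1 : ν / 2 ≤ 1 := by linarith [P.h4, P.hη1]
  induction j with
  | zero =>
    right
    have hB : ∀ r : ℝ, Bohr (∅ : Finset (AddChar G ℂ)) r = univ := by
      intro r; ext x; simp [mem_Bohr]
    refine ⟨∅, 1, 0, by simp, by simp, le_rfl, ?_, ?_⟩
    · unfold Reg
      rw [hB, hB]
      have := P.hε
      have h2 : (0 : ℝ) ≤ (univ : Finset G).card := Nat.cast_nonneg _
      nlinarith
    · rw [hB]
      unfold cnt
      rw [sum_ind_card]
      simpa using hd
  | succ j ih =>
    rcases ih (by omega) with h | ⟨Γ, ρ, x, h1, h2, h3, h4, h5⟩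
    · exact Or.inl h
    have hjJ : j * M0 + M0 ≤ J * M0 := by
      calc j * M0 + M0 = (j + 1) * M0 := by ring
        _ ≤ _ := Nat.mul_le_mul_right _ hj
    have hρ : 0 < ρ := lt_of_lt_of_le (by positivity) h2
    rcases full_step n k m M0 (J * M0) η ν ε σ P hex A hA half hh Γ (by omega) ρ
      ((101 / 100) ^ j * (1 / 2) ^ n) hρ h3 h4
      (le_mul_of_one_le_left (by positivity) (one_le_pow₀ (by norm_num))) x h5 with h | h
    · obtain ⟨r, hr, hc⟩ := h
      refine Or.inl ⟨Γ, r, by omega, le_trans ?_ hr, hc⟩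
      calc (ν / 2) ^ (7 * J + 1) ≤ (ν / 2) ^ (7 * j + 1) :=
            pow_le_pow_of_le_one (by linarith) hν1 (by omega)
        _ = ν / 2 * (ν / 2) ^ (7 * j) := by ring
        _ ≤ _ := by gcongr
    · obtain ⟨Γ', ρ', x', g1, g2, g3, g4, g5⟩ := h
      refine Or.inr ⟨Γ', ρ', x', ?_, ?_, g3, g4, ?_⟩
      · calc Γ'.card ≤ j * M0 + M0 := by omega
          _ = _ := by ring
      · refine le_trans ?_ g2
        calc (ν / 2) ^ (7 * (j + 1)) = (ν / 2) ^ 7 * (ν / 2) ^ (7 * j) := by ring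
          _ ≤ _ := by gcongr
      · refine le_trans (le_of_eq ?_) g5
        rw [pow_succ]; ring

lemma terminate (n k m M0 : ℕ) (η ν ε σ : ℝ) (P : Par n k m M0 η ν ε σ)
    (hex : ∀ Γ : Finset (AddChar G ℂ), Γ.card ≤ 100 * n * M0 → ∀ ρ0 : ℝ, 0 < ρ0 →
      ∃ ρ, ρ0 / 2 ≤ ρ ∧ ρ ≤ ρ0 ∧ Reg η ε Γ ρ)
    (A : Finset G) (hA : Free3 A) (half : G →+ G) (hh : ∀ x, half x + half x = x)
    (hd : (1 / 2 : ℝ) ^ n * Fintype.card G ≤ A.card) (i : ℕ)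
    (hi : (1 / 2 : ℝ) ^ i ≤ (ν / 2) ^ (7 * (100 * n) + 1)) :
    Fintype.card G ≤ 128 ^ (100 * n * M0 * (i + 1)) * 2 ^ (2 * n + 4) := by
  rcases iterate n k m M0 (100 * n) η ν ε σ P hex A hA half hh hd (100 * n) le_rfl with h | h
  · obtain ⟨Γ, r, h1, h2, h3⟩ := h
    calc Fintype.card G ≤ 128 ^ (Γ.card * (i + 1)) * (Bohr Γ ((1 / 2 : ℝ) ^ i)).card := Bohr_lower Γ i
      _ ≤ 128 ^ (100 * n * M0 * (i + 1)) * 2 ^ (2 * n + 4) := by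
        refine Nat.mul_le_mul ?_ ((card_le_card (Bohr_mono (hi.trans h2))).trans h3)
        exact Nat.pow_le_pow_right (by norm_num) (Nat.mul_le_mul_right _ h1)
  · exfalso
    obtain ⟨Γ, ρ, x, h1, h2, h3, h4, h5⟩ := h
    have hν := P.hν
    have hn := P.hn
    have hρ : 0 < ρ := lt_of_lt_of_le (by positivity) h2
    have hB : (0 : ℝ) < (Bohr Γ ρ).card := by exact_mod_cast Bohr_pos hρ.le
    have h6 := h5.trans (cnt_le A x _)
    have h7 : (1 : ℝ) < (101 / 100) ^ (100 * n) * (1 / 2) ^ n := by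
      rw [pow_mul, ← mul_pow]
      exact one_lt_pow₀ (by norm_num) (by omega)
    nlinarith

end Iterate

lemma two_pow_le_exp (j : ℕ) : (2 : ℝ) ^ j ≤ Real.exp j := by
  have h : (2 : ℝ) ≤ Real.exp 1 := by have := Real.add_one_le_exp 1; linarith
  calc (2 : ℝ) ^ j ≤ Real.exp 1 ^ j := by gcongr
    _ = _ := by rw [← Real.exp_nat_mul, mul_one]

lemma half_pow (j : ℕ) : ((1 : ℝ) / 2) ^ j = ((2 : ℝ) ^ j)⁻¹ := by rw [one_div, inv_pow]

lemma two_pow_const {a : ℕ} {c : ℝ} (b : ℕ) (hb : c ≤ 2 ^ b) (hab : b ≤ a) : c ≤ (2 : ℝ) ^ a :=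
  hb.trans (pow_le_pow_right₀ (by norm_num) hab)

lemma params (n : ℕ) (hn : 2 ≤ n) (k m M0 K : ℕ) (d : ℝ) (η ν : ℝ) (hd : 0 ≤ d)
    (hk : k = 200 * n ^ 2) (hm : m = 600 * (400 * k) ^ 2 * n ^ 2)
    (hM0 : M0 = 8 * (200 * n ^ 2 + 10) * m) (hK : K = 2 ^ (300 * n ^ 2))
    (hη : η = 1 / (14 * (d + 1) * K)) (hν : ν = η / (4 * k * (M0 + 1))) :
    Par n k m M0 η ν (1 / (K : ℝ)) ((1 / 2) ^ (200 * n ^ 2)) := by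
  have hn2 : 2 * n ≤ n ^ 2 := by nlinarith
  have ht : 4 ≤ n ^ 2 := by nlinarith
  have hk1 : 1 ≤ k := by omega
  have hm1 : 1 ≤ m := by
    rw [hm]; exact Nat.one_le_iff_ne_zero.2 (by positivity)
  have hkR : (1 : ℝ) ≤ k := by exact_mod_cast hk1
  have hMR : (0 : ℝ) ≤ M0 := by positivity
  have hKR : (K : ℝ) = 2 ^ (300 * n ^ 2) := by rw [hK]; push_cast; ring
  have hK1 : (1 : ℝ) ≤ K := by rw [hKR]; exact one_le_pow₀ (by norm_num)
  have hηpos : 0 < η := by rw [hη]; positivity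
  have hηK : η ≤ 1 / K := by
    rw [hη]
    gcongr
    nlinarith
  have hη1 : η ≤ 1 := hηK.trans (by rw [div_le_one (by linarith)]; exact hK1)
  have hνpos : 0 < ν := by rw [hν]; positivity
  have hνe : ν * (4 * k * (M0 + 1)) = η := by rw [hν]; field_simp
  have hKσ : ∀ c : ℝ, 0 < c → c ≤ 2 ^ 20 → 1 / (K : ℝ) ≤ (1 / 2) ^ (200 * n ^ 2) / c := by
    intro c hc hcc
    rw [hKR, half_pow, inv_eq_one_div, div_div, div_le_div_iff_of_pos_left (by norm_num) (by positivity)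
      (by positivity)]
    calc (2 : ℝ) ^ (200 * n ^ 2) * c ≤ 2 ^ (200 * n ^ 2) * 2 ^ (100 * n ^ 2) := by
          gcongr; exact two_pow_const 20 hcc (by omega)
      _ = 2 ^ (300 * n ^ 2) := by rw [← pow_add]; congr 1; ring
  refine ⟨hn, hk1, hm1, hηpos, hη1, hνpos, ?_, ?_, ?_, ?_, by positivity, ?_, ?_, by positivity,
    pow_le_one₀ (by norm_num) (by norm_num), ?_, ?_, ?_, ?_⟩
  · rw [← hνe]
    have : (1 : ℝ) ≤ k * (M0 + 1) := by nlinarith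
    nlinarith
  · rw [← hνe]
    have : 0 ≤ ν * k * M0 := by positivity
    nlinarith
  · rw [← hνe]
    have h1 : 0 ≤ ν * (M0 + 1) := by positivity
    nlinarith
  · have h1 : (M0 + 1) * ν ≤ η := by
      rw [← hνe]
      have h1 : 0 ≤ ν * (M0 + 1) := by positivity
      nlinarith
    exact (h1.trans hηK).trans (hKσ 400 (by norm_num) (by norm_num))
  · have := hKσ 1600 (by norm_num) (by norm_num)
    linarith
  · rw [hKR, half_pow, inv_eq_one_div, div_div, div_le_div_iff_of_pos_left (by norm_num) (by positivity)
      (by positivity)]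
    calc (2 : ℝ) ^ n * 1000 ≤ 2 ^ n * 2 ^ (299 * n ^ 2) := by
          gcongr; exact two_pow_const 10 (by norm_num) (by omega)
      _ = 2 ^ (n + 299 * n ^ 2) := by rw [← pow_add]
      _ ≤ _ := pow_le_pow_right₀ (by norm_num) (by omega)
  · rw [← pow_mul, ← pow_mul]
    have e : 200 * n ^ 2 * 2 = (200 * n ^ 2 * 2 - 1) + 1 := by omega
    rw [e, pow_succ]
    have h1 : ((1 : ℝ) / 2) ^ (200 * n ^ 2 * 2 - 1) ≤ (1 / 2) ^ ((2 * n + 3) * (80 * n)) := by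
      refine pow_le_pow_of_le_one (by norm_num) (by norm_num) ?_
      have : (2 * n + 3) * (80 * n) = 160 * n ^ 2 + 240 * n := by ring
      omega
    linarith
  · have e : (m : ℝ) * (1 / (400 * k : ℝ)) ^ 2 / 2 = ((300 * n ^ 2 : ℕ) : ℝ) := by
      rw [hm]; push_cast; field_simp; norm_num
    rw [e, Real.exp_neg]
    have h1 := two_pow_le_exp (300 * n ^ 2)
    have h2 : (Real.exp ((300 * n ^ 2 : ℕ) : ℝ))⁻¹ ≤ ((2 : ℝ) ^ (300 * n ^ 2))⁻¹ :=
      inv_anti₀ (by positivity) h1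
    rw [half_pow, le_div_iff₀ (by positivity)]
    have h3 : 4 * (400 * (k : ℝ)) ≤ 2 ^ (100 * n ^ 2) := by
      have h4 : ((n ^ 2 : ℕ) : ℝ) ≤ 2 ^ (n ^ 2) := by exact_mod_cast (Nat.lt_two_pow_self).le
      rw [hk]
      push_cast at h4 ⊢
      calc 4 * (400 * (200 * (n : ℝ) ^ 2)) = 320000 * (n : ℝ) ^ 2 := by ring
        _ ≤ 2 ^ 19 * 2 ^ (n ^ 2) := mul_le_mul (by norm_num) h4 (by positivity) (by positivity)
        _ = 2 ^ (19 + n ^ 2) := by rw [← pow_add]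
        _ ≤ _ := pow_le_pow_right₀ (by norm_num) (by omega)
    calc 4 * (Real.exp ((300 * n ^ 2 : ℕ) : ℝ))⁻¹ * (400 * k) =
          (4 * (400 * k)) * (Real.exp ((300 * n ^ 2 : ℕ) : ℝ))⁻¹ := by ring
      _ ≤ 2 ^ (100 * n ^ 2) * ((2 : ℝ) ^ (300 * n ^ 2))⁻¹ := by gcongr
      _ = _ := by
        rw [show 300 * n ^ 2 = 100 * n ^ 2 + 200 * n ^ 2 by ring, pow_add, mul_inv]
        field_simp
  · rw [show ((1 : ℝ) / 4) = (1 / 2) ^ 2 by norm_num, ← pow_mul, hk,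
      show 2 * (200 * n ^ 2) = 200 * n ^ 2 + 200 * n ^ 2 by ring, pow_add]
    have h1 : ((1 : ℝ) / 2) ^ (200 * n ^ 2) ≤ (1 / 2) ^ 10 :=
      pow_le_pow_of_le_one (by norm_num) (by norm_num) (by omega)
    have h2 : (0 : ℝ) < (1 / 2) ^ (200 * n ^ 2) := by positivity
    have h3 : ((1 : ℝ) / 2) ^ 10 ≤ 1 / 400 := by norm_num
    have h4 := mul_le_mul_of_nonneg_left (h1.trans h3) h2.le
    linarith
  · have h1 : Real.exp (((200 * n ^ 2 + 10) * m : ℕ) : ℝ) ≤ Real.exp (((M0 + 1 : ℕ) : ℝ) / 8) := by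
      rw [Real.exp_le_exp, hM0]
      push_cast
      linarith
    have h2 := (two_pow_le_exp ((200 * n ^ 2 + 10) * m)).trans h1
    have h3 : ((1 / 2 : ℝ) ^ (200 * n ^ 2) / 8) ^ m * 2 ^ ((200 * n ^ 2 + 10) * m) = 128 ^ m := by
      rw [pow_mul _ (200 * n ^ 2 + 10) m, ← mul_pow]
      congr 1
      rw [half_pow, pow_add]
      field_simp
      norm_num
    have h4 : (128 : ℝ) ≤ 128 ^ m := le_self_pow₀ (by norm_num) (by omega)
    calc (4 : ℝ) < 1 / 2 * 128 ^ m := by linarith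
      _ = 1 / 2 * ((1 / 2 : ℝ) ^ (200 * n ^ 2) / 8) ^ m * 2 ^ ((200 * n ^ 2 + 10) * m) := by
        rw [← h3]; ring
      _ ≤ _ := by gcongr

end Roth

namespace Roth
open Finset

lemma group_bound (n : ℕ) (hn : 2 ≤ n) (k m M0 i : ℕ) (hk : k = 200 * n ^ 2)
    (hm : m = 600 * (400 * k) ^ 2 * n ^ 2) (hM0 : M0 = 8 * (200 * n ^ 2 + 10) * m)
    (hi : i = (8 + (100 * n * M0 + 1) + k + (M0 + 1) + 300 * n ^ 2) * (7 * (100 * n) + 1))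
    {G : Type} [AddCommGroup G] [Fintype G] [DecidableEq G]
    (A : Finset G) (hA : Free3 A) (half : G →+ G) (hh : ∀ x, half x + half x = x)
    (hd : (1 / 2 : ℝ) ^ n * Fintype.card G ≤ A.card) :
    Fintype.card G ≤ 2 ^ (7 * (100 * n * M0 * (i + 1)) + (2 * n + 4)) := by
  have hd0 : (0 : ℝ) ≤ ((100 * n * M0 : ℕ) : ℝ) := Nat.cast_nonneg _
  have P := params n hn k m M0 (2 ^ (300 * n ^ 2)) ((100 * n * M0 : ℕ) : ℝ) _ _ hd0 hk hm hM0 rfl rfl rfl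
  have key := terminate n k m M0 _ _ _ _ P (fun Γ hΓ ρ0 hρ0 =>
    Reg_exists (100 * n * M0) (2 ^ (300 * n ^ 2)) Nat.one_le_two_pow Γ hΓ ρ0 hρ0) A hA half hh hd i (by
      rw [hi, pow_mul]
      refine pow_le_pow_left₀ (by positivity) ?_ _
      generalize 100 * n * M0 = D
      have hk0 : (0 : ℝ) < k := by exact_mod_cast P.hk
      have e : 1 / (14 * ((D : ℝ) + 1) * ((2 ^ (300 * n ^ 2) : ℕ) : ℝ)) / (4 * k * (M0 + 1)) / 2 =
          (112 * ((D : ℝ) + 1) * k * (M0 + 1) * 2 ^ (300 * n ^ 2))⁻¹ := by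
        push_cast
        field_simp
        norm_num
      rw [e, half_pow]
      refine inv_anti₀ (by positivity) ?_
      have two : ∀ j : ℕ, (j : ℝ) ≤ 2 ^ j := fun j => by exact_mod_cast (Nat.lt_two_pow_self).le
      have t1 := two (D + 1)
      have t2 := two k
      have t3 := two (M0 + 1)
      push_cast at t1 t3
      rw [pow_add 2 _ (300 * n ^ 2), pow_add 2 _ (M0 + 1), pow_add 2 _ k, pow_add 2 8 (D + 1)]
      gcongr
      norm_num)
  refine key.trans (le_of_eq ?_)
  rw [pow_add _ (7 * (100 * n * M0 * (i + 1))) (2 * n + 4), pow_mul 2 7]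
  norm_num

lemma poly_bound : ∃ C : ℕ, ∀ n k m M0 i : ℕ, 2 ≤ n → k = 200 * n ^ 2 →
    m = 600 * (400 * k) ^ 2 * n ^ 2 → M0 = 8 * (200 * n ^ 2 + 10) * m →
    i = (8 + (100 * n * M0 + 1) + k + (M0 + 1) + 300 * n ^ 2) * (7 * (100 * n) + 1) →
    7 * (100 * n * M0 * (i + 1)) + (2 * n + 4) ≤ C * n ^ 19 := by
  obtain ⟨c, hc⟩ : ∃ c : ℕ, c = 8 * 210 * (600 * 80000 ^ 2) := ⟨_, rfl⟩
  refine ⟨700 * c * ((510 + 101 * c) * 701 + 1) + 6, ?_⟩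
  intro n k m M0 i hn hk hm hM0 hi
  have pw : ∀ a b : ℕ, a ≤ b → n ^ a ≤ n ^ b := fun a b h => Nat.pow_le_pow_right (by omega) h
  have one : ∀ b : ℕ, 1 ≤ n ^ b := fun b => Nat.one_le_pow _ _ (by omega)
  have h1 : M0 ≤ c * n ^ 8 := by
    have := one 2
    calc M0 ≤ 8 * (200 * n ^ 2 + 10 * n ^ 2) * m := by rw [hM0]; gcongr; omega
      _ = c * n ^ 8 := by rw [hm, hk, hc]; ring
  have h2 : 100 * n * M0 ≤ 100 * c * n ^ 9 :=
    calc 100 * n * M0 ≤ 100 * n * (c * n ^ 8) := by gcongr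
      _ = _ := by ring
  have h3 : i + 1 ≤ ((510 + 101 * c) * 701 + 1) * n ^ 10 := by
    have a1 := one 9
    have a2 := pw 2 9 (by norm_num)
    have a3 := pw 8 9 (by norm_num)
    have a4 : c * n ^ 8 ≤ c * n ^ 9 := Nat.mul_le_mul_left _ a3
    have a5 : 8 + (100 * n * M0 + 1) + k + (M0 + 1) + 300 * n ^ 2 ≤ (510 + 101 * c) * n ^ 9 := by
      rw [hk]
      nlinarith
    have a6 : 7 * (100 * n) + 1 ≤ 701 * n := by omega
    have a7 := one 10
    have a8 := Nat.mul_le_mul a5 a6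
    rw [← hi] at a8
    calc i + 1 ≤ (510 + 101 * c) * n ^ 9 * (701 * n) + 1 * n ^ 10 := by omega
      _ = _ := by ring
  have h4 : 2 * n + 4 ≤ 6 * n ^ 19 := by
    have a1 := one 19
    have a2 := pw 1 19 (by norm_num)
    rw [pow_one] at a2
    omega
  calc 7 * (100 * n * M0 * (i + 1)) + (2 * n + 4) ≤
        7 * (100 * c * n ^ 9 * (((510 + 101 * c) * 701 + 1) * n ^ 10)) + 6 * n ^ 19 := by gcongr
    _ = _ := by ring

lemma zmod_bound (n : ℕ) (hn : 2 ≤ n) (C : ℕ)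
    (hC : ∀ n k m M0 i : ℕ, 2 ≤ n → k = 200 * n ^ 2 →
    m = 600 * (400 * k) ^ 2 * n ^ 2 → M0 = 8 * (200 * n ^ 2 + 10) * m →
    i = (8 + (100 * n * M0 + 1) + k + (M0 + 1) + 300 * n ^ 2) * (7 * (100 * n) + 1) →
    7 * (100 * n * M0 * (i + 1)) + (2 * n + 4) ≤ C * n ^ 19) (N : ℕ) (hN : 2 ≤ N) (A : Finset ℕ)
    (hA : ∀ a ∈ A, 1 ≤ a ∧ a ≤ N) (hfree : ∀ x ∈ A, ∀ y ∈ A, ∀ z ∈ A, x + y = 2 * z → x = y)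
    (hd : (1 / 2 : ℝ) ^ n * (2 * N + 1 : ℕ) ≤ A.card) : Real.log N ≤ C * n ^ 19 := by
  have : NeZero (2 * N + 1) := ⟨by omega⟩
  set A' : Finset (ZMod (2 * N + 1)) := A.image (fun a : ℕ => (a : ZMod (2 * N + 1))) with hA'
  have inj : ∀ u v : ℕ, u ≤ 2 * N → v ≤ 2 * N → ((u : ZMod (2 * N + 1)) = v) → u = v := by
    intro u v hu hv h
    rw [ZMod.natCast_eq_natCast_iff'] at h
    rwa [Nat.mod_eq_of_lt (by omega), Nat.mod_eq_of_lt (by omega)] at h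
  have hcard : A'.card = A.card := by
    refine card_image_of_injOn ?_
    intro u hu v hv h
    exact inj u v (by have := hA u hu; omega) (by have := hA v hv; omega) h
  have hF : Free3 A' := by
    intro x hx y hy z hz h
    obtain ⟨u, hu, rfl⟩ := mem_image.1 hx
    obtain ⟨v, hv, rfl⟩ := mem_image.1 hy
    obtain ⟨w, hw, rfl⟩ := mem_image.1 hz
    have h' := inj (u + v) (w + w) (by have := hA u hu; have := hA v hv; omega)
      (by have := hA w hw; omega) (by push_cast; exact h)
    rw [hfree u hu v hv w hw (by omega)]
  have hh : ∀ x : ZMod (2 * N + 1), AddMonoidHom.mulLeft ((N + 1 : ℕ) : ZMod (2 * N + 1)) x +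
      AddMonoidHom.mulLeft ((N + 1 : ℕ) : ZMod (2 * N + 1)) x = x := by
    intro x
    simp only [AddMonoidHom.coe_mulLeft]
    have e : ((2 * N + 1 : ℕ) : ZMod (2 * N + 1)) = 0 := ZMod.natCast_self _
    push_cast at e ⊢
    linear_combination x * e
  have hb := group_bound n hn _ _ _ _ rfl rfl rfl rfl A' hF _ hh (by
    rw [ZMod.card, hcard]; exact hd)
  rw [ZMod.card] at hb
  have hq := hC n _ _ _ _ hn rfl rfl rfl rfl
  have h1 : N ≤ 2 ^ (C * n ^ 19) := by
    have := hb.trans (Nat.pow_le_pow_right (by norm_num) hq)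
    omega
  have h2 : (N : ℝ) ≤ 2 ^ (C * n ^ 19) := by exact_mod_cast h1
  have h3 : Real.log N ≤ Real.log ((2 : ℝ) ^ (C * n ^ 19)) := Real.log_le_log (by positivity) h2
  rw [Real.log_pow] at h3
  have h4 : Real.log 2 ≤ 1 := by have := Real.log_two_lt_d9; linarith
  push_cast at h3
  have h5 : (0 : ℝ) ≤ C * n ^ 19 := by positivity
  nlinarith

end Roth

/-- **Roth's theorem with a power saving** (Bloom–Sisask, Theorem 1.1).
If `A ⊆ {1, …, N}` contains no non-trivial three-term arithmetic progression
(no `x, y, z ∈ A` with `x + y = 2z` and `x ≠ y`), then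
`|A| ≤ C · N / (log N)^(1 + c)` for absolute constants `c, C > 0`. -/
theorem roth_power_saving :
    ∃ c C : ℝ, 0 < c ∧ 0 < C ∧
      ∀ N : ℕ, 2 ≤ N → ∀ A : Finset ℕ,
        (∀ a ∈ A, 1 ≤ a ∧ a ≤ N) →
        (∀ x ∈ A, ∀ y ∈ A, ∀ z ∈ A, x + y = 2 * z → x = y) →
        (A.card : ℝ) ≤ C * N / Real.log N ^ ((1 : ℝ) + c) := by
  obtain ⟨C, hC⟩ := Roth.poly_bound
  set F : ℝ := (Nat.factorial 38 : ℝ) / Real.log 2 ^ 38 with hF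
  have hl2 : 0 < Real.log 2 := Real.log_pos (by norm_num)
  have hF0 : 0 < F := by
    rw [hF]; exact div_pos (by exact_mod_cast Nat.factorial_pos 38) (by positivity)
  refine ⟨1, 12 * (C ^ 2 * F + 1), one_pos, by positivity, ?_⟩
  intro N hN A hA hfree
  have hlog : 0 < Real.log N := Real.log_pos (by exact_mod_cast hN)
  have hNR : (2 : ℝ) ≤ N := by exact_mod_cast hN
  rw [show (1 : ℝ) + 1 = ((2 : ℕ) : ℝ) by norm_num, Real.rpow_natCast]
  rcases A.eq_empty_or_nonempty with h0 | hne
  · rw [h0, Finset.card_empty, Nat.cast_zero]; positivity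
  have hAc : (1 : ℝ) ≤ A.card := by exact_mod_cast hne.card_pos
  have hAN : (A.card : ℝ) ≤ N := by
    have : A ⊆ Finset.Icc 1 N := fun a ha => Finset.mem_Icc.2 (hA a ha)
    have := Finset.card_le_card this
    rw [Nat.card_Icc] at this
    exact_mod_cast (by omega : A.card ≤ N)
  have hex : ∃ n : ℕ, (1 / 2 : ℝ) ^ (n + 2) * (2 * N + 1 : ℕ) ≤ A.card := by
    obtain ⟨n, hn⟩ := exists_pow_lt_of_lt_one (show (0 : ℝ) < 1 / (2 * N + 1 : ℕ) by positivity)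
      (show (1 / 2 : ℝ) < 1 by norm_num)
    refine ⟨n, ?_⟩
    rw [lt_div_iff₀ (by positivity)] at hn
    have : (1 / 2 : ℝ) ^ (n + 2) ≤ (1 / 2) ^ n :=
      pow_le_pow_of_le_one (by norm_num) (by norm_num) (by omega)
    have h3 : (1 / 2 : ℝ) ^ (n + 2) * (2 * N + 1 : ℕ) ≤ (1 / 2 : ℝ) ^ n * (2 * N + 1 : ℕ) := by gcongr
    linarith
  obtain ⟨n, hn, hup⟩ : ∃ n : ℕ, (1 / 2 : ℝ) ^ (n + 2) * (2 * N + 1 : ℕ) ≤ A.card ∧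
      (A.card : ℝ) ≤ 4 * (1 / 2 : ℝ) ^ (n + 2) * (2 * N + 1 : ℕ) := by
    classical
    refine ⟨Nat.find hex, Nat.find_spec hex, ?_⟩
    rcases Nat.eq_zero_or_pos (Nat.find hex) with h | h
    · rw [h]; push_cast; norm_num; linarith
    · have h1 := Nat.find_min hex (m := Nat.find hex - 1) (by omega)
      rw [show Nat.find hex - 1 + 2 = Nat.find hex + 1 by omega] at h1
      push Not at h1
      have e : (4 : ℝ) * (1 / 2) ^ (Nat.find hex + 2) = 2 * (1 / 2) ^ (Nat.find hex + 1) := by ring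
      rw [e]
      have : (0 : ℝ) ≤ (1 / 2 : ℝ) ^ (Nat.find hex + 1) * (2 * N + 1 : ℕ) := by positivity
      linarith
  have hb := Roth.zmod_bound (n + 2) (by omega) C hC N hN A hA hfree hn
  have hexp : ((n + 2 : ℕ) : ℝ) ^ 38 ≤ F * 2 ^ (n + 2) := by
    have h1 := Real.pow_div_factorial_le_exp (x := ((n + 2 : ℕ) : ℝ) * Real.log 2) (by positivity) 38
    rw [Real.exp_nat_mul, Real.exp_log (by norm_num), mul_pow, div_le_iff₀ (by positivity)] at h1
    rw [hF, div_mul_eq_mul_div, le_div_iff₀ (by positivity)]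
    linarith
  have hsq : Real.log N ^ 2 ≤ C ^ 2 * F * 2 ^ (n + 2) := by
    calc Real.log N ^ 2 ≤ (C * ((n + 2 : ℕ) : ℝ) ^ 19) ^ 2 := by gcongr
      _ = C ^ 2 * ((n + 2 : ℕ) : ℝ) ^ 38 := by ring
      _ ≤ C ^ 2 * (F * 2 ^ (n + 2)) := by gcongr
      _ = _ := by ring
  rw [le_div_iff₀ (by positivity)]
  have hp : (1 / 2 : ℝ) ^ (n + 2) * 2 ^ (n + 2) = 1 := by rw [← mul_pow]; norm_num
  calc (A.card : ℝ) * Real.log N ^ 2 ≤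
        (4 * (1 / 2 : ℝ) ^ (n + 2) * (2 * N + 1 : ℕ)) * (C ^ 2 * F * 2 ^ (n + 2)) := by gcongr
    _ = 4 * (2 * N + 1 : ℕ) * (C ^ 2 * F) * ((1 / 2 : ℝ) ^ (n + 2) * 2 ^ (n + 2)) := by ring
    _ = 4 * (2 * N + 1) * (C ^ 2 * F) := by rw [hp]; push_cast; ring
    _ ≤ 4 * (3 * N) * (C ^ 2 * F + 1) := by gcongr <;> linarith
    _ = _ := by ring
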